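/- arXiv:2106.07295 — 5 statements merged into one kernel-verified Lean document; each statement's English description precedes it below -/
import Mathlib

section
/- Let D₁ and D₂ be bounded domains in ℂ and let f : D₁ → D₂ be a proper holomorphic map. Let K̃₁ and K̃₂ be the reduced Bergman kernels of D₁ and D₂ respectively. Then for every z ∈ D₁ and every w ∈ D₂ which is not a critical value of f (so that the fiber f⁻¹(w) is a finite set on which f′ does not vanish), one has f′(z)·K̃₂(f(z), w) = ∑_{η ∈ f⁻¹(w)} K̃₁(z, η) / conj(f′(η)). -/
/-!
The proof is a Hilbert space duality argument. Let `V` be the set of critical values of `f` and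
`R = D₂ \ V`. Two operators relate the reduced Bergman spaces of `D₁` and `D₂`: the pullback
`k ↦ f' * (k ∘ f)` and the trace `v ↦ (y ↦ ∑ v η / f' η)`, the sum running over the fiber of `y`.

* A nonconstant holomorphic function has isolated zeros, so by properness `V` is countable and its
  points are isolated in `D₂`. Over `R` the map is evenly covered (`ProperHol.exists_sheets`), and
  all fibers over `R` have the same cardinality (`ProperHol.exists_degree`).
* Since `‖f'‖ ^ 2` is the real Jacobian determinant, cutting `R` into evenly covered pieces
  gives `∫ y in D₂, ∑ h η = ∫ x in D₁, ‖f' x‖ ^ 2 * h x` (`ProperHol.lintegral_Tr`,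
  `ProperHol.integral_Tr`). This makes both operators bounded in `L²`, and adjoint to each other
  (`ProperHol.integral_pullback`).
* Both operators preserve the existence of primitives: if `g' = k` then `(g ∘ f)' = f' * (k ∘ f)`,
  and if `g' = v` then the trace `∑ g η` is locally bounded near `V`, hence extends holomorphically
  to `D₂`, and is a primitive of `∑ v η / f' η` (`ProperHol.exists_Tr_extension`).

Consequently, for `v` in the reduced Bergman space of `D₁`, both sides of the formula, as functions
of `z`, have the same inner product `∑ v η / f' η` (sum over the fiber of `w`) with `v`: the left
side by adjointness and the reproducing property of `K₂`, the right side by that of `K₁`. So the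
difference of the two sides is orthogonal to itself.
-/


open MeasureTheory Complex Metric

noncomputable section

/-- `u` has a holomorphic primitive on `D`. -/
def HasPrimitiveOn (u : ℂ → ℂ) (D : Set ℂ) : Prop :=
  ∃ g : ℂ → ℂ, DifferentiableOn ℂ g D ∧ ∀ z ∈ D, HasDerivAt g (u z) z

/-- `u` belongs to the reduced Bergman space of `D`: holomorphic, has a primitive,
and square-integrable with respect to area measure. -/
def MemReducedBergman (D : Set ℂ) (u : ℂ → ℂ) : Prop :=
  DifferentiableOn ℂ u D ∧ HasPrimitiveOn u D ∧
    IntegrableOn (fun z => ‖u z‖ ^ 2) D volume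

/-- `K` is the reduced Bergman kernel of `D`: `K (·, ζ)` belongs to the reduced Bergman
space and reproduces every element of the reduced Bergman space. -/
def IsReducedBergmanKernel (D : Set ℂ) (K : ℂ → ℂ → ℂ) : Prop :=
  ∀ ζ ∈ D, MemReducedBergman D (fun z => K z ζ) ∧
    ∀ u : ℂ → ℂ, MemReducedBergman D u →
      u ζ = ∫ z in D, u z * (starRingEnd ℂ) (K z ζ)

/-! ### Proper holomorphic maps, critical values and fibers -/

open Set Filter Topology

/-- The standing assumptions: `f` is a proper holomorphic map between the domains `D₁` and `D₂`,
where `D₁` is bounded. -/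
structure ProperHol (D₁ D₂ : Set ℂ) (f : ℂ → ℂ) : Prop where
  o1 : IsOpen D₁
  c1 : IsConnected D₁
  b1 : Bornology.IsBounded D₁
  o2 : IsOpen D₂
  c2 : IsConnected D₂
  diff : DifferentiableOn ℂ f D₁
  maps : Set.MapsTo f D₁ D₂
  proper : ∀ K : Set ℂ, K ⊆ D₂ → IsCompact K → IsCompact (D₁ ∩ f ⁻¹' K)

/-- The set of critical values of `f` on `D₁`. -/
def critVal (D₁ : Set ℂ) (f : ℂ → ℂ) : Set ℂ := f '' (D₁ ∩ {x | deriv f x = 0})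

/-- The set of regular (that is, noncritical) values in `D₂`. -/
def regVal (D₁ D₂ : Set ℂ) (f : ℂ → ℂ) : Set ℂ := D₂ \ critVal D₁ f

/-- The fiber of `f : D₁ → ℂ` over `y`. -/
def fib (D₁ : Set ℂ) (f : ℂ → ℂ) (y : ℂ) : Set ℂ := D₁ ∩ f ⁻¹' {y}

/-- The trace (sum over the fibers, without multiplicity) of a function `h` on `D₁`. -/
def Tr {M : Type*} [AddCommMonoid M] (D₁ : Set ℂ) (f : ℂ → ℂ) (h : ℂ → M) (y : ℂ) : M :=
  ∑ᶠ x ∈ fib D₁ f y, h x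

section zeros

variable {D : Set ℂ} {h : ℂ → ℂ}

lemma eventually_ne_zero_of_holo (hD : IsOpen D) (hc : IsConnected D)
    (hh : DifferentiableOn ℂ h D) (hne : ¬ ∀ x ∈ D, h x = 0) {x : ℂ} (hx : x ∈ D) :
    ∀ᶠ y in 𝓝[≠] x, h y ≠ 0 := by
  by_contra hcon
  have : ∃ᶠ y in 𝓝[≠] x, h y = 0 := (not_eventually.1 hcon).mono fun y hy => not_not.1 hy
  have h2 := (hh.analyticOnNhd hD).eqOn_zero_of_preconnected_of_frequently_eq_zero
    hc.isPreconnected hx this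
  exact hne fun y hy => h2 hy

lemma finite_zeros_of_holo (hD : IsOpen D) (hc : IsConnected D)
    (hh : DifferentiableOn ℂ h D) (hne : ¬ ∀ x ∈ D, h x = 0) {K : Set ℂ} (hK : IsCompact K)
    (hKD : K ⊆ D) : (K ∩ {x | h x = 0}).Finite := by
  by_contra hinf
  obtain ⟨x, hxK, hx⟩ := Set.Infinite.exists_accPt_of_subset_isCompact hinf hK inter_subset_left
  rw [accPt_iff_frequently_nhdsNE] at hx
  exact hx ((eventually_ne_zero_of_holo hD hc hh hne (hKD hxK)).mono fun y hy hy' => hy hy'.2)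

lemma countable_zeros_of_holo (hD : IsOpen D) (hc : IsConnected D)
    (hh : DifferentiableOn ℂ h D) (hne : ¬ ∀ x ∈ D, h x = 0) :
    (D ∩ {x | h x = 0}).Countable := by
  have key : ∀ x ∈ D ∩ {x | h x = 0}, ({x} : Set ℂ) ∈ 𝓝[D ∩ {x | h x = 0}] x := by
    intro x hx
    have := eventually_ne_zero_of_holo hD hc hh hne hx.1
    rw [eventually_nhdsWithin_iff] at this
    rw [mem_nhdsWithin_iff_eventually]
    filter_upwards [this] with y hy hy'
    by_contra hne'
    exact hy hne' hy'.2
  obtain ⟨t, -, htc, hts⟩ := TopologicalSpace.countable_cover_nhdsWithin key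
  exact (htc.biUnion fun x _ => countable_singleton x).mono hts

end zeros

namespace ProperHol

variable {D₁ D₂ : Set ℂ} {f : ℂ → ℂ} (P : ProperHol D₁ D₂ f)
include P

/-- A proper map cannot be constant, since a bounded domain is not compact. -/
lemma not_const (c : ℂ) : ¬ ∀ x ∈ D₁, f x - c = 0 := by
  intro h
  obtain ⟨x, hx⟩ := P.c1.nonempty
  have hcD : c ∈ D₂ := by
    have := P.maps hx
    rwa [sub_eq_zero.1 (h x hx)] at this
  have hK := P.proper {c} (by simpa using hcD) isCompact_singleton
  have : D₁ ∩ f ⁻¹' {c} = D₁ := by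
    ext y
    simp only [mem_inter_iff, mem_preimage, mem_singleton_iff, and_iff_left_iff_imp]
    exact fun hy => sub_eq_zero.1 (h y hy)
  rw [this] at hK
  have huniv := IsClopen.eq_univ ⟨hK.isClosed, P.o1⟩ ⟨x, hx⟩
  rw [huniv] at hK
  exact noncompact_univ ℂ hK

lemma deriv_not_zero : ¬ ∀ x ∈ D₁, deriv f x = 0 := by
  intro h
  obtain ⟨x, hx⟩ := P.c1.nonempty
  refine P.not_const (f x) fun y hy => ?_
  rw [P.o1.is_const_of_deriv_eq_zero P.c1.isPreconnected P.diff h hy hx, sub_self]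

lemma diff_deriv : DifferentiableOn ℂ (deriv f) D₁ := P.diff.deriv P.o1

lemma analyticAt {x : ℂ} (hx : x ∈ D₁) : AnalyticAt ℂ f x :=
  P.diff.analyticAt (P.o1.mem_nhds hx)

lemma fib_finite {y : ℂ} (hy : y ∈ D₂) : (fib D₁ f y).Finite := by
  have hK := P.proper {y} (by simpa using hy) isCompact_singleton
  refine (finite_zeros_of_holo P.o1 P.c1 (P.diff.sub_const y) (P.not_const y) hK
    inter_subset_left).subset fun x hx => ⟨hx, ?_⟩
  exact sub_eq_zero.2 hx.2

lemma critVal_subset : critVal D₁ f ⊆ D₂ := by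
  rintro _ ⟨x, hx, rfl⟩
  exact P.maps hx.1

lemma countable_critVal : (critVal D₁ f).Countable :=
  (countable_zeros_of_holo P.o1 P.c1 P.diff_deriv P.deriv_not_zero).image _

lemma countable_preimage_critVal : (D₁ ∩ f ⁻¹' critVal D₁ f).Countable := by
  refine (P.countable_critVal.biUnion fun y hy =>
    (P.fib_finite (P.critVal_subset hy)).countable).mono fun x hx => ?_
  exact mem_biUnion hx.2 ⟨hx.1, rfl⟩

/-- Critical values are isolated in `D₂`: a compact disk pulls back to a compact set, which
contains finitely many critical points. -/
lemma eventually_notMem_critVal {c : ℂ} (hc : c ∈ D₂) : ∀ᶠ y in 𝓝[≠] c, y ∉ critVal D₁ f := by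
  obtain ⟨r, hr, hrD⟩ := Metric.nhds_basis_closedBall.mem_iff.1 (P.o2.mem_nhds hc)
  have hK := P.proper _ hrD (isCompact_closedBall c r)
  have hfin := (finite_zeros_of_holo P.o1 P.c1 P.diff_deriv P.deriv_not_zero hK
    inter_subset_left).image f
  have h1 : ∀ᶠ y in 𝓝[≠] c, y ∉ f '' (D₁ ∩ f ⁻¹' closedBall c r ∩ {x | deriv f x = 0}) \ {c} :=
    nhdsWithin_le_nhds ((hfin.subset sdiff_subset).isClosed.isOpen_compl.mem_nhds
      (by simp))
  have h2 : ∀ᶠ y in 𝓝[≠] c, y ∈ closedBall c r :=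
    nhdsWithin_le_nhds (closedBall_mem_nhds c hr)
  filter_upwards [h1, h2, self_mem_nhdsWithin] with y hy1 hy2 hyc hyV
  obtain ⟨x, hx, rfl⟩ := hyV
  exact hy1 ⟨⟨x, ⟨⟨hx.1, hy2⟩, hx.2⟩, rfl⟩, hyc⟩

lemma regVal_open : IsOpen (regVal D₁ D₂ f) := by
  rw [isOpen_iff_mem_nhds]
  intro c hc
  have h := P.eventually_notMem_critVal hc.1
  rw [eventually_nhdsWithin_iff] at h
  filter_upwards [h, P.o2.mem_nhds hc.1] with y hy hyD
  refine ⟨hyD, ?_⟩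
  by_cases hyc : y = c
  · exact hyc ▸ hc.2
  · exact hy hyc

omit P in
lemma deriv_ne_zero_of_regVal {x : ℂ} (hx : x ∈ D₁) (hy : f x ∈ regVal D₁ D₂ f) :
    deriv f x ≠ 0 := fun h => hy.2 ⟨x, ⟨hx, h⟩, rfl⟩

end ProperHol

/-! ### Local inverses over the regular values -/

/-- `Sheets D₁ f B S F` says that over `B` the map `f : D₁ → ℂ` has exactly the local inverses
`F η`, `η ∈ S`, and that they take pairwise distinct values at each point. -/
structure Sheets (D₁ : Set ℂ) (f : ℂ → ℂ) (B : Set ℂ) (S : Finset ℂ) (F : ℂ → ℂ → ℂ) : Prop where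
  mem : ∀ η ∈ S, ∀ y ∈ B, F η y ∈ D₁
  right : ∀ η ∈ S, ∀ y ∈ B, f (F η y) = y
  inj : ∀ y ∈ B, Set.InjOn (fun η => F η y) S
  surj : ∀ x ∈ D₁, f x ∈ B → ∃ η ∈ S, F η (f x) = x
  deriv : ∀ η ∈ S, ∀ y ∈ B, HasDerivAt (F η) (_root_.deriv f (F η y))⁻¹ y
  ne : ∀ η ∈ S, ∀ y ∈ B, _root_.deriv f (F η y) ≠ 0

namespace Sheets

variable {D₁ : Set ℂ} {f : ℂ → ℂ} {B : Set ℂ} {S : Finset ℂ} {F : ℂ → ℂ → ℂ}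

lemma mono (H : Sheets D₁ f B S F) {B' : Set ℂ} (h : B' ⊆ B) : Sheets D₁ f B' S F where
  mem η hη y hy := H.mem η hη y (h hy)
  right η hη y hy := H.right η hη y (h hy)
  inj y hy := H.inj y (h hy)
  surj x hx hxB := H.surj x hx (h hxB)
  deriv η hη y hy := H.deriv η hη y (h hy)
  ne η hη y hy := H.ne η hη y (h hy)

lemma fib_eq (H : Sheets D₁ f B S F) {y : ℂ} (hy : y ∈ B) :
    fib D₁ f y = ↑(S.image fun η => F η y) := by
  ext x
  simp only [fib, mem_inter_iff, mem_preimage, mem_singleton_iff, Finset.coe_image, mem_image,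
    Finset.mem_coe]
  constructor
  · rintro ⟨hx, rfl⟩
    exact H.surj x hx hy
  · rintro ⟨η, hη, rfl⟩
    exact ⟨H.mem η hη y hy, H.right η hη y hy⟩

lemma Tr_eq {M : Type*} [AddCommMonoid M] (H : Sheets D₁ f B S F) (h : ℂ → M) {y : ℂ}
    (hy : y ∈ B) : Tr D₁ f h y = ∑ η ∈ S, h (F η y) := by
  rw [Tr, H.fib_eq hy, finsum_mem_coe_finset, Finset.sum_image (H.inj y hy)]

lemma injOn (H : Sheets D₁ f B S F) {η : ℂ} (hη : η ∈ S) : InjOn (F η) B := by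
  intro a ha b hb hab
  rw [← H.right η hη a ha, hab, H.right η hη b hb]

lemma preimage_eq (H : Sheets D₁ f B S F) : D₁ ∩ f ⁻¹' B = ⋃ η ∈ S, F η '' B := by
  ext x
  simp only [mem_inter_iff, mem_preimage, mem_iUnion, mem_image, exists_prop]
  constructor
  · rintro ⟨hx, hxB⟩
    obtain ⟨η, hη, h⟩ := H.surj x hx hxB
    exact ⟨η, hη, f x, hxB, h⟩
  · rintro ⟨η, hη, y, hy, rfl⟩
    exact ⟨H.mem η hη y hy, by rwa [H.right η hη y hy]⟩

lemma disjoint (H : Sheets D₁ f B S F) : Set.PairwiseDisjoint (↑S) fun η => F η '' B := by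
  intro η hη η' hη' hne
  rw [Function.onFun, Set.disjoint_left]
  rintro _ ⟨y, hy, rfl⟩ ⟨y', hy', h⟩
  have : y' = y := by rw [← H.right η' hη' y' hy', h, H.right η hη y hy]
  subst this
  exact hne (H.inj y' hy' hη hη' h.symm)

lemma continuousOn (H : Sheets D₁ f B S F) {η : ℂ} (hη : η ∈ S) : ContinuousOn (F η) B :=
  fun y hy => (H.deriv η hη y hy).continuousAt.continuousWithinAt

lemma measurable_image (H : Sheets D₁ f B S F) (hB : MeasurableSet B) {η : ℂ} (hη : η ∈ S) :
    MeasurableSet (F η '' B) :=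
  hB.image_of_continuousOn_injOn (H.continuousOn hη) (H.injOn hη)

lemma measurable_preimage (H : Sheets D₁ f B S F) (hB : MeasurableSet B) :
    MeasurableSet (D₁ ∩ f ⁻¹' B) := by
  rw [H.preimage_eq]
  exact Finset.measurableSet_biUnion _ fun η hη => H.measurable_image hB hη

end Sheets

namespace ProperHol

variable {D₁ D₂ : Set ℂ} {f : ℂ → ℂ} (P : ProperHol D₁ D₂ f)
include P

/-- Every regular value is evenly covered. The inverse function theorem gives the sheets;
properness ensures that the fibers over a small neighborhood meet nothing else. -/
lemma exists_sheets {y₀ : ℂ} (hy₀ : y₀ ∈ regVal D₁ D₂ f) :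
    ∃ U ∈ 𝓝 y₀, ∃ S F, IsOpen U ∧ U ⊆ regVal D₁ D₂ f ∧ Sheets D₁ f U S F := by
  have hfin := P.fib_finite hy₀.1
  obtain ⟨T, hT, hTd⟩ := hfin.t2_separation
  -- near each point of the fiber, `f` is injective on an open set
  have hW : ∀ η ∈ fib D₁ f y₀, ∃ W : Set ℂ, IsOpen W ∧ η ∈ W ∧ W ⊆ T η ∧ W ⊆ D₁ ∧ InjOn f W := by
    intro η hη
    have hne : deriv f η ≠ 0 := deriv_ne_zero_of_regVal hη.1 (by rw [hη.2]; exact hy₀)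
    have hs := (P.analyticAt hη.1).hasStrictDerivAt
    have hl : ∀ᶠ x in 𝓝 η, hs.localInverse f _ η hne (f x) = x :=
      HasStrictFDerivAt.eventually_left_inverse _
    obtain ⟨W, hWs, hWo, hηW⟩ := _root_.mem_nhds_iff.1 ((hl.and
      ((P.o1.eventually_mem hη.1).and ((hT η).2.eventually_mem (hT η).1))))
    refine ⟨W, hWo, hηW, fun x hx => (hWs hx).2.2, fun x hx => (hWs hx).2.1, ?_⟩
    intro a ha b hb hab
    rw [← (hWs ha).1, hab, (hWs hb).1]
  choose! W hWo hWη hWT hWD hWinj using hW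
  have hWopen : IsOpen (⋃ η ∈ fib D₁ f y₀, W η) := isOpen_biUnion hWo
  -- a neighborhood of `y₀` whose preimage is contained in the union of the `W η`
  obtain ⟨r, hr, hrR⟩ := Metric.nhds_basis_closedBall.mem_iff.1 (P.regVal_open.mem_nhds hy₀)
  have hK := P.proper _ (hrR.trans sdiff_subset) (isCompact_closedBall y₀ r)
  have hK' := hK.diff hWopen
  have hK'' : IsCompact (f '' ((D₁ ∩ f ⁻¹' closedBall y₀ r) \ ⋃ η ∈ fib D₁ f y₀, W η)) :=
    hK'.image_of_continuousOn (P.diff.continuousOn.mono fun x hx => hx.1.1)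
  have hy₀K : y₀ ∉ f '' ((D₁ ∩ f ⁻¹' closedBall y₀ r) \ ⋃ η ∈ fib D₁ f y₀, W η) := by
    rintro ⟨x, ⟨hx, hx'⟩, hxy⟩
    exact hx' (mem_biUnion (show x ∈ fib D₁ f y₀ from ⟨hx.1, hxy⟩) (hWη x ⟨hx.1, hxy⟩))
  have himg : ∀ η ∈ fib D₁ f y₀, f '' W η ∈ 𝓝 y₀ := by
    intro η hη
    have hne : deriv f η ≠ 0 := deriv_ne_zero_of_regVal hη.1 (by rw [hη.2]; exact hy₀)
    have := ((P.analyticAt hη.1).hasStrictDerivAt).map_nhds_eq hne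
    rw [← show f η = y₀ from hη.2, ← this]
    exact image_mem_map ((hWo η hη).mem_nhds (hWη η hη))
  have hN : (ball y₀ r ∩ (f '' ((D₁ ∩ f ⁻¹' closedBall y₀ r) \ ⋃ η ∈ fib D₁ f y₀, W η))ᶜ) ∩
      ⋂ η ∈ fib D₁ f y₀, f '' W η ∈ 𝓝 y₀ :=
    inter_mem (inter_mem (ball_mem_nhds _ hr) (hK''.isClosed.isOpen_compl.mem_nhds hy₀K))
      ((biInter_mem hfin).2 himg)
  obtain ⟨U, hUN, hUo, hyU⟩ := _root_.mem_nhds_iff.1 hN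
  have hUR : U ⊆ regVal D₁ D₂ f := fun y hy => hrR (ball_subset_closedBall (hUN hy).1.1)
  have hUW : ∀ η ∈ fib D₁ f y₀, ∀ y ∈ U, y ∈ f '' W η := fun η hη y hy =>
    mem_iInter₂.1 (hUN hy).2 η hη
  let F : ℂ → ℂ → ℂ := fun η y => Function.invFunOn f (W η) y
  have hFm : ∀ η ∈ fib D₁ f y₀, ∀ y ∈ U, F η y ∈ W η := fun η hη y hy =>
    Function.invFunOn_mem (hUW η hη y hy)
  have hFr : ∀ η ∈ fib D₁ f y₀, ∀ y ∈ U, f (F η y) = y := fun η hη y hy =>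
    Function.invFunOn_eq (hUW η hη y hy)
  have hFl : ∀ η ∈ fib D₁ f y₀, ∀ x ∈ W η, F η (f x) = x := fun η hη x hx =>
    (hWinj η hη).leftInvOn_invFunOn hx
  have hFne : ∀ η ∈ fib D₁ f y₀, ∀ y ∈ U, deriv f (F η y) ≠ 0 := fun η hη y hy =>
    deriv_ne_zero_of_regVal (hWD η hη (hFm η hη y hy)) (by rw [hFr η hη y hy]; exact hUR hy)
  refine ⟨U, hUo.mem_nhds hyU, hfin.toFinset, F, hUo, hUR, ?_⟩
  constructor
  · intro η hη y hy
    rw [Finite.mem_toFinset] at hη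
    exact hWD η hη (hFm η hη y hy)
  · intro η hη y hy
    rw [Finite.mem_toFinset] at hη
    exact hFr η hη y hy
  · intro y hy η hη η' hη' heq
    simp only [Finite.coe_toFinset] at hη hη'
    by_contra hne
    have := hTd hη hη' hne
    rw [Function.onFun, Set.disjoint_left] at this
    refine this (hWT η hη (hFm η hη y hy)) ?_
    have heq' : F η y = F η' y := heq
    rw [heq']
    exact hWT η' hη' (hFm η' hη' y hy)
  · intro x hx hxU
    have : x ∈ ⋃ η ∈ fib D₁ f y₀, W η := by
      by_contra hcon
      exact (hUN hxU).1.2 ⟨x, ⟨⟨hx, ball_subset_closedBall (hUN hxU).1.1⟩, hcon⟩, rfl⟩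
    obtain ⟨η, hη, hxη⟩ := mem_iUnion₂.1 this
    exact ⟨η, by simpa using hη, hFl η hη x hxη⟩
  · intro η hη y hy
    rw [Finite.mem_toFinset] at hη
    have hs := (P.analyticAt (hWD η hη (hFm η hη y hy))).hasStrictDerivAt
    have := hs.to_local_left_inverse (hFne η hη y hy) (g := F η)
      (by filter_upwards [(hWo η hη).mem_nhds (hFm η hη y hy)] with x hx using hFl η hη x hx)
    rw [hFr η hη y hy] at this
    exact this.hasDerivAt
  · intro η hη y hy
    rw [Finite.mem_toFinset] at hη
    exact hFne η hη y hy

end ProperHol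

/-! ### Removable singularities and traces -/

/-- A locally bounded holomorphic function on the complement of a set of isolated points of `D`
extends holomorphically to `D`. -/
lemma exists_extension {D V : Set ℂ} {G : ℂ → ℂ} (hD : IsOpen D)
    (hV : ∀ c ∈ D, ∀ᶠ y in 𝓝[≠] c, y ∉ V) (hG : DifferentiableOn ℂ G (D \ V))
    (hb : ∀ c ∈ D, ∃ M : ℝ, ∀ᶠ y in 𝓝[≠] c, ‖G y‖ ≤ M) :
    ∃ G' : ℂ → ℂ, DifferentiableOn ℂ G' D ∧ EqOn G' G (D \ V) := by
  classical
  refine ⟨fun c => if c ∈ V then limUnder (𝓝[≠] c) G else G c, ?_, fun c hc => if_neg hc.2⟩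
  intro c hc
  obtain ⟨M, hM⟩ := hb c hc
  have hev := (hV c hc).and hM
  rw [eventually_nhdsWithin_iff] at hev
  obtain ⟨s, hs, hso, hcs⟩ := _root_.mem_nhds_iff.1 (hev.and (hD.eventually_mem hc))
  have hsD : s \ {c} ⊆ D \ V := fun y hy => ⟨(hs hy.1).2, ((hs hy.1).1 hy.2).1⟩
  apply DifferentiableAt.differentiableWithinAt
  by_cases hcV : c ∈ V
  · have h := differentiableOn_update_limUnder_of_bddAbove (hso.mem_nhds hcs) (hG.mono hsD)
      ⟨M, by rintro _ ⟨y, hy, rfl⟩; exact ((hs hy.1).1 hy.2).2⟩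
    refine (h.differentiableAt (hso.mem_nhds hcs)).congr_of_eventuallyEq ?_
    filter_upwards [hso.mem_nhds hcs] with y hy
    by_cases hyc : y = c
    · subst hyc; simp [hcV]
    · simp [hyc, ((hs hy).1 hyc).1]
  · have hsD' : s ⊆ D \ V := by
      intro y hy
      by_cases hyc : y = c
      · subst hyc; exact ⟨hc, hcV⟩
      · exact hsD ⟨hy, hyc⟩
    refine ((hG.mono hsD').differentiableAt (hso.mem_nhds hcs)).congr_of_eventuallyEq ?_
    filter_upwards [hso.mem_nhds hcs] with y hy
    simp [(hsD' hy).2]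

namespace ProperHol

variable {D₁ D₂ : Set ℂ} {f : ℂ → ℂ} (P : ProperHol D₁ D₂ f)
include P

/-- The trace of a primitive of `u` is a primitive of the trace of `u / f'`. -/
lemma hasDerivAt_Tr {g u : ℂ → ℂ} (hg : ∀ x ∈ D₁, HasDerivAt g (u x) x) {y : ℂ}
    (hy : y ∈ regVal D₁ D₂ f) :
    HasDerivAt (Tr D₁ f g) (Tr D₁ f (fun x => u x / deriv f x) y) y := by
  obtain ⟨U, hU, S, F, hUo, -, H⟩ := P.exists_sheets hy
  have hyU := mem_of_mem_nhds hU
  have h1 : HasDerivAt (fun z => ∑ η ∈ S, g (F η z))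
      (∑ η ∈ S, u (F η y) * (deriv f (F η y))⁻¹) y :=
    HasDerivAt.fun_sum fun η hη =>
      (hg _ (H.mem η hη y hyU)).comp y (H.deriv η hη y hyU)
  rw [H.Tr_eq _ hyU]
  simp only [div_eq_mul_inv]
  refine h1.congr_of_eventuallyEq ?_
  filter_upwards [hU] with z hz using H.Tr_eq _ hz

/-- All regular fibers have the same number of points. The bounded function `1 / (1 + #fiber)` is
locally constant on the regular values, so it extends holomorphically to `D₂` with vanishing
derivative. -/
lemma exists_degree : ∃ m : ℕ, ∀ y ∈ regVal D₁ D₂ f, (fib D₁ f y).ncard = m := by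
  let N : ℂ → ℂ := fun y => ((1 : ℂ) + ((fib D₁ f y).ncard : ℂ))⁻¹
  have hloc : ∀ y ∈ regVal D₁ D₂ f, ∀ᶠ z in 𝓝 y, N z = N y := by
    intro y hy
    obtain ⟨U, hU, S, F, hUo, -, H⟩ := P.exists_sheets hy
    have hcard : ∀ z ∈ U, (fib D₁ f z).ncard = S.card := by
      intro z hz
      rw [H.fib_eq hz, Set.ncard_coe_finset, Finset.card_image_of_injOn (H.inj z hz)]
    filter_upwards [hU] with z hz
    simp only [N, hcard z hz, hcard y (mem_of_mem_nhds hU)]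
  have hder : ∀ y ∈ regVal D₁ D₂ f, HasDerivAt N 0 y := fun y hy =>
    (hasDerivAt_const y (N y)).congr_of_eventuallyEq (hloc y hy)
  have hbd : ∀ y, ‖N y‖ ≤ 1 := by
    intro y
    have : ((1 : ℂ) + ((fib D₁ f y).ncard : ℂ)) = ((1 + (fib D₁ f y).ncard : ℕ) : ℂ) := by
      push_cast; ring
    simp only [N]
    rw [this, norm_inv, Complex.norm_natCast]
    apply inv_le_one_of_one_le₀
    exact_mod_cast Nat.le_add_right 1 _
  obtain ⟨N', hN'd, hN'e⟩ := exists_extension P.o2 (fun c hc => P.eventually_notMem_critVal hc)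
    (G := N) (fun y hy => (hder y hy).differentiableAt.differentiableWithinAt)
    (fun c hc => ⟨1, Eventually.of_forall hbd⟩)
  have hzero : ∀ y ∈ regVal D₁ D₂ f, deriv N' y = 0 := by
    intro y hy
    refine ((hder y hy).congr_of_eventuallyEq ?_).deriv
    filter_upwards [P.regVal_open.mem_nhds hy] with z hz using hN'e hz
  have hzero' : ∀ y ∈ D₂, deriv N' y = 0 := by
    intro c hc
    by_contra hne
    have h1 : ∀ᶠ y in 𝓝[≠] c, deriv N' y ≠ 0 := nhdsWithin_le_nhds
      (((hN'd.deriv P.o2).continuousOn.continuousAt (P.o2.mem_nhds hc)).eventually_ne hne)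
    have h2 : ∀ᶠ y in 𝓝[≠] c, y ∈ D₂ := nhdsWithin_le_nhds (P.o2.mem_nhds hc)
    obtain ⟨y, hy1, hy2, hy3⟩ := (h1.and (h2.and (P.eventually_notMem_critVal hc))).exists
    exact hy1 (hzero y ⟨hy2, hy3⟩)
  by_cases hne : (regVal D₁ D₂ f).Nonempty
  · obtain ⟨y₀, hy₀⟩ := hne
    refine ⟨(fib D₁ f y₀).ncard, fun y hy => ?_⟩
    have h := P.o2.is_const_of_deriv_eq_zero P.c2.isPreconnected hN'd hzero' hy.1 hy₀.1
    rw [hN'e hy, hN'e hy₀] at h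
    have h' := inv_injective h
    exact_mod_cast add_left_cancel h'
  · exact ⟨0, fun y hy => (hne ⟨y, hy⟩).elim⟩

/-- If `g` is a primitive of `u` on `D₁`, its trace extends holomorphically across the critical
values, since it is bounded near each of them: over a compact disk the fibers stay in a compact
set and have bounded cardinality. -/
lemma exists_Tr_extension {g u : ℂ → ℂ} (hg : ∀ x ∈ D₁, HasDerivAt g (u x) x) :
    ∃ G : ℂ → ℂ, DifferentiableOn ℂ G D₂ ∧
      ∀ y ∈ regVal D₁ D₂ f, deriv G y = Tr D₁ f (fun x => u x / deriv f x) y := by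
  obtain ⟨m, hm⟩ := P.exists_degree
  have hgc : ContinuousOn g D₁ := fun x hx => (hg x hx).continuousAt.continuousWithinAt
  obtain ⟨G, hGd, hGe⟩ := exists_extension P.o2 (fun c hc => P.eventually_notMem_critVal hc)
    (G := Tr D₁ f g) (fun y hy => (P.hasDerivAt_Tr hg hy).differentiableAt.differentiableWithinAt)
    (by
      intro c hc
      obtain ⟨r, hr, hrD⟩ := Metric.nhds_basis_closedBall.mem_iff.1 (P.o2.mem_nhds hc)
      have hK := P.proper _ hrD (isCompact_closedBall c r)
      obtain ⟨M, hM⟩ := hK.exists_bound_of_continuousOn (hgc.mono inter_subset_left)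
      refine ⟨m * M, ?_⟩
      filter_upwards [P.eventually_notMem_critVal hc,
        nhdsWithin_le_nhds (closedBall_mem_nhds c hr)] with y hy hyr
      have hfin := P.fib_finite (hrD hyr)
      rw [Tr, finsum_mem_eq_finite_toFinset_sum _ hfin]
      refine (norm_sum_le_of_le _ (f := g) (n := fun _ => M) fun x hx => ?_).trans ?_
      · rw [Finite.mem_toFinset] at hx
        exact hM x ⟨hx.1, by rw [mem_preimage, show f x = y from hx.2]; exact hyr⟩
      · rw [Finset.sum_const, nsmul_eq_mul, ← Set.ncard_eq_toFinset_card _ hfin,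
          hm y ⟨hrD hyr, hy⟩])
  refine ⟨G, hGd, fun y hy => ?_⟩
  refine ((P.hasDerivAt_Tr hg hy).congr_of_eventuallyEq ?_).deriv
  filter_upwards [P.regVal_open.mem_nhds hy] with z hz using hGe hz

end ProperHol

/-! ### Change of variables along the fibers -/

/-- The real Jacobian determinant of multiplication by `c` is `‖c‖ ^ 2`. -/
lemma abs_det_toSpanSingleton (c : ℂ) :
    |((ContinuousLinearMap.toSpanSingleton ℂ c).restrictScalars ℝ).det| = ‖c‖ ^ 2 := by
  have h : ((ContinuousLinearMap.toSpanSingleton ℂ c).restrictScalars ℝ).det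
      = Complex.normSq c := by
    rw [ContinuousLinearMap.det]
    have h2 : (((ContinuousLinearMap.toSpanSingleton ℂ c).restrictScalars ℝ : ℂ →L[ℝ] ℂ) : ℂ →ₗ[ℝ] ℂ)
        = Algebra.lmul ℝ ℂ c := by
      ext
      all_goals simp [mul_comm]
    rw [h2, ← Algebra.norm_complex_apply, Algebra.norm_apply]
  rw [h, Complex.normSq_eq_norm_sq, abs_of_nonneg (by positivity)]

namespace Sheets

variable {D₁ : Set ℂ} {f : ℂ → ℂ} {B : Set ℂ} {S : Finset ℂ} {F : ℂ → ℂ → ℂ}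

lemma hasFDerivWithinAt (H : Sheets D₁ f B S F) {η : ℂ} (hη : η ∈ S) : ∀ y ∈ B,
    HasFDerivWithinAt (F η) ((ContinuousLinearMap.toSpanSingleton ℂ
      (_root_.deriv f (F η y))⁻¹).restrictScalars ℝ) B y := fun y hy =>
  ((H.deriv η hη y hy).hasFDerivAt.restrictScalars ℝ).hasFDerivWithinAt

lemma lintegral_eq (H : Sheets D₁ f B S F) (hB : MeasurableSet B) {h : ℂ → ENNReal}
    (hh : ContinuousOn h (D₁ ∩ f ⁻¹' B)) :
    ∫⁻ y in B, Tr D₁ f h y = ∫⁻ x in D₁ ∩ f ⁻¹' B, ‖_root_.deriv f x‖ₑ ^ 2 * h x := by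
  have hmaps : ∀ η ∈ S, MapsTo (F η) B (D₁ ∩ f ⁻¹' B) := fun η hη y hy =>
    ⟨H.mem η hη y hy, by rw [mem_preimage, H.right η hη y hy]; exact hy⟩
  rw [H.preimage_eq, lintegral_biUnion_finset H.disjoint fun η hη => H.measurable_image hB hη,
    setLIntegral_congr_fun hB fun y hy => H.Tr_eq h hy, lintegral_finsetSum' (f := fun η y => h (F η y)) _ fun η hη =>
      ((hh.comp (H.continuousOn hη) (hmaps η hη)).aemeasurable hB)]
  refine Finset.sum_congr rfl fun η hη => ?_
  rw [lintegral_image_eq_lintegral_abs_det_fderiv_mul volume hB (H.hasFDerivWithinAt hη)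
    (H.injOn hη)]
  refine setLIntegral_congr_fun hB fun y hy => ?_
  have h0 : ‖_root_.deriv f (F η y)‖ₑ ≠ 0 := by simpa using H.ne η hη y hy
  simp only [abs_det_toSpanSingleton]
  rw [ENNReal.ofReal_pow (norm_nonneg _), ofReal_norm, enorm_inv (H.ne η hη y hy),
    ← mul_assoc, ← mul_pow, ENNReal.inv_mul_cancel h0 enorm_ne_top, one_pow, one_mul]

lemma integral_eq (H : Sheets D₁ f B S F) (hB : MeasurableSet B) {h : ℂ → ℂ}
    (hh : IntegrableOn (fun x => ((‖_root_.deriv f x‖ ^ 2 : ℝ) : ℂ) * h x) (D₁ ∩ f ⁻¹' B)) :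
    ∫ y in B, Tr D₁ f h y =
      ∫ x in D₁ ∩ f ⁻¹' B, ((‖_root_.deriv f x‖ ^ 2 : ℝ) : ℂ) * h x := by
  rw [H.preimage_eq] at hh ⊢
  have hh' : ∀ η ∈ S, IntegrableOn (fun x => ((‖_root_.deriv f x‖ ^ 2 : ℝ) : ℂ) * h x)
      (F η '' B) := fun η hη => hh.mono_set (subset_biUnion_of_mem (u := fun η => F η '' B) hη)
  have hpt : ∀ η ∈ S, ∀ y ∈ B, |((ContinuousLinearMap.toSpanSingleton ℂ
      (_root_.deriv f (F η y))⁻¹).restrictScalars ℝ).det| •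
        (((‖_root_.deriv f (F η y)‖ ^ 2 : ℝ) : ℂ) * h (F η y)) = h (F η y) := by
    intro η hη y hy
    have h0 : ‖_root_.deriv f (F η y)‖ ≠ 0 := by simpa using H.ne η hη y hy
    rw [abs_det_toSpanSingleton, Complex.real_smul, ← mul_assoc, ← Complex.ofReal_mul, norm_inv,
      ← mul_pow, inv_mul_cancel₀ h0, one_pow, Complex.ofReal_one, one_mul]
  rw [integral_biUnion_finset S (fun η hη => H.measurable_image hB hη) H.disjoint hh',
    setIntegral_congr_fun hB fun y hy => H.Tr_eq h hy, integral_finsetSum _ fun η hη => ?_]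
  · refine Finset.sum_congr rfl fun η hη => ?_
    rw [integral_image_eq_integral_abs_det_fderiv_smul volume hB (H.hasFDerivWithinAt hη)
      (H.injOn hη)]
    exact (setIntegral_congr_fun hB fun y hy => hpt η hη y hy).symm
  · have := (integrableOn_image_iff_integrableOn_abs_det_fderiv_smul volume hB
      (H.hasFDerivWithinAt hη) (H.injOn hη) _).1 (hh' η hη)
    exact this.congr_fun (fun y hy => hpt η hη y hy) hB

end Sheets

namespace ProperHol

variable {D₁ D₂ : Set ℂ} {f : ℂ → ℂ} (P : ProperHol D₁ D₂ f)
include P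

/-- The regular values split into countably many measurable, evenly covered pieces. -/
lemma exists_partition (hne : (regVal D₁ D₂ f).Nonempty) :
    ∃ B : ℕ → Set ℂ, (∀ n, MeasurableSet (B n)) ∧ Pairwise (Function.onFun Disjoint B) ∧
      (⋃ n, B n) = regVal D₁ D₂ f ∧ ∀ n, ∃ S F, Sheets D₁ f (B n) S F := by
  have h : ∀ y ∈ regVal D₁ D₂ f, ∃ U, y ∈ U ∧ IsOpen U ∧ U ⊆ regVal D₁ D₂ f ∧
      ∃ S F, Sheets D₁ f U S F := by
    intro y hy
    obtain ⟨U, hU, S, F, hUo, hUR, H⟩ := P.exists_sheets hy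
    exact ⟨U, mem_of_mem_nhds hU, hUo, hUR, S, F, H⟩
  choose! U hyU hUo hUR hUS using h
  obtain ⟨t, htR, htc, htU⟩ := TopologicalSpace.countable_cover_nhdsWithin (f := U)
    fun y hy => mem_nhdsWithin_of_mem_nhds ((hUo y hy).mem_nhds (hyU y hy))
  have htne : t.Nonempty := by
    obtain ⟨y, hy⟩ := hne
    obtain ⟨x, hx, -⟩ := mem_iUnion₂.1 (htU hy)
    exact ⟨x, hx⟩
  obtain ⟨e, rfl⟩ := htc.exists_eq_range htne
  have heR : ∀ n, e n ∈ regVal D₁ D₂ f := fun n => htR (mem_range_self n)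
  refine ⟨disjointed fun n => U (e n), MeasurableSet.disjointed fun n =>
    (hUo _ (heR n)).measurableSet, disjoint_disjointed _, ?_, fun n => ?_⟩
  · rw [iUnion_disjointed]
    refine Subset.antisymm (iUnion_subset fun n => hUR _ (heR n)) ?_
    simpa using htU
  · obtain ⟨S, F, H⟩ := hUS _ (heR n)
    exact ⟨S, F, H.mono (disjointed_subset _ _)⟩

lemma regVal_ae : (regVal D₁ D₂ f : Set ℂ) =ᵐ[volume] D₂ :=
  sdiff_null_ae_eq_self (P.countable_critVal.measure_zero _)

lemma preimage_regVal_ae : (D₁ ∩ f ⁻¹' regVal D₁ D₂ f : Set ℂ) =ᵐ[volume] D₁ := by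
  have : D₁ ∩ f ⁻¹' regVal D₁ D₂ f = D₁ \ (D₁ ∩ f ⁻¹' critVal D₁ f) := by
    ext x
    simp only [regVal, mem_inter_iff, mem_preimage, Set.mem_sdiff]
    exact ⟨fun h => ⟨h.1, fun h' => h.2.2 h'.2⟩, fun h => ⟨h.1, P.maps h.1, fun h' =>
      h.2 ⟨h.1, h'⟩⟩⟩
  rw [this]
  exact sdiff_null_ae_eq_self (P.countable_preimage_critVal.measure_zero _)

lemma lintegral_Tr (hne : (regVal D₁ D₂ f).Nonempty) {h : ℂ → ENNReal}
    (hh : ContinuousOn h (D₁ ∩ f ⁻¹' regVal D₁ D₂ f)) :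
    ∫⁻ y in D₂, Tr D₁ f h y = ∫⁻ x in D₁, ‖deriv f x‖ₑ ^ 2 * h x := by
  obtain ⟨B, hBm, hBd, hBU, hBS⟩ := P.exists_partition hne
  rw [← setLIntegral_congr P.regVal_ae, ← setLIntegral_congr P.preimage_regVal_ae, ← hBU,
    preimage_iUnion, inter_iUnion, lintegral_iUnion hBm hBd, lintegral_iUnion]
  · refine tsum_congr fun n => ?_
    obtain ⟨S, F, H⟩ := hBS n
    exact H.lintegral_eq (hBm n) (hh.mono (by rw [← hBU]; gcongr; exact subset_iUnion B n))
  · intro n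
    obtain ⟨S, F, H⟩ := hBS n
    exact H.measurable_preimage (hBm n)
  · intro i j hij
    exact ((hBd hij).preimage f).mono inter_subset_right inter_subset_right

lemma integral_Tr (hne : (regVal D₁ D₂ f).Nonempty) {h : ℂ → ℂ}
    (hh : IntegrableOn (fun x => ((‖deriv f x‖ ^ 2 : ℝ) : ℂ) * h x) D₁)
    (hT : IntegrableOn (Tr D₁ f h) D₂) :
    ∫ y in D₂, Tr D₁ f h y = ∫ x in D₁, ((‖deriv f x‖ ^ 2 : ℝ) : ℂ) * h x := by
  obtain ⟨B, hBm, hBd, hBU, hBS⟩ := P.exists_partition hne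
  have hh' := hh.mono_set (inter_subset_left (t := f ⁻¹' regVal D₁ D₂ f))
  have hT' : IntegrableOn (Tr D₁ f h) (regVal D₁ D₂ f) := hT.mono_set sdiff_subset
  rw [← setIntegral_congr_set P.regVal_ae, ← setIntegral_congr_set P.preimage_regVal_ae]
  rw [← hBU] at hT' ⊢
  rw [← hBU, preimage_iUnion, inter_iUnion] at hh'
  rw [preimage_iUnion, inter_iUnion, integral_iUnion hBm hBd hT', integral_iUnion _ _ hh']
  · refine tsum_congr fun n => ?_
    obtain ⟨S, F, H⟩ := hBS n
    exact H.integral_eq (hBm n) (hh'.mono_set (subset_iUnion (fun n => D₁ ∩ f ⁻¹' B n) n))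
  · intro n
    obtain ⟨S, F, H⟩ := hBS n
    exact H.measurable_preimage (hBm n)
  · intro i j hij
    exact ((hBd hij).preimage f).mono inter_subset_right inter_subset_right

end ProperHol

/-! ### The reduced Bergman space as an inner product space -/

namespace MemReducedBergman

variable {D : Set ℂ} {u v : ℂ → ℂ}

lemma memLp (hD : IsOpen D) (hu : MemReducedBergman D u) : MemLp u 2 (volume.restrict D) :=
  (memLp_two_iff_integrable_sq_norm
    (hu.1.continuousOn.aestronglyMeasurable hD.measurableSet)).2 hu.2.2

lemma integrableOn_mul_conj (hD : IsOpen D) (hu : MemReducedBergman D u)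
    (hv : MemReducedBergman D v) :
    IntegrableOn (fun z => u z * (starRingEnd ℂ) (v z)) D :=
  (hu.memLp hD).integrable_mul (hv.memLp hD).star

lemma of_lintegral_lt_top (hD : IsOpen D) (hu : DifferentiableOn ℂ u D) (hp : HasPrimitiveOn u D)
    (hlt : ∫⁻ z in D, ‖u z‖ₑ ^ 2 < ⊤) : MemReducedBergman D u := by
  refine ⟨hu, hp, ((hu.continuousOn.norm.pow 2).aestronglyMeasurable hD.measurableSet), ?_⟩
  simpa [HasFiniteIntegral, enorm_pow] using hlt

lemma lintegral_lt_top (hu : MemReducedBergman D u) : ∫⁻ z in D, ‖u z‖ₑ ^ 2 < ⊤ := by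
  simpa [HasFiniteIntegral, enorm_pow] using hu.2.2.2

lemma of_memLp (hu : DifferentiableOn ℂ u D) (hp : HasPrimitiveOn u D)
    (h : MemLp u 2 (volume.restrict D)) : MemReducedBergman D u :=
  ⟨hu, hp, (memLp_two_iff_integrable_sq_norm h.1).1 h⟩

lemma sub (hD : IsOpen D) (hu : MemReducedBergman D u) (hv : MemReducedBergman D v) :
    MemReducedBergman D (fun z => u z - v z) := by
  obtain ⟨g, hg, hg'⟩ := hu.2.1
  obtain ⟨k, hk, hk'⟩ := hv.2.1
  exact of_memLp (hu.1.sub hv.1)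
    ⟨fun z => g z - k z, hg.sub hk, fun z hz => (hg' z hz).sub (hk' z hz)⟩
    ((hu.memLp hD).sub (hv.memLp hD))

lemma const_mul (hD : IsOpen D) (hu : MemReducedBergman D u) (c : ℂ) :
    MemReducedBergman D (fun z => c * u z) := by
  obtain ⟨g, hg, hg'⟩ := hu.2.1
  exact of_memLp (hu.1.const_mul c)
    ⟨fun z => c * g z, hg.const_mul c, fun z hz => (hg' z hz).const_mul c⟩
    ((hu.memLp hD).const_mul c)

lemma sum (hD : IsOpen D) {ι : Type*} (S : Finset ι) {u : ι → ℂ → ℂ}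
    (hu : ∀ i ∈ S, MemReducedBergman D (u i)) :
    MemReducedBergman D (fun z => ∑ i ∈ S, u i z) := by
  have h : ∀ i, ∃ g : ℂ → ℂ, i ∈ S → DifferentiableOn ℂ g D ∧ ∀ z ∈ D, HasDerivAt g (u i z) z := by
    intro i
    by_cases hi : i ∈ S
    · obtain ⟨g, hg⟩ := (hu i hi).2.1
      exact ⟨g, fun _ => hg⟩
    · exact ⟨0, fun h => (hi h).elim⟩
  choose g hg using h
  exact of_memLp (DifferentiableOn.fun_sum fun i hi => (hu i hi).1)
    ⟨fun z => ∑ i ∈ S, g i z, DifferentiableOn.fun_sum fun i hi => (hg i hi).1,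
      fun z hz => HasDerivAt.fun_sum fun i hi => (hg i hi).2 z hz⟩
    (memLp_finsetSum S fun i hi => (hu i hi).memLp hD)

/-- An element of the reduced Bergman space with vanishing norm vanishes on the domain. -/
lemma eq_zero (hD : IsOpen D) (hu : MemReducedBergman D u)
    (h : ∫ z in D, u z * (starRingEnd ℂ) (u z) = 0) : ∀ z ∈ D, u z = 0 := by
  have h1 : ∫ z in D, ‖u z‖ ^ 2 = 0 := by
    have : ∫ z in D, ((‖u z‖ ^ 2 : ℝ) : ℂ) = 0 := by
      rw [← h]
      congr 1
      ext z
      rw [Complex.mul_conj, Complex.normSq_eq_norm_sq]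
    have h' := (integral_ofReal (𝕜 := ℂ) (μ := volume.restrict D)
      (f := fun z => ‖u z‖ ^ 2)).symm.trans this
    exact Complex.ofReal_eq_zero.1 h'
  rw [setIntegral_eq_zero_iff_of_nonneg_ae (Eventually.of_forall fun z => by positivity)
    hu.2.2] at h1
  have h2 : EqOn (fun z => ‖u z‖ ^ 2) 0 D :=
    Measure.eqOn_open_of_ae_eq h1 hD (hu.1.continuousOn.norm.pow 2) continuousOn_const
  intro z hz
  simpa using h2 hz

end MemReducedBergman

/-! ### Pullback, trace and their adjointness -/

lemma enorm_sum_sq_le {ι : Type*} (S : Finset ι) (a : ι → ℂ) :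
    ‖∑ i ∈ S, a i‖ₑ ^ 2 ≤ (S.card : ENNReal) * ∑ i ∈ S, ‖a i‖ₑ ^ 2 := by
  have h : ‖∑ i ∈ S, a i‖₊ ^ 2 ≤ (S.card : NNReal) * ∑ i ∈ S, ‖a i‖₊ ^ 2 :=
    (pow_le_pow_left₀ zero_le (nnnorm_sum_le S a) 2).trans sq_sum_le_card_mul_sum_sq
  simp only [enorm_eq_nnnorm]
  exact_mod_cast h

namespace ProperHol

variable {D₁ D₂ : Set ℂ} {f : ℂ → ℂ} (P : ProperHol D₁ D₂ f)
include P

lemma Tr_eq_sum {M : Type*} [AddCommMonoid M] (h : ℂ → M) {y : ℂ} (hy : y ∈ D₂) :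
    Tr D₁ f h y = ∑ x ∈ (P.fib_finite hy).toFinset, h x :=
  finsum_mem_eq_finite_toFinset_sum _ _

lemma memReducedBergman_pullback (hne : (regVal D₁ D₂ f).Nonempty) {k : ℂ → ℂ}
    (hk : MemReducedBergman D₂ k) : MemReducedBergman D₁ (fun x => deriv f x * k (f x)) := by
  obtain ⟨m, hm⟩ := P.exists_degree
  have hkf : DifferentiableOn ℂ (fun x => k (f x)) D₁ := hk.1.comp P.diff P.maps
  obtain ⟨g, hg, hg'⟩ := hk.2.1
  refine .of_lintegral_lt_top P.o1 (P.diff_deriv.mul hkf) ⟨fun x => g (f x),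
    hg.comp P.diff P.maps, fun x hx => ?_⟩ ?_
  · change HasDerivAt (fun x => g (f x)) (deriv f x * k (f x)) x
    rw [mul_comm]
    exact (hg' _ (P.maps hx)).comp x (P.analyticAt hx).differentiableAt.hasDerivAt
  · simp only [enorm_mul, mul_pow]
    rw [← P.lintegral_Tr hne (h := fun x => ‖k (f x)‖ₑ ^ 2)
      ((ENNReal.continuous_pow 2).comp_continuousOn
        (hkf.continuousOn.mono inter_subset_left).enorm)]
    have hTr : ∀ y ∈ regVal D₁ D₂ f, Tr D₁ f (fun x => ‖k (f x)‖ₑ ^ 2) y = m * ‖k y‖ₑ ^ 2 := by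
      intro y hy
      rw [P.Tr_eq_sum _ hy.1, Finset.sum_congr rfl (g := fun _ => ‖k y‖ₑ ^ 2),
        Finset.sum_const, nsmul_eq_mul, ← Set.ncard_eq_toFinset_card _ (P.fib_finite hy.1),
        hm y hy]
      intro x hx
      rw [Finite.mem_toFinset] at hx
      rw [show f x = y from hx.2]
    rw [← setLIntegral_congr P.regVal_ae,
      setLIntegral_congr_fun P.regVal_open.measurableSet hTr, setLIntegral_congr P.regVal_ae,
      lintegral_const_mul' _ _ (ENNReal.natCast_ne_top m)]
    exact ENNReal.mul_lt_top (ENNReal.natCast_lt_top m) hk.lintegral_lt_top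

/-- The trace of `v / f'` extends to an element of the reduced Bergman space of `D₂`. -/
lemma exists_memReducedBergman_trace (hne : (regVal D₁ D₂ f).Nonempty) {v : ℂ → ℂ}
    (hv : MemReducedBergman D₁ v) : ∃ u, MemReducedBergman D₂ u ∧
      ∀ y ∈ regVal D₁ D₂ f, u y = Tr D₁ f (fun x => v x / deriv f x) y := by
  obtain ⟨m, hm⟩ := P.exists_degree
  obtain ⟨g, hg, hg'⟩ := hv.2.1
  obtain ⟨G, hG, hG'⟩ := P.exists_Tr_extension hg'
  refine ⟨deriv G, .of_lintegral_lt_top P.o2 (hG.deriv P.o2) ⟨G, hG, fun y hy =>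
    (hG.differentiableAt (P.o2.mem_nhds hy)).hasDerivAt⟩ ?_, hG'⟩
  have hle : ∀ y ∈ regVal D₁ D₂ f,
      ‖deriv G y‖ₑ ^ 2 ≤ m * Tr D₁ f (fun x => ‖v x / deriv f x‖ₑ ^ 2) y := by
    intro y hy
    rw [hG' y hy, P.Tr_eq_sum _ hy.1, P.Tr_eq_sum _ hy.1, ← hm y hy,
      Set.ncard_eq_toFinset_card _ (P.fib_finite hy.1)]
    exact enorm_sum_sq_le _ _
  calc ∫⁻ y in D₂, ‖deriv G y‖ₑ ^ 2
      = ∫⁻ y in regVal D₁ D₂ f, ‖deriv G y‖ₑ ^ 2 := (setLIntegral_congr P.regVal_ae).symm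
    _ ≤ ∫⁻ y in regVal D₁ D₂ f, m * Tr D₁ f (fun x => ‖v x / deriv f x‖ₑ ^ 2) y :=
        setLIntegral_mono' P.regVal_open.measurableSet hle
    _ = m * ∫⁻ x in D₁, ‖deriv f x‖ₑ ^ 2 * ‖v x / deriv f x‖ₑ ^ 2 := by
        rw [setLIntegral_congr P.regVal_ae, lintegral_const_mul' _ _ (ENNReal.natCast_ne_top m),
          P.lintegral_Tr hne]
        refine (ENNReal.continuous_pow 2).comp_continuousOn (ContinuousOn.enorm ?_)
        exact (hv.1.continuousOn.mono inter_subset_left).div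
          (P.diff_deriv.continuousOn.mono inter_subset_left)
          fun x hx => deriv_ne_zero_of_regVal hx.1 hx.2
    _ ≤ m * ∫⁻ x in D₁, ‖v x‖ₑ ^ 2 := by
        gcongr with x
        rw [← mul_pow, ← enorm_mul]
        by_cases h0 : deriv f x = 0
        · simp [h0]
        · rw [mul_div_cancel₀ _ h0]
    _ < ⊤ := ENNReal.mul_lt_top (ENNReal.natCast_lt_top m) hv.lintegral_lt_top

/-- The trace `v ↦ Tr (v / f')` and the pullback `k ↦ f' * (k ∘ f)` are adjoint. -/
lemma integral_pullback (hne : (regVal D₁ D₂ f).Nonempty) {u v k : ℂ → ℂ}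
    (hv : MemReducedBergman D₁ v) (hu : MemReducedBergman D₂ u) (hk : MemReducedBergman D₂ k)
    (huv : ∀ y ∈ regVal D₁ D₂ f, u y = Tr D₁ f (fun x => v x / deriv f x) y) :
    ∫ x in D₁, v x * (starRingEnd ℂ) (deriv f x * k (f x)) =
      ∫ y in D₂, u y * (starRingEnd ℂ) (k y) := by
  have hpt : ∀ x, ((‖deriv f x‖ ^ 2 : ℝ) : ℂ) *
      (v x / deriv f x * (starRingEnd ℂ) (k (f x))) =
        v x * (starRingEnd ℂ) (deriv f x * k (f x)) := by
    intro x
    rw [← Complex.normSq_eq_norm_sq, ← Complex.mul_conj, map_mul]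
    by_cases h0 : deriv f x = 0
    · simp [h0]
    · field_simp
  have hTr : ∀ y ∈ regVal D₁ D₂ f, u y * (starRingEnd ℂ) (k y) =
      Tr D₁ f (fun x => v x / deriv f x * (starRingEnd ℂ) (k (f x))) y := by
    intro y hy
    rw [huv y hy, P.Tr_eq_sum _ hy.1, P.Tr_eq_sum _ hy.1, Finset.sum_mul]
    refine Finset.sum_congr rfl fun x hx => ?_
    rw [Finite.mem_toFinset] at hx
    rw [show f x = y from hx.2]
  have hint1 := hv.integrableOn_mul_conj P.o1 (P.memReducedBergman_pullback hne hk)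
  have hint2 := hu.integrableOn_mul_conj P.o2 hk
  have hint3 : IntegrableOn
      (Tr D₁ f (fun x => v x / deriv f x * (starRingEnd ℂ) (k (f x)))) D₂ :=
    IntegrableOn.congr_set_ae ((hint2.mono_set sdiff_subset).congr_fun hTr
      P.regVal_open.measurableSet) P.regVal_ae.symm
  rw [← setIntegral_congr_set P.regVal_ae, setIntegral_congr_fun P.regVal_open.measurableSet hTr,
    setIntegral_congr_set P.regVal_ae, P.integral_Tr hne (by simpa only [hpt] using hint1) hint3]
  simp only [hpt]

end ProperHol

/-- Transformation formula for reduced Bergman kernels under a proper holomorphic map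
between bounded planar domains, written via fibers. -/
theorem reducedBergman_transformation (D₁ D₂ : Set ℂ)
    (hD₁o : IsOpen D₁) (hD₁c : IsConnected D₁) (hD₁b : Bornology.IsBounded D₁)
    (hD₂o : IsOpen D₂) (hD₂c : IsConnected D₂) (hD₂b : Bornology.IsBounded D₂)
    (f : ℂ → ℂ) (hf : DifferentiableOn ℂ f D₁) (hmaps : Set.MapsTo f D₁ D₂)
    (hproper : ∀ K : Set ℂ, K ⊆ D₂ → IsCompact K → IsCompact (D₁ ∩ f ⁻¹' K))
    (K₁ K₂ : ℂ → ℂ → ℂ)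
    (hK₁ : IsReducedBergmanKernel D₁ K₁) (hK₂ : IsReducedBergmanKernel D₂ K₂)
    (z w : ℂ) (hz : z ∈ D₁) (hw : w ∈ D₂)
    (hw_ncv : ∀ η ∈ D₁, f η = w → deriv f η ≠ 0) :
    deriv f z * K₂ (f z) w =
      ∑ᶠ η ∈ D₁ ∩ f ⁻¹' {w}, K₁ z η / (starRingEnd ℂ) (deriv f η) := by
  have P : ProperHol D₁ D₂ f := ⟨hD₁o, hD₁c, hD₁b, hD₂o, hD₂c, hf, hmaps, hproper⟩
  have hwR : w ∈ regVal D₁ D₂ f := ⟨hw, by rintro ⟨x, hx, hxw⟩; exact hw_ncv x hx.1 hxw hx.2⟩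
  have hne : (regVal D₁ D₂ f).Nonempty := ⟨w, hwR⟩
  have hfin := P.fib_finite hw
  have hS : ∀ η ∈ hfin.toFinset, η ∈ D₁ := fun η hη => by
    rw [Finite.mem_toFinset] at hη
    exact hη.1
  have hk := (hK₂ w hw).1
  have h1 := P.memReducedBergman_pullback hne hk
  have hterm : ∀ η ∈ hfin.toFinset, MemReducedBergman D₁
      (fun x => ((starRingEnd ℂ) (deriv f η))⁻¹ * K₁ x η) := fun η hη =>
    (hK₁ η (hS η hη)).1.const_mul hD₁o _
  have h2 := MemReducedBergman.sum hD₁o hfin.toFinset hterm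
  -- both sides represent the functional `v ↦ Tr (v / f') w`
  have hrep1 : ∀ v, MemReducedBergman D₁ v →
      ∫ x in D₁, v x * (starRingEnd ℂ) (deriv f x * K₂ (f x) w) =
        ∑ η ∈ hfin.toFinset, v η / deriv f η := by
    intro v hv
    obtain ⟨u, hu, huv⟩ := P.exists_memReducedBergman_trace hne hv
    rw [P.integral_pullback hne hv hu hk huv, ← (hK₂ w hw).2 u hu, huv w hwR, P.Tr_eq_sum _ hw]
  have hrep2 : ∀ v, MemReducedBergman D₁ v →
      ∫ x in D₁, v x * (starRingEnd ℂ)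
        (∑ η ∈ hfin.toFinset, ((starRingEnd ℂ) (deriv f η))⁻¹ * K₁ x η) =
        ∑ η ∈ hfin.toFinset, v η / deriv f η := by
    intro v hv
    simp only [map_sum, Finset.mul_sum]
    rw [integral_finsetSum _ fun η hη => hv.integrableOn_mul_conj hD₁o (hterm η hη)]
    refine Finset.sum_congr rfl fun η hη => ?_
    rw [(hK₁ η (hS η hη)).2 v hv, div_eq_mul_inv, ← integral_mul_const]
    congr 1
    ext x
    simp only [map_mul, map_inv₀, Complex.conj_conj]
    ring
  -- hence their difference is orthogonal to itself
  have hd := h1.sub hD₁o h2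
  have hzero := hd.eq_zero hD₁o (by
    have e : ∀ x, (deriv f x * K₂ (f x) w -
        ∑ η ∈ hfin.toFinset, ((starRingEnd ℂ) (deriv f η))⁻¹ * K₁ x η) *
        (starRingEnd ℂ) (deriv f x * K₂ (f x) w -
        ∑ η ∈ hfin.toFinset, ((starRingEnd ℂ) (deriv f η))⁻¹ * K₁ x η) =
        (deriv f x * K₂ (f x) w -
        ∑ η ∈ hfin.toFinset, ((starRingEnd ℂ) (deriv f η))⁻¹ * K₁ x η) *
        (starRingEnd ℂ) (deriv f x * K₂ (f x) w) - (deriv f x * K₂ (f x) w -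
        ∑ η ∈ hfin.toFinset, ((starRingEnd ℂ) (deriv f η))⁻¹ * K₁ x η) *
        (starRingEnd ℂ) (∑ η ∈ hfin.toFinset, ((starRingEnd ℂ) (deriv f η))⁻¹ * K₁ x η) := by
      intro x
      rw [map_sub, mul_sub]
    simp only [e]
    rw [integral_sub (hd.integrableOn_mul_conj hD₁o h1) (hd.integrableOn_mul_conj hD₁o h2),
      hrep1 _ hd, hrep2 _ hd, sub_self]) z hz
  rw [sub_eq_zero.1 hzero]
  change _ = ∑ᶠ η ∈ fib D₁ f w, K₁ z η / (starRingEnd ℂ) (deriv f η)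
  rw [finsum_mem_eq_finite_toFinset_sum _ hfin]
  exact Finset.sum_congr rfl fun η _ => by rw [div_eq_inv_mul]
end
end

section
/- Let D₁ and D₂ be bounded domains in ℂ, let ν be a weight on D₂, and let f : D₁ → D₂ be a proper holomorphic map. Then ν∘f is a weight on D₁, and denoting by K̃₁^{ν∘f} the weighted reduced Bergman kernel of D₁ with weight ν∘f and by K̃₂^ν the weighted reduced Bergman kernel of D₂ with weight ν, for every z ∈ D₁ and every w ∈ D₂ which is not a critical value of f one has f′(z)·K̃₂^ν(f(z), w) = ∑_{η ∈ f⁻¹(w)} K̃₁^{ν∘f}(z, η) / conj(f′(η)). -/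
/-!
Write `ν₁ = ν ∘ f`, let `V` be the set of critical values of `f`, and let `w ∉ V`. The identity
says that pull-back and trace are adjoint to each other. If `u` is in the weighted reduced Bergman
space of `D₁`, its trace `Λu(ζ) = ∑ u(η) / f'(η)`, summed over the fiber `f η = ζ`, is in the space
of `D₂`; if `k` is in the space of `D₂`, then `f' · (k ∘ f)` is in the space of `D₁`; and
`⟨u, f' · (k ∘ f)⟩ = ⟨Λu, k⟩`. With `k = K₂(·, w)` the right side is `Λu(w) = ∑ u(η) / f'(η)` by the
reproducing property on `D₂`, which by the reproducing property on `D₁` is also the pairing of `u`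
with `∑ K₁(·, η) / conj f'(η)`. So the difference of the two sides of the formula lies in the space
of `D₁` and is orthogonal to that space, hence vanishes.

A nonconstant proper `f` has finite fibers, `V` has no accumulation point in `D₂`, and over a
neighborhood of each regular value `D₁` splits into finitely many holomorphic sheets
(`IsProperHol.exists_splits`). The number of sheets is constant (`IsProperHol.exists_ncard_fiber`).
Cutting `D₂ \ V` into countably many pieces over which `f` splits gives the change of variables
`IsProperHol.integral_fiberSum` (the adjointness), the invariance of null sets that makes `ν₁` a
weight (`IsProperHol.isWeight_comp`), and the `L²` bounds. That `Λu` has a primitive and extends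
across `V` is seen at once on a primitive `g` of `u`: the fiber sum of `g` is holomorphic off `V`
with derivative `Λu`, and bounded near `V`, so its singularities are removable
(`IsProperHol.exists_trace`).
-/

open MeasureTheory Complex Metric

noncomputable section

/-- `ν` is a weight on `D`: measurable on `D`, positive on `D`, with `1/ν` locally
essentially bounded, i.e. `ν` essentially bounded below by positive constants on
compact subsets of `D`. -/
def IsWeight (D : Set ℂ) (ν : ℂ → ℝ) : Prop :=
  AEMeasurable ν (volume.restrict D) ∧ (∀ z ∈ D, 0 < ν z) ∧
    ∀ K : Set ℂ, K ⊆ D → IsCompact K → ∃ c > 0, ∀ᵐ z ∂(volume.restrict K), c ≤ ν z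

/-- `u` belongs to the weighted reduced Bergman space of `D` with weight `ν`. -/
def MemWeightedReducedBergman (D : Set ℂ) (ν : ℂ → ℝ) (u : ℂ → ℂ) : Prop :=
  DifferentiableOn ℂ u D ∧ HasPrimitiveOn u D ∧
    IntegrableOn (fun z => ‖u z‖ ^ 2 * ν z) D volume

/-- `K` is the weighted reduced Bergman kernel of `D` with weight `ν`. -/
def IsWeightedReducedBergmanKernel (D : Set ℂ) (ν : ℂ → ℝ) (K : ℂ → ℂ → ℂ) : Prop :=
  ∀ ζ ∈ D, MemWeightedReducedBergman D ν (fun z => K z ζ) ∧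
    ∀ u : ℂ → ℂ, MemWeightedReducedBergman D ν u →
      u ζ = ∫ z in D, u z * (starRingEnd ℂ) (K z ζ) * (ν z : ℂ)


section Aux

open Set Filter Topology

/-! ### Proper holomorphic maps and their critical values -/

/-- `f` is a proper holomorphic map between the domains `D₁` and `D₂`. Properness is expressed
through compact subsets of `D₂`, since `f` is a total function with arbitrary values off `D₁`. -/
structure IsProperHol (D₁ D₂ : Set ℂ) (f : ℂ → ℂ) : Prop where
  o₁ : IsOpen D₁
  c₁ : IsConnected D₁
  o₂ : IsOpen D₂
  c₂ : IsConnected D₂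
  diff : DifferentiableOn ℂ f D₁
  maps : MapsTo f D₁ D₂
  proper : ∀ K : Set ℂ, K ⊆ D₂ → IsCompact K → IsCompact (D₁ ∩ f ⁻¹' K)

/-- The set of critical values of `f` on `D₁`. -/
def critVals (D₁ : Set ℂ) (f : ℂ → ℂ) : Set ℂ := {w | ∃ η ∈ D₁, f η = w ∧ deriv f η = 0}

/-- A subset without accumulation points in an open set is Lebesgue-null there. -/
lemma volume_inter_eq_zero_of_isolated {D A : Set ℂ}
    (h : ∀ z ∈ D, ∀ᶠ x in 𝓝[≠] z, x ∉ A) : volume (A ∩ D) = 0 := by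
  refine measure_null_of_locally_null _ fun x hx => ⟨{x}, ?_, by simp⟩
  have := h x hx.2
  rw [eventually_nhdsWithin_iff] at this
  rw [mem_nhdsWithin_iff_eventually]
  filter_upwards [this] with y hy hyA
  by_contra hne
  exact hy hne hyA.1

lemma finite_inter_of_isolated {D A L : Set ℂ} (hL : IsCompact L) (hLD : L ⊆ D)
    (h : ∀ z ∈ D, ∀ᶠ x in 𝓝[≠] z, x ∉ A) : (A ∩ L).Finite := by
  by_contra hinf
  obtain ⟨x, hxL, hx⟩ := Set.Infinite.exists_accPt_of_subset_isCompact hinf hL inter_subset_right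
  rw [accPt_iff_frequently] at hx
  have := h x (hLD hxL)
  rw [eventually_nhdsWithin_iff] at this
  obtain ⟨y, hy, hy'⟩ := (hx.and_eventually this).exists
  exact hy' hy.1 hy.2.1

namespace IsProperHol

variable {D₁ D₂ : Set ℂ} {f : ℂ → ℂ}

lemma analyticAt (h : IsProperHol D₁ D₂ f) {z : ℂ} (hz : z ∈ D₁) : AnalyticAt ℂ f z :=
  h.diff.analyticAt (h.o₁.mem_nhds hz)

/-- A proper holomorphic map is nonconstant (a constant map would have a compact open fiber `D₁`),
so by the identity theorem its critical points do not accumulate in `D₁`. -/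
lemma eventually_deriv_ne (h : IsProperHol D₁ D₂ f) {z : ℂ} (hz : z ∈ D₁) :
    ∀ᶠ x in 𝓝[≠] z, deriv f x ≠ 0 := by
  have han : AnalyticOnNhd ℂ (deriv f) D₁ := fun x hx => (h.analyticAt hx).deriv
  rcases (han z hz).eventually_eq_zero_or_eventually_ne_zero with h0 | h0
  · exfalso
    have hz0 := han.eqOn_zero_of_preconnected_of_eventuallyEq_zero h.c₁.isPreconnected hz h0
    have hc := fun {x y} => h.o₁.is_const_of_deriv_eq_zero h.c₁.isPreconnected h.diff hz0
      (x := x) (y := y)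
    have hcomp := h.proper {f z} (by simpa using h.maps hz) isCompact_singleton
    have heq : D₁ ∩ f ⁻¹' {f z} = D₁ := by
      ext x; simp only [mem_inter_iff, mem_preimage, mem_singleton_iff, and_iff_left_iff_imp]
      exact fun hx => hc hx hz
    rw [heq] at hcomp
    have huniv : D₁ = univ := IsClopen.eq_univ ⟨hcomp.isClosed, h.o₁⟩ ⟨z, hz⟩
    rw [huniv] at hcomp
    exact noncompact_univ ℂ hcomp
  · exact h0

lemma eventually_ne_const (h : IsProperHol D₁ D₂ f) {z : ℂ} (hz : z ∈ D₁) (w : ℂ) :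
    ∀ᶠ x in 𝓝[≠] z, f x ≠ w := by
  rcases (h.analyticAt hz).eventually_eq_or_eventually_ne (analyticAt_const (v := w)) with h0 | h0
  · exfalso
    have h1 : ∀ᶠ x in 𝓝 z, deriv f x = 0 := by
      filter_upwards [h0.eventually_nhds] with x hx
      have : f =ᶠ[𝓝 x] fun _ => w := hx
      rw [this.deriv_eq]; simp
    have h2 := (h.eventually_deriv_ne hz).and (h1.filter_mono nhdsWithin_le_nhds)
    obtain ⟨x, hx, hx'⟩ := h2.exists
    exact hx hx'
  · exact h0

lemma fiber_finite (h : IsProperHol D₁ D₂ f) {w : ℂ} (hw : w ∈ D₂) :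
    (D₁ ∩ f ⁻¹' {w}).Finite := by
  have := finite_inter_of_isolated (D := D₁) (A := f ⁻¹' {w})
    (h.proper {w} (by simpa using hw) isCompact_singleton) inter_subset_left
    (fun z hz => by simpa using h.eventually_ne_const hz w)
  exact this.subset fun x hx => ⟨hx.2, hx⟩

/-- Critical values do not accumulate in `D₂`: over a compact neighborhood there are only finitely
many critical points. -/
lemma eventually_not_mem_critVals (h : IsProperHol D₁ D₂ f) {w : ℂ} (hw : w ∈ D₂) :
    ∀ᶠ x in 𝓝[≠] w, x ∉ critVals D₁ f := by
  obtain ⟨r, hr, hrD⟩ := nhds_basis_closedBall.mem_iff.1 (h.o₂.mem_nhds hw)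
  have hfin := finite_inter_of_isolated (D := D₁) (A := {x | deriv f x = 0})
    (h.proper _ hrD (isCompact_closedBall w r)) inter_subset_left
    (fun z hz => by simpa using h.eventually_deriv_ne hz)
  have hfin2 : (critVals D₁ f ∩ closedBall w r).Finite := by
    refine (hfin.image f).subset ?_
    rintro _ ⟨⟨η, hη, rfl, hd⟩, hb⟩
    exact ⟨η, ⟨hd, hη, hb⟩, rfl⟩
  have h1 : ∀ᶠ x in 𝓝[≠] w, x ∉ (critVals D₁ f ∩ closedBall w r) \ {w} :=
    nhdsWithin_le_nhds <| (hfin2.subset sdiff_subset).isClosed.isOpen_compl.mem_nhds (by simp)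
  have h2 : ∀ᶠ x in 𝓝[≠] w, x ∈ closedBall w r :=
    nhdsWithin_le_nhds (closedBall_mem_nhds w hr)
  filter_upwards [h1, h2, self_mem_nhdsWithin] with x hx hxb hne hxc
  exact hx ⟨⟨hxc, hxb⟩, hne⟩

lemma isOpen_regular (h : IsProperHol D₁ D₂ f) : IsOpen (D₂ \ critVals D₁ f) := by
  rw [isOpen_iff_mem_nhds]
  rintro w ⟨hw, hwc⟩
  have h1 := h.eventually_not_mem_critVals hw
  rw [eventually_nhdsWithin_iff] at h1
  filter_upwards [h1, h.o₂.mem_nhds hw] with x hx hxD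
  refine ⟨hxD, ?_⟩
  by_cases hxw : x = w
  · rwa [hxw]
  · exact hx hxw

lemma volume_critVals (h : IsProperHol D₁ D₂ f) : volume (critVals D₁ f ∩ D₂) = 0 :=
  volume_inter_eq_zero_of_isolated fun _ hz => h.eventually_not_mem_critVals hz

lemma volume_preimage_critVals (h : IsProperHol D₁ D₂ f) :
    volume (f ⁻¹' critVals D₁ f ∩ D₁) = 0 := by
  refine volume_inter_eq_zero_of_isolated fun z hz => ?_
  have h1 : Tendsto f (𝓝[≠] z) (𝓝[≠] (f z)) :=
    tendsto_nhdsWithin_iff.2 ⟨(h.analyticAt hz).continuousAt.tendsto.mono_left nhdsWithin_le_nhds,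
      h.eventually_ne_const hz (f z)⟩
  exact h1.eventually (h.eventually_not_mem_critVals (h.maps hz))

/-- Properness makes fibers upper semicontinuous: fibers near `w` lie in any given neighborhood
of the fiber over `w`. -/
lemma eventually_fiber_subset (h : IsProperHol D₁ D₂ f) {w : ℂ} (hw : w ∈ D₂) {O : Set ℂ}
    (hO : IsOpen O) (hwO : D₁ ∩ f ⁻¹' {w} ⊆ O) :
    ∀ᶠ ζ in 𝓝 w, ∀ z ∈ D₁, f z = ζ → z ∈ O := by
  obtain ⟨r, hr, hrD⟩ := nhds_basis_closedBall.mem_iff.1 (h.o₂.mem_nhds hw)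
  have hL := (h.proper _ hrD (isCompact_closedBall w r)).diff hO
  have hfL : IsCompact (f '' ((D₁ ∩ f ⁻¹' closedBall w r) \ O)) :=
    hL.image_of_continuousOn (h.diff.continuousOn.mono fun x hx => hx.1.1)
  have hwn : w ∉ f '' ((D₁ ∩ f ⁻¹' closedBall w r) \ O) := by
    rintro ⟨z, ⟨⟨hz, _⟩, hzO⟩, hzw⟩
    exact hzO (hwO ⟨hz, hzw⟩)
  filter_upwards [hfL.isClosed.isOpen_compl.mem_nhds hwn, closedBall_mem_nhds w hr] with ζ h1 h2
  intro z hz hzζ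
  by_contra hzO
  exact h1 ⟨z, ⟨⟨hz, by simpa [hzζ] using h2⟩, hzO⟩, hzζ⟩

end IsProperHol

/-! ### Local sections over the regular values -/

/-- Over `B` the map `f` splits into the finitely many holomorphic sections `F η`, `η ∈ S`:
these are local inverses of `f` whose values at each `ζ ∈ B` list the fiber over `ζ` without
repetition. -/
structure Splits (D₁ : Set ℂ) (f : ℂ → ℂ) (B : Set ℂ) (S : Finset ℂ) (F : ℂ → ℂ → ℂ) : Prop where
  mem : ∀ η ∈ S, ∀ ζ ∈ B, F η ζ ∈ D₁
  right_inv : ∀ η ∈ S, ∀ ζ ∈ B, f (F η ζ) = ζ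
  deriv_ne : ∀ η ∈ S, ∀ ζ ∈ B, deriv f (F η ζ) ≠ 0
  hasDerivAt : ∀ η ∈ S, ∀ ζ ∈ B, HasDerivAt (F η) (deriv f (F η ζ))⁻¹ ζ
  inj : ∀ ζ ∈ B, InjOn (fun η => F η ζ) S
  surj : ∀ ζ ∈ B, ∀ z ∈ D₁, f z = ζ → ∃ η ∈ S, F η ζ = z

/-- Sum of `φ` over the fiber of `f` over `ζ`. -/
def fiberSum (D₁ : Set ℂ) (f : ℂ → ℂ) {E : Type*} [AddCommMonoid E] (φ : ℂ → E) (ζ : ℂ) : E :=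
  ∑ᶠ z ∈ D₁ ∩ f ⁻¹' {ζ}, φ z

namespace Splits

variable {D₁ B B' : Set ℂ} {f : ℂ → ℂ} {S : Finset ℂ} {F : ℂ → ℂ → ℂ}

lemma mono (hs : Splits D₁ f B S F) (hB : B' ⊆ B) : Splits D₁ f B' S F where
  mem η hη ζ hζ := hs.mem η hη ζ (hB hζ)
  right_inv η hη ζ hζ := hs.right_inv η hη ζ (hB hζ)
  deriv_ne η hη ζ hζ := hs.deriv_ne η hη ζ (hB hζ)
  hasDerivAt η hη ζ hζ := hs.hasDerivAt η hη ζ (hB hζ)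
  inj ζ hζ := hs.inj ζ (hB hζ)
  surj ζ hζ := hs.surj ζ (hB hζ)

lemma fiber_eq (hs : Splits D₁ f B S F) {ζ : ℂ} (hζ : ζ ∈ B) :
    D₁ ∩ f ⁻¹' {ζ} = (fun η => F η ζ) '' S := by
  ext z
  constructor
  · rintro ⟨hz, hzζ⟩
    obtain ⟨η, hη, rfl⟩ := hs.surj ζ hζ z hz hzζ
    exact ⟨η, hη, rfl⟩
  · rintro ⟨η, hη, rfl⟩
    exact ⟨hs.mem η hη ζ hζ, hs.right_inv η hη ζ hζ⟩

lemma fiberSum_eq {E : Type*} [AddCommMonoid E] (hs : Splits D₁ f B S F) {ζ : ℂ} (hζ : ζ ∈ B)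
    (φ : ℂ → E) : fiberSum D₁ f φ ζ = ∑ η ∈ S, φ (F η ζ) := by
  rw [fiberSum, hs.fiber_eq hζ, finsum_mem_image (hs.inj ζ hζ)]
  exact finsum_mem_coe_finset _ _

lemma ncard_fiber (hs : Splits D₁ f B S F) {ζ : ℂ} (hζ : ζ ∈ B) :
    (D₁ ∩ f ⁻¹' {ζ}).ncard = S.card := by
  rw [hs.fiber_eq hζ, (hs.inj ζ hζ).ncard_image, Set.ncard_coe_finset]

end Splits

namespace IsProperHol

variable {D₁ D₂ : Set ℂ} {f : ℂ → ℂ}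

/-- A local inverse of `f` at a noncritical point, with all the properties that hold nearby. -/
lemma exists_local_inverse (h : IsProperHol D₁ D₂ f) {η : ℂ} (hη : η ∈ D₁)
    (hd : deriv f η ≠ 0) : ∃ G : ℂ → ℂ, G (f η) = η ∧
      (∀ᶠ z in 𝓝 η, G (f z) = z) ∧ (∀ᶠ ζ in 𝓝 (f η), f (G ζ) = ζ) ∧
      (∀ᶠ ζ in 𝓝 (f η), ContinuousAt G ζ) := by
  have hs : HasStrictDerivAt f (deriv f η) η := (h.analyticAt hη).hasStrictDerivAt
  have hs' := hs.hasStrictFDerivAt_equiv hd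
  let e := hs'.toOpenPartialHomeomorph f
  have hmem : η ∈ e.source := hs'.mem_toOpenPartialHomeomorph_source
  have hmem' : f η ∈ e.target := hs'.image_mem_toOpenPartialHomeomorph_target
  refine ⟨e.symm, e.left_inv hmem, e.eventually_left_inverse hmem,
    e.eventually_right_inverse hmem', ?_⟩
  filter_upwards [e.open_target.mem_nhds hmem'] with ζ hζ
  exact e.continuousAt_symm hζ

lemma exists_splits (h : IsProperHol D₁ D₂ f) {w : ℂ} (hw : w ∈ D₂ \ critVals D₁ f) :
    ∃ W, IsOpen W ∧ w ∈ W ∧ W ⊆ D₂ \ critVals D₁ f ∧ ∃ S F, Splits D₁ f W S F := by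
  have hfin := h.fiber_finite hw.1
  have hex : ∀ η : ℂ, ∃ G : ℂ → ℂ, η ∈ D₁ ∩ f ⁻¹' {w} → G w = η ∧
      (∀ᶠ z in 𝓝 η, G (f z) = z) ∧ (∀ᶠ ζ in 𝓝 w, f (G ζ) = ζ) ∧
      (∀ᶠ ζ in 𝓝 w, ContinuousAt G ζ) := by
    intro η
    by_cases hη : η ∈ D₁ ∩ f ⁻¹' {w}
    · obtain ⟨hη, rfl⟩ := hη
      obtain ⟨G, hG⟩ := h.exists_local_inverse hη fun h0 => hw.2 ⟨η, hη, rfl, h0⟩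
      exact ⟨G, fun _ => hG⟩
    · exact ⟨id, fun h => absurd h hη⟩
  choose F hF using hex
  let S := hfin.toFinset
  have hS : ∀ η ∈ S, η ∈ D₁ ∩ f ⁻¹' {w} := fun η hη => hfin.mem_toFinset.1 hη
  have hcont : ∀ η ∈ S, ContinuousAt (F η) w := fun η hη => (hF η (hS η hη)).2.2.2.self_of_nhds
  let O : Set ℂ := interior {z | ∃ η ∈ S, F η (f z) = z}
  have hO : D₁ ∩ f ⁻¹' {w} ⊆ O := by
    intro η hη
    rw [mem_interior_iff_mem_nhds]
    filter_upwards [(hF η hη).2.1] with z hz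
    exact ⟨η, hfin.mem_toFinset.2 hη, hz⟩
  have e1 := h.eventually_fiber_subset hw.1 isOpen_interior hO
  have e2 : ∀ᶠ ζ in 𝓝 w, ∀ η ∈ S, F η ζ ∈ D₁ := by
    rw [Filter.eventually_all_finset]
    intro η hη
    refine (hcont η hη).eventually_mem (h.o₁.mem_nhds ?_)
    rw [(hF η (hS η hη)).1]; exact (hS η hη).1
  have e3 : ∀ᶠ ζ in 𝓝 w, ∀ η ∈ S, f (F η ζ) = ζ := by
    rw [Filter.eventually_all_finset]
    exact fun η hη => (hF η (hS η hη)).2.2.1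
  have e4 : ∀ᶠ ζ in 𝓝 w, ∀ η ∈ S, ContinuousAt (F η) ζ := by
    rw [Filter.eventually_all_finset]
    exact fun η hη => (hF η (hS η hη)).2.2.2
  have e5 : ∀ᶠ ζ in 𝓝 w, ∀ η ∈ S, ∀ η' ∈ S, η ≠ η' → F η ζ ≠ F η' ζ := by
    rw [Filter.eventually_all_finset]; intro η hη
    rw [Filter.eventually_all_finset]; intro η' hη'
    by_cases hne : η = η'
    · simp [hne]
    · have := ((hcont η hη).ne_iff_eventually_ne (hcont η' hη')).1
        (by rwa [(hF η (hS η hη)).1, (hF η' (hS η' hη')).1])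
      filter_upwards [this] with ζ hζ _ using hζ
  have e6 : ∀ᶠ ζ in 𝓝 w, ζ ∈ D₂ \ critVals D₁ f := h.isOpen_regular.mem_nhds hw
  obtain ⟨W, hW, hWo, hwW⟩ := _root_.eventually_nhds_iff.1
    (e1.and (e2.and (e3.and (e4.and (e5.and e6)))))
  have hdn : ∀ η ∈ S, ∀ ζ ∈ W, deriv f (F η ζ) ≠ 0 := fun η hη ζ hζ h0 => by
    obtain ⟨-, b2, b3, -, -, b6⟩ := hW ζ hζ
    exact b6.2 ⟨_, b2 η hη, b3 η hη, h0⟩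
  refine ⟨W, hWo, hwW, fun ζ hζ => (hW ζ hζ).2.2.2.2.2, S, F, ?_, ?_, hdn, ?_, ?_, ?_⟩
  · exact fun η hη ζ hζ => (hW ζ hζ).2.1 η hη
  · exact fun η hη ζ hζ => (hW ζ hζ).2.2.1 η hη
  · intro η hη ζ hζ
    refine HasDerivAt.of_local_left_inverse ((hW ζ hζ).2.2.2.1 η hη)
      (h.analyticAt ((hW ζ hζ).2.1 η hη)).differentiableAt.hasDerivAt (hdn η hη ζ hζ) ?_
    filter_upwards [hWo.mem_nhds hζ] with y hy using (hW y hy).2.2.1 η hη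
  · intro ζ hζ η hη η' hη' heq
    by_contra hne
    exact (hW ζ hζ).2.2.2.2.1 η hη η' hη' hne heq
  · intro ζ hζ z hz hzζ
    obtain ⟨η, hη, hηz⟩ := interior_subset ((hW ζ hζ).1 z hz hzζ)
    exact ⟨η, hη, by rw [← hzζ]; exact hηz⟩

/-! ### Constancy of the number of sheets -/

/-- A punctured disc is the image of a rectangle in polar coordinates. -/
lemma isPreconnected_punctured_ball (w : ℂ) (r : ℝ) : IsPreconnected (ball w r \ {w}) := by
  have : ball w r \ {w} =
      (fun p : ℝ × ℝ => w + p.1 * Complex.exp (p.2 * Complex.I)) '' (Ioo 0 r ×ˢ univ) := by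
    ext x
    simp only [Set.mem_sdiff, mem_ball, mem_singleton_iff, mem_image, mem_prod, mem_Ioo, mem_univ,
      and_true, Prod.exists, dist_eq_norm]
    constructor
    · rintro ⟨h1, h2⟩
      exact ⟨‖x - w‖, (x - w).arg, ⟨norm_pos_iff.2 (sub_ne_zero.2 h2), h1⟩, by
        rw [Complex.norm_mul_exp_arg_mul_I]; ring⟩
    · rintro ⟨ρ, θ, ⟨h1, h2⟩, rfl⟩
      refine ⟨?_, ?_⟩
      · simpa [Complex.norm_exp_ofReal_mul_I, abs_of_pos h1] using h2
      · simp [h1.ne']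
  rw [this]
  refine IsPreconnected.image (isPreconnected_Ioo.prod isPreconnected_univ) _ ?_
  fun_prop

/-- All regular fibers have the same number of points. The count is locally constant on the
regular values; it is constant on a punctured disc around each critical value, hence extends to a
locally constant function on the connected set `D₂`. -/
lemma exists_ncard_fiber (h : IsProperHol D₁ D₂ f) :
    ∃ m : ℕ, ∀ ζ ∈ D₂ \ critVals D₁ f, (D₁ ∩ f ⁻¹' {ζ}).ncard = m := by
  set n : ℂ → ℕ := fun ζ => (D₁ ∩ f ⁻¹' {ζ}).ncard with hn
  have hloc : ∀ ζ ∈ D₂ \ critVals D₁ f, ∀ᶠ x in 𝓝 ζ, n x = n ζ := by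
    intro ζ hζ
    obtain ⟨W, hWo, hζW, -, S, F, hs⟩ := h.exists_splits hζ
    filter_upwards [hWo.mem_nhds hζW] with x hx
    simp only [hn]
    rw [hs.ncard_fiber hx, hs.ncard_fiber hζW]
  have hcont : ContinuousOn n (D₂ \ critVals D₁ f) := fun ζ hζ =>
    ((continuousAt_const (y := n ζ)).congr
      (by filter_upwards [hloc ζ hζ] with x hx using hx.symm)).continuousWithinAt
  have hpunct : ∀ ζ ∈ D₂, ∃ k, ∀ᶠ x in 𝓝[≠] ζ, n x = k := by
    intro ζ hζ
    have h1 : ∀ᶠ x in 𝓝[≠] ζ, x ∈ D₂ \ critVals D₁ f := by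
      filter_upwards [h.eventually_not_mem_critVals hζ,
        nhdsWithin_le_nhds (h.o₂.mem_nhds hζ)] with x hx hx' using ⟨hx', hx⟩
    obtain ⟨r, hr, hr'⟩ := Metric.mem_nhdsWithin_iff.1 h1
    have hpc := fun {x y} => (isPreconnected_punctured_ball ζ r).constant (hcont.mono hr')
      (x := x) (y := y)
    have hmem : ∀ᶠ x in 𝓝[≠] ζ, x ∈ ball ζ r \ {ζ} := by
      filter_upwards [self_mem_nhdsWithin, nhdsWithin_le_nhds (ball_mem_nhds ζ hr)] with x hx hx'
      exact ⟨hx', hx⟩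
    obtain ⟨x₀, hx₀⟩ := hmem.exists
    exact ⟨n x₀, hmem.mono fun x hx => hpc hx hx₀⟩
  choose! N hN using hpunct
  have hNcont : ContinuousOn N D₂ := by
    intro ζ hζ
    have h1 : ∀ᶠ x in 𝓝[≠] ζ, N x = N ζ := by
      filter_upwards [eventually_eventually_nhdsWithin.2 (hN ζ hζ), self_mem_nhdsWithin,
        nhdsWithin_le_nhds (h.o₂.mem_nhds hζ)] with x hx hne hxD
      have hx' : ∀ᶠ y in 𝓝 x, n y = N ζ := by
        rwa [IsOpen.nhdsWithin_eq isOpen_compl_singleton hne] at hx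
      obtain ⟨y, hy, hy'⟩ := ((hN x hxD).and (hx'.filter_mono nhdsWithin_le_nhds)).exists
      rw [← hy, hy']
    have h2 : ∀ᶠ x in 𝓝 ζ, N x = N ζ := by
      rw [eventually_nhdsWithin_iff] at h1
      filter_upwards [h1] with x hx
      by_cases hxz : x = ζ
      · rw [hxz]
      · exact hx hxz
    exact ((continuousAt_const (y := N ζ)).congr
      (by filter_upwards [h2] with x hx using hx.symm)).continuousWithinAt
  obtain ⟨ζ₀, hζ₀⟩ := h.c₂.nonempty
  refine ⟨N ζ₀, fun ζ hζ => ?_⟩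
  rw [← h.c₂.isPreconnected.constant hNcont hζ.1 hζ₀]
  obtain ⟨y, hy, hy'⟩ := ((hN ζ hζ.1).and ((hloc ζ hζ).filter_mono nhdsWithin_le_nhds)).exists
  rw [← hy, hy']

end IsProperHol

/-! ### Change of variables along the fibers -/

namespace Splits

variable {D₁ B : Set ℂ} {f : ℂ → ℂ} {S : Finset ℂ} {F : ℂ → ℂ → ℂ}
variable {E : Type*} [NormedAddCommGroup E] [NormedSpace ℝ E]

lemma injOn_section (hs : Splits D₁ f B S F) {η : ℂ} (hη : η ∈ S) : InjOn (F η) B :=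
  fun ζ hζ ζ' hζ' he => by rw [← hs.right_inv η hη ζ hζ, he, hs.right_inv η hη ζ' hζ']

/-- The real Jacobian determinant of the section `F η` at `ζ` is `|f' (F η ζ)|⁻²`. -/
lemma abs_det_section (f : ℂ → ℂ) (z : ℂ) :
    |((ContinuousLinearMap.toSpanSingleton ℂ (deriv f z)⁻¹).restrictScalars ℝ).det| =
      (‖deriv f z‖ ^ 2)⁻¹ := by
  simp [ContinuousLinearMap.det, LinearMap.det_restrictScalars,
      Algebra.norm_complex_eq, Complex.normSq_eq_norm_sq]

lemma hasFDerivWithinAt_section (hs : Splits D₁ f B S F) {η : ℂ} (hη : η ∈ S) :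
    ∀ ζ ∈ B, HasFDerivWithinAt (F η)
      ((ContinuousLinearMap.toSpanSingleton ℂ (deriv f (F η ζ))⁻¹).restrictScalars ℝ) B ζ :=
  fun ζ hζ => ((hs.hasDerivAt η hη ζ hζ).hasFDerivAt.restrictScalars ℝ).hasFDerivWithinAt

lemma integrableOn_section (hs : Splits D₁ f B S F) (hB : MeasurableSet B) {η : ℂ} (hη : η ∈ S)
    (Φ : ℂ → E) : IntegrableOn Φ (F η '' B) ↔
      IntegrableOn (fun ζ => (‖deriv f (F η ζ)‖ ^ 2)⁻¹ • Φ (F η ζ)) B := by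
  rw [integrableOn_image_iff_integrableOn_abs_det_fderiv_smul volume hB
    (hs.hasFDerivWithinAt_section hη) (hs.injOn_section hη)]
  simp only [abs_det_section]

lemma setIntegral_section (hs : Splits D₁ f B S F) (hB : MeasurableSet B) {η : ℂ} (hη : η ∈ S)
    (Φ : ℂ → E) : ∫ z in F η '' B, Φ z =
      ∫ ζ in B, (‖deriv f (F η ζ)‖ ^ 2)⁻¹ • Φ (F η ζ) := by
  rw [integral_image_eq_integral_abs_det_fderiv_smul volume hB
    (hs.hasFDerivWithinAt_section hη) (hs.injOn_section hη)]
  simp only [abs_det_section]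

lemma measurableSet_section (hs : Splits D₁ f B S F) (hB : MeasurableSet B) {η : ℂ} (hη : η ∈ S) :
    MeasurableSet (F η '' B) :=
  hB.image_of_continuousOn_injOn
    (fun ζ hζ => (hs.hasDerivAt η hη ζ hζ).continuousAt.continuousWithinAt) (hs.injOn_section hη)

lemma preimage_eq (hs : Splits D₁ f B S F) : D₁ ∩ f ⁻¹' B = ⋃ η ∈ S, F η '' B := by
  ext z
  simp only [mem_inter_iff, mem_preimage, mem_iUnion, mem_image, exists_prop]
  constructor
  · rintro ⟨hz, hzB⟩
    obtain ⟨η, hη, he⟩ := hs.surj _ hzB z hz rfl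
    exact ⟨η, hη, _, hzB, he⟩
  · rintro ⟨η, hη, ζ, hζ, rfl⟩
    exact ⟨hs.mem η hη ζ hζ, by rwa [hs.right_inv η hη ζ hζ]⟩

lemma pairwise_disjoint_section (hs : Splits D₁ f B S F) :
    (S : Set ℂ).Pairwise (Function.onFun Disjoint fun η => F η '' B) := by
  intro η hη η' hη' hne
  refine Set.disjoint_left.2 ?_
  rintro _ ⟨ζ, hζ, rfl⟩ ⟨ζ', hζ', he⟩
  have : ζ' = ζ := by
    rw [← hs.right_inv η hη ζ hζ, ← he, hs.right_inv η' hη' ζ' hζ']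
  subst this
  exact hne (hs.inj ζ' hζ hη hη' he.symm)

lemma measurableSet_preimage (hs : Splits D₁ f B S F) (hB : MeasurableSet B) :
    MeasurableSet (D₁ ∩ f ⁻¹' B) := by
  rw [hs.preimage_eq]
  exact Finset.measurableSet_biUnion _ fun η hη => hs.measurableSet_section hB hη

/-- Change of variables over a set where `f` splits: integrate over each sheet separately. -/
lemma integral_fiberSum (hs : Splits D₁ f B S F) (hB : MeasurableSet B) {Φ : ℂ → E}
    (hΦ : IntegrableOn Φ (D₁ ∩ f ⁻¹' B)) :
    IntegrableOn (fiberSum D₁ f fun z => (‖deriv f z‖ ^ 2)⁻¹ • Φ z) B ∧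
      ∫ ζ in B, fiberSum D₁ f (fun z => (‖deriv f z‖ ^ 2)⁻¹ • Φ z) ζ =
        ∫ z in D₁ ∩ f ⁻¹' B, Φ z := by
  have heq : EqOn (fiberSum D₁ f fun z => (‖deriv f z‖ ^ 2)⁻¹ • Φ z)
      (fun ζ => ∑ η ∈ S, (‖deriv f (F η ζ)‖ ^ 2)⁻¹ • Φ (F η ζ)) B :=
    fun ζ hζ => hs.fiberSum_eq hζ _
  rw [hs.preimage_eq, integrableOn_finset_iUnion] at hΦ
  have hint := fun η hη => (hs.integrableOn_section hB hη Φ).1 (hΦ η hη)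
  constructor
  · refine IntegrableOn.congr_fun ?_ heq.symm hB
    exact integrable_finsetSum S hint
  · rw [setIntegral_congr_fun hB heq, integral_finsetSum S hint, hs.preimage_eq,
      integral_biUnion_finset S (fun η hη => hs.measurableSet_section hB hη)
        hs.pairwise_disjoint_section hΦ]
    exact Finset.sum_congr rfl fun η hη => (hs.setIntegral_section hB hη Φ).symm

end Splits

namespace IsProperHol

variable {D₁ D₂ : Set ℂ} {f : ℂ → ℂ}
variable {E : Type*} [NormedAddCommGroup E] [NormedSpace ℝ E]

/-- The regular values form a countable disjoint union of measurable sets over which `f` splits. -/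
lemma exists_pieces (h : IsProperHol D₁ D₂ f) :
    ∃ B : ℕ → Set ℂ, (∀ j, MeasurableSet (B j)) ∧ Pairwise (Function.onFun Disjoint B) ∧
      ⋃ j, B j = D₂ \ critVals D₁ f ∧ ∀ j, ∃ S F, Splits D₁ f (B j) S F := by
  have hex : ∀ w : ↥(D₂ \ critVals D₁ f), ∃ W, IsOpen W ∧ (w : ℂ) ∈ W ∧
      W ⊆ D₂ \ critVals D₁ f ∧ ∃ S F, Splits D₁ f W S F := fun w => h.exists_splits w.2
  choose W hWo hW hWR hWs using hex
  have hUn : ⋃ w, W w = D₂ \ critVals D₁ f :=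
    Subset.antisymm (iUnion_subset hWR) fun w hw => mem_iUnion.2 ⟨⟨w, hw⟩, hW _⟩
  obtain ⟨T, hT, hTU⟩ := TopologicalSpace.isOpen_iUnion_countable W hWo
  rcases T.eq_empty_or_nonempty with rfl | hne
  · refine ⟨fun _ => ∅, by simp, fun _ _ _ => by simp [Function.onFun], ?_,
      fun _ => ⟨∅, fun _ => id, ?_⟩⟩
    · rw [← hUn, ← hTU]; simp
    · constructor <;> simp
  · obtain ⟨t, rfl⟩ := hT.exists_eq_range hne
    refine ⟨disjointed fun j => W (t j), fun j => ?_, disjoint_disjointed _, ?_, fun j => ?_⟩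
    · exact MeasurableSet.disjointed (fun j => (hWo _).measurableSet) j
    · rw [iUnion_disjointed, ← hUn, ← hTU, biUnion_range]
    · obtain ⟨S, F, hs⟩ := hWs (t j)
      exact ⟨S, F, hs.mono (disjointed_subset _ j)⟩

lemma ae_eq_regular (h : IsProperHol D₁ D₂ f) :
    (D₂ \ critVals D₁ f : Set ℂ) =ᵐ[volume] D₂ := by
  rw [← sdiff_inter_self_eq_sdiff]
  exact sdiff_null_ae_eq_self h.volume_critVals

lemma ae_eq_preimage_regular (h : IsProperHol D₁ D₂ f) :
    (D₁ ∩ f ⁻¹' (D₂ \ critVals D₁ f) : Set ℂ) =ᵐ[volume] D₁ := by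
  have : D₁ ∩ f ⁻¹' (D₂ \ critVals D₁ f) = D₁ \ (f ⁻¹' critVals D₁ f ∩ D₁) := by
    ext z
    simp only [mem_inter_iff, mem_preimage, Set.mem_sdiff, not_and]
    exact ⟨fun hz => ⟨hz.1, fun h1 => absurd h1 hz.2.2⟩,
      fun hz => ⟨hz.1, h.maps hz.1, fun h1 => hz.2 h1 hz.1⟩⟩
  rw [this]
  exact sdiff_null_ae_eq_self h.volume_preimage_critVals

/-- Change of variables: integrating over `D₁` is integrating the fiber sums, weighted by the
inverse Jacobian `|f'|⁻²`, over `D₂`. -/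
lemma integral_fiberSum (h : IsProperHol D₁ D₂ f) {Φ : ℂ → E} (hΦ : IntegrableOn Φ D₁) :
    IntegrableOn (fiberSum D₁ f fun z => (‖deriv f z‖ ^ 2)⁻¹ • Φ z) D₂ ∧
      ∫ ζ in D₂, fiberSum D₁ f (fun z => (‖deriv f z‖ ^ 2)⁻¹ • Φ z) ζ = ∫ z in D₁, Φ z := by
  obtain ⟨B, hBm, hBd, hBU, hBs⟩ := h.exists_pieces
  choose S F hs using hBs
  have hpre : ⋃ j, D₁ ∩ f ⁻¹' B j = D₁ ∩ f ⁻¹' (D₂ \ critVals D₁ f) := by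
    rw [← hBU, preimage_iUnion, inter_iUnion]
  have hAm : ∀ j, MeasurableSet (D₁ ∩ f ⁻¹' B j) := fun j => (hs j).measurableSet_preimage (hBm j)
  have hAd : Pairwise (Function.onFun Disjoint fun j => D₁ ∩ f ⁻¹' B j) := fun i j hij =>
    ((hBd hij).preimage f).mono inter_subset_right inter_subset_right
  have hΦU : IntegrableOn Φ (⋃ j, D₁ ∩ f ⁻¹' B j) :=
    hΦ.mono_set (iUnion_subset fun j => inter_subset_left)
  have hΦj : ∀ j, IntegrableOn Φ (D₁ ∩ f ⁻¹' B j) := fun j => hΦ.mono_set inter_subset_left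
  have hpc := fun j => (hs j).integral_fiberSum (hBm j) (hΦj j)
  have hpcn := fun j => (hs j).integral_fiberSum (hBm j) (hΦj j).norm
  have hsum : Summable fun j => ∫ ζ in B j,
      ‖fiberSum D₁ f (fun z => (‖deriv f z‖ ^ 2)⁻¹ • Φ z) ζ‖ := by
    refine Summable.of_nonneg_of_le (fun j => integral_nonneg fun _ => norm_nonneg _) (fun j => ?_)
      (hasSum_integral_iUnion hAm hAd hΦU.norm).summable
    rw [← (hpcn j).2]
    refine setIntegral_mono_on (hpc j).1.norm (hpcn j).1 (hBm j) fun ζ hζ => ?_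
    rw [(hs j).fiberSum_eq hζ, (hs j).fiberSum_eq hζ]
    refine (norm_sum_le _ _).trans (Finset.sum_le_sum fun η _ => ?_)
    rw [norm_smul, smul_eq_mul, Real.norm_of_nonneg (by positivity)]
  have hI := integrableOn_iUnion_of_summable_integral_norm (fun j => (hpc j).1) hsum
  constructor
  · rw [hBU] at hI
    exact hI.congr_set_ae h.ae_eq_regular.symm
  · have h1 := hasSum_integral_iUnion hBm hBd hI
    have h2 := hasSum_integral_iUnion hAm hAd hΦU
    simp only [(hpc _).2] at h1
    have h3 := h1.unique h2
    rw [hBU, hpre, setIntegral_congr_set h.ae_eq_regular,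
      setIntegral_congr_set h.ae_eq_preimage_regular] at h3
    exact h3

/-- Pulling back an integrable function and multiplying by the Jacobian `|f'|²` preserves
integrability, because `f` has finitely many sheets. -/
lemma integrableOn_pullback (h : IsProperHol D₁ D₂ f) {Ψ : ℂ → E} (hΨ : IntegrableOn Ψ D₂) :
    IntegrableOn (fun z => ‖deriv f z‖ ^ 2 • Ψ (f z)) D₁ := by
  obtain ⟨B, hBm, hBd, hBU, hBs⟩ := h.exists_pieces
  choose S F hs using hBs
  obtain ⟨m, hm⟩ := h.exists_ncard_fiber
  have hpre : ⋃ j, D₁ ∩ f ⁻¹' B j = D₁ ∩ f ⁻¹' (D₂ \ critVals D₁ f) := by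
    rw [← hBU, preimage_iUnion, inter_iUnion]
  have hBR : ∀ j, B j ⊆ D₂ \ critVals D₁ f := fun j => hBU ▸ subset_iUnion B j
  have hΨj : ∀ j, IntegrableOn Ψ (B j) := fun j =>
    hΨ.mono_set ((hBR j).trans sdiff_subset)
  have hint : ∀ j, IntegrableOn (fun z => ‖deriv f z‖ ^ 2 • Ψ (f z)) (D₁ ∩ f ⁻¹' B j) := by
    intro j
    rw [(hs j).preimage_eq, integrableOn_finset_iUnion]
    intro η hη
    rw [(hs j).integrableOn_section (hBm j) hη]
    refine (hΨj j).congr_fun (fun ζ hζ => ?_) (hBm j)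
    have := norm_ne_zero_iff.2 ((hs j).deriv_ne η hη ζ hζ)
    simp only [(hs j).right_inv η hη ζ hζ]
    rw [smul_smul, inv_mul_cancel₀ (by positivity), one_smul]
  have hval : ∀ j, ∫ z in D₁ ∩ f ⁻¹' B j, ‖‖deriv f z‖ ^ 2 • Ψ (f z)‖ =
      m * ∫ ζ in B j, ‖Ψ ζ‖ := by
    intro j
    rw [← ((hs j).integral_fiberSum (hBm j) (hint j).norm).2, ← integral_const_mul]
    refine setIntegral_congr_fun (hBm j) fun ζ hζ => ?_
    rw [(hs j).fiberSum_eq hζ, ← hm ζ (hBR j hζ), (hs j).ncard_fiber hζ, ← nsmul_eq_mul]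
    refine Finset.sum_eq_card_nsmul fun η hη => ?_
    have := norm_ne_zero_iff.2 ((hs j).deriv_ne η hη ζ hζ)
    rw [(hs j).right_inv η hη ζ hζ, norm_smul, smul_eq_mul, Real.norm_of_nonneg (by positivity),
      inv_mul_cancel_left₀ (by positivity)]
  have hI : IntegrableOn (fun z => ‖deriv f z‖ ^ 2 • Ψ (f z)) (⋃ j, D₁ ∩ f ⁻¹' B j) := by
    refine integrableOn_iUnion_of_summable_integral_norm hint ?_
    simp only [hval]
    refine Summable.mul_left _ (hasSum_integral_iUnion hBm hBd (f := fun ζ => ‖Ψ ζ‖) ?_).summable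
    rw [hBU]
    exact (hΨ.mono_set sdiff_subset).norm
  rw [hpre] at hI
  exact hI.congr_set_ae h.ae_eq_preimage_regular.symm

/-! ### Pulling back weights -/

lemma volume_preimage_eq_zero (h : IsProperHol D₁ D₂ f) {N : Set ℂ} (hN : volume (N ∩ D₂) = 0) :
    volume (D₁ ∩ f ⁻¹' N) = 0 := by
  obtain ⟨B, hBm, hBd, hBU, hBs⟩ := h.exists_pieces
  choose S F hs using hBs
  have hsub : D₁ ∩ f ⁻¹' N ⊆ (f ⁻¹' critVals D₁ f ∩ D₁) ∪
      ⋃ j, ⋃ η ∈ S j, F j η '' (N ∩ B j) := by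
    rintro z ⟨hz, hzN⟩
    by_cases hzc : f z ∈ critVals D₁ f
    · exact Or.inl ⟨hzc, hz⟩
    · right
      have : f z ∈ ⋃ j, B j := hBU ▸ ⟨h.maps hz, hzc⟩
      obtain ⟨j, hj⟩ := mem_iUnion.1 this
      obtain ⟨η, hη, he⟩ := (hs j).surj _ hj z hz rfl
      exact mem_iUnion.2 ⟨j, mem_iUnion₂.2 ⟨η, hη, f z, ⟨hzN, hj⟩, he⟩⟩
  refine measure_mono_null hsub (measure_union_null h.volume_preimage_critVals ?_)
  refine measure_iUnion_null fun j => (measure_biUnion_null_iff (S j).countable_toSet).2 ?_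
  intro η hη
  refine addHaar_image_eq_zero_of_differentiableOn_of_addHaar_eq_zero volume ?_ ?_
  · exact fun ζ hζ => (((hs j).hasFDerivWithinAt_section hη ζ hζ.2).mono
      inter_subset_right).differentiableWithinAt
  · refine measure_mono_null (inter_subset_inter_right N ?_) hN
    exact (hBU ▸ subset_iUnion B j : B j ⊆ D₂ \ critVals D₁ f).trans sdiff_subset

lemma isWeight_comp (h : IsProperHol D₁ D₂ f) {ν : ℂ → ℝ} (hν : IsWeight D₂ ν) :
    IsWeight D₁ (fun z => ν (f z)) := by
  have hfm : AEMeasurable f (volume.restrict D₁) :=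
    h.diff.continuousOn.aemeasurable h.o₁.measurableSet
  refine ⟨?_, fun z hz => hν.2.1 _ (h.maps hz), fun K hK hKc => ?_⟩
  · have hac : Measure.map f (volume.restrict D₁) ≪ volume.restrict D₂ := by
      refine Measure.AbsolutelyContinuous.mk fun s hs h0 => ?_
      rw [Measure.restrict_apply hs] at h0
      rw [Measure.map_apply_of_aemeasurable hfm hs, Measure.restrict_apply' h.o₁.measurableSet,
        inter_comm]
      exact h.volume_preimage_eq_zero h0
    exact (hν.1.mono_ac hac).comp_aemeasurable hfm
  · have hfK : IsCompact (f '' K) := hKc.image_of_continuousOn (h.diff.continuousOn.mono hK)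
    obtain ⟨c, hc, hcK⟩ := hν.2.2 (f '' K) (image_subset_iff.2 fun z hz => h.maps (hK hz)) hfK
    refine ⟨c, hc, ?_⟩
    rw [ae_restrict_iff' hKc.measurableSet, ae_iff]
    rw [ae_restrict_iff' hfK.measurableSet, ae_iff] at hcK
    refine measure_mono_null (fun z hz => ?_)
      (h.volume_preimage_eq_zero (measure_mono_null inter_subset_left hcK))
    simp only [mem_ofPred_eq, Classical.not_imp] at hz
    exact ⟨hK hz.1, fun hcon => hz.2 (hcon ⟨z, hz.1, rfl⟩)⟩

end IsProperHol

/-! ### The weighted reduced Bergman space -/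

namespace MemWeightedReducedBergman

variable {D : Set ℂ} {ν : ℂ → ℝ} {u v : ℂ → ℂ}

lemma aestronglyMeasurable (hD : IsOpen D) (hν : IsWeight D ν) (hu : DifferentiableOn ℂ u D) :
    AEStronglyMeasurable (fun z => ‖u z‖ ^ 2 * ν z) (volume.restrict D) :=
  ((hu.continuousOn.aestronglyMeasurable hD.measurableSet).norm.pow 2).mul
    hν.1.aestronglyMeasurable

lemma sub (hD : IsOpen D) (hν : IsWeight D ν) (hu : MemWeightedReducedBergman D ν u)
    (hv : MemWeightedReducedBergman D ν v) :
    MemWeightedReducedBergman D ν (fun z => u z - v z) := by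
  obtain ⟨hud, ⟨g, hg, hg'⟩, hui⟩ := hu
  obtain ⟨hvd, ⟨k, hk, hk'⟩, hvi⟩ := hv
  refine ⟨hud.sub hvd, ⟨fun z => g z - k z, hg.sub hk, fun z hz => (hg' z hz).sub (hk' z hz)⟩, ?_⟩
  refine Integrable.mono' ((hui.add hvi).const_mul 2)
    (aestronglyMeasurable hD hν (hud.sub hvd)) ?_
  filter_upwards [ae_restrict_mem hD.measurableSet] with z hz
  have hp := hν.2.1 z hz
  rw [Real.norm_of_nonneg (by positivity)]
  have h1 : ‖u z - v z‖ ^ 2 ≤ 2 * (‖u z‖ ^ 2 + ‖v z‖ ^ 2) := by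
    have := norm_sub_le (u z) (v z)
    nlinarith [sq_nonneg (‖u z‖ - ‖v z‖), norm_nonneg (u z - v z)]
  simp only [Pi.add_apply]
  nlinarith

lemma const_mul (c : ℂ) (hu : MemWeightedReducedBergman D ν u) :
    MemWeightedReducedBergman D ν (fun z => c * u z) := by
  obtain ⟨hud, ⟨g, hg, hg'⟩, hui⟩ := hu
  refine ⟨hud.const_mul c, ⟨fun z => c * g z, hg.const_mul c, fun z hz => (hg' z hz).const_mul c⟩,
    ?_⟩
  refine Integrable.congr (hui.const_mul (‖c‖ ^ 2)) (Eventually.of_forall fun z => ?_)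
  simp only [norm_mul]; ring

/-- The pairing of two elements of the space is given by an absolutely convergent integral. -/
lemma integrableOn_mul (hD : IsOpen D) (hν : IsWeight D ν) (hu : MemWeightedReducedBergman D ν u)
    (hv : MemWeightedReducedBergman D ν v) :
    IntegrableOn (fun z => u z * (starRingEnd ℂ) (v z) * (ν z : ℂ)) D := by
  refine Integrable.mono' (hu.2.2.add hv.2.2) ?_ ?_
  · exact ((hu.1.continuousOn.aestronglyMeasurable hD.measurableSet).mul
      (Complex.continuous_conj.comp_aestronglyMeasurable
        (hv.1.continuousOn.aestronglyMeasurable hD.measurableSet))).mul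
      (Complex.continuous_ofReal.comp_aestronglyMeasurable hν.1.aestronglyMeasurable)
  · filter_upwards [ae_restrict_mem hD.measurableSet] with z hz
    have hp := hν.2.1 z hz
    rw [norm_mul, norm_mul, RCLike.norm_conj, Complex.norm_real, Real.norm_of_nonneg hp.le]
    simp only [Pi.add_apply]
    nlinarith [sq_nonneg (‖u z‖ - ‖v z‖), sq_nonneg (‖u z‖ + ‖v z‖)]

/-- An element of the space of norm zero vanishes on `D`. -/
lemma eq_zero (hD : IsOpen D) (hν : IsWeight D ν) (hu : MemWeightedReducedBergman D ν u)
    (h0 : ∫ z in D, u z * (starRingEnd ℂ) (u z) * (ν z : ℂ) = 0) : ∀ z ∈ D, u z = 0 := by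
  have h1 : ∫ z in D, ‖u z‖ ^ 2 * ν z = 0 := by
    rw [← Complex.ofReal_eq_zero, ← integral_complex_ofReal, ← h0]
    refine integral_congr_ae (Eventually.of_forall fun z => ?_)
    simp [Complex.mul_conj, Complex.normSq_eq_norm_sq]
  have hnn : 0 ≤ᵐ[volume.restrict D] fun z => ‖u z‖ ^ 2 * ν z := by
    filter_upwards [ae_restrict_mem hD.measurableSet] with z hz
    have hp := hν.2.1 z hz
    simp only [Pi.zero_apply]; positivity
  have h2 := (setIntegral_eq_zero_iff_of_nonneg_ae hnn hu.2.2).1 h1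
  have h3 : u =ᵐ[volume.restrict D] fun _ => 0 := by
    filter_upwards [h2, ae_restrict_mem hD.measurableSet] with z hz hzD
    have hp := hν.2.1 z hzD
    simpa [hp.ne'] using hz
  exact Measure.eqOn_open_of_ae_eq h3 hD hu.1.continuousOn continuousOn_const

end MemWeightedReducedBergman

/-! ### Pull-back and trace between the two spaces -/

namespace IsProperHol

variable {D₁ D₂ : Set ℂ} {f : ℂ → ℂ} {ν : ℂ → ℝ} {u : ℂ → ℂ}

lemma hasDerivAt (h : IsProperHol D₁ D₂ f) {z : ℂ} (hz : z ∈ D₁) : HasDerivAt f (deriv f z) z :=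
  (h.analyticAt hz).differentiableAt.hasDerivAt

/-- If `g` is a primitive of `u`, then `g ∘ f` is a primitive of the pull-back `f' · (u ∘ f)`. -/
lemma mem_pullback (h : IsProperHol D₁ D₂ f) (hu : MemWeightedReducedBergman D₂ ν u) :
    MemWeightedReducedBergman D₁ (fun z => ν (f z)) (fun z => deriv f z * u (f z)) := by
  obtain ⟨hud, ⟨g, hg, hg'⟩, hui⟩ := hu
  refine ⟨(h.diff.deriv h.o₁).mul (hud.comp h.diff h.maps),
    ⟨fun z => g (f z), hg.comp h.diff h.maps, fun z hz => ?_⟩, ?_⟩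
  · beta_reduce
    rw [mul_comm]
    exact (hg' _ (h.maps hz)).comp z (h.hasDerivAt hz)
  · refine Integrable.congr (h.integrableOn_pullback hui) (Eventually.of_forall fun z => ?_)
    simp only [norm_mul, smul_eq_mul]; ring

lemma hasDerivAt_fiberSum (h : IsProperHol D₁ D₂ f) {g : ℂ → ℂ}
    (hg : ∀ z ∈ D₁, HasDerivAt g (u z) z) {ζ : ℂ} (hζ : ζ ∈ D₂ \ critVals D₁ f) :
    HasDerivAt (fiberSum D₁ f g) (fiberSum D₁ f (fun z => u z / deriv f z) ζ) ζ := by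
  obtain ⟨W, hWo, hζW, -, S, F, hs⟩ := h.exists_splits hζ
  rw [hs.fiberSum_eq hζW]
  have h1 : HasDerivAt (fun x => ∑ η ∈ S, g (F η x)) (∑ η ∈ S, u (F η ζ) / deriv f (F η ζ)) ζ := by
    refine HasDerivAt.fun_sum fun η hη => ?_
    rw [div_eq_mul_inv]
    exact (hg _ (hs.mem η hη ζ hζW)).comp ζ (hs.hasDerivAt η hη ζ hζW)
  refine h1.congr_of_eventuallyEq ?_
  filter_upwards [hWo.mem_nhds hζW] with x hx using hs.fiberSum_eq hx g

open Classical in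
/-- The fiber sum `ζ ↦ ∑ g(η)` of a holomorphic function, which is holomorphic on the regular
values, is bounded near each critical value, so it extends holomorphically to `D₂`. -/
lemma exists_extension_fiberSum (h : IsProperHol D₁ D₂ f) {g : ℂ → ℂ}
    (hg : ∀ z ∈ D₁, HasDerivAt g (u z) z) :
    ∃ G : ℂ → ℂ, DifferentiableOn ℂ G D₂ ∧ ∀ ζ ∈ D₂ \ critVals D₁ f, G ζ = fiberSum D₁ f g ζ := by
  set G₀ := fiberSum D₁ f g with hG₀
  obtain ⟨m, hm⟩ := h.exists_ncard_fiber
  refine ⟨fun ζ => if ζ ∈ critVals D₁ f then limUnder (𝓝[≠] ζ) G₀ else G₀ ζ, ?_,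
    fun ζ hζ => if_neg hζ.2⟩
  intro v hv
  refine DifferentiableAt.differentiableWithinAt ?_
  by_cases hvc : v ∈ critVals D₁ f
  · have hp : ∀ᶠ x in 𝓝[≠] v, x ∈ D₂ \ critVals D₁ f := by
      filter_upwards [h.eventually_not_mem_critVals hv,
        nhdsWithin_le_nhds (h.o₂.mem_nhds hv)] with x hx hx' using ⟨hx', hx⟩
    obtain ⟨r, hr, hr'⟩ := Metric.mem_nhdsWithin_iff.1 hp
    obtain ⟨r', hr₀, hrD⟩ := nhds_basis_closedBall.mem_iff.1 (h.o₂.mem_nhds hv)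
    let s := ball v r ∩ ball v r'
    have hs : s ∈ 𝓝 v := inter_mem (ball_mem_nhds v hr) (ball_mem_nhds v hr₀)
    have hsR : s \ {v} ⊆ D₂ \ critVals D₁ f := fun x hx => hr' ⟨hx.1.1, hx.2⟩
    have hd : DifferentiableOn ℂ G₀ (s \ {v}) := fun x hx =>
      (h.hasDerivAt_fiberSum hg (hsR hx)).differentiableAt.differentiableWithinAt
    obtain ⟨M, hM⟩ := (h.proper _ hrD (isCompact_closedBall v r')).exists_bound_of_continuousOn
      (f := g) fun z hz => (hg z hz.1).continuousAt.continuousWithinAt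
    have hb : BddAbove (norm ∘ G₀ '' (s \ {v})) := by
      refine ⟨m * M, ?_⟩
      rintro _ ⟨x, hx, rfl⟩
      obtain ⟨W, -, hxW, -, S, F, hsp⟩ := h.exists_splits (hsR hx)
      simp only [Function.comp, hG₀]
      rw [hsp.fiberSum_eq hxW, ← hm x (hsR hx), hsp.ncard_fiber hxW, ← nsmul_eq_mul]
      refine (norm_sum_le _ _).trans (Finset.sum_le_card_nsmul _ _ _ fun η hη => ?_)
      refine hM _ ⟨hsp.mem η hη x hxW, ?_⟩
      rw [mem_preimage, hsp.right_inv η hη x hxW]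
      exact ball_subset_closedBall hx.1.2
    have hu := (Complex.differentiableOn_update_limUnder_of_bddAbove hs hd hb).differentiableAt hs
    refine hu.congr_of_eventuallyEq ?_
    filter_upwards [hs] with x hx
    by_cases hxv : x = v
    · subst hxv; simp [hvc]
    · simp [hxv, (hsR ⟨hx, hxv⟩).2]
  · refine (h.hasDerivAt_fiberSum hg ⟨hv, hvc⟩).differentiableAt.congr_of_eventuallyEq ?_
    filter_upwards [h.isOpen_regular.mem_nhds ⟨hv, hvc⟩] with x hx using if_neg hx.2

/-- The trace `ζ ↦ ∑ u(η) / f'(η)` over the fibers maps the space on `D₁` to the space on `D₂`: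
it is the derivative of the fiber sum of a primitive of `u`, and by the Cauchy-Schwarz inequality
its square is at most the number of sheets times the fiber sum of `|u|² / |f'|²`. -/
lemma exists_trace (h : IsProperHol D₁ D₂ f) (hν : IsWeight D₂ ν)
    (hu : MemWeightedReducedBergman D₁ (fun z => ν (f z)) u) :
    ∃ U : ℂ → ℂ, MemWeightedReducedBergman D₂ ν U ∧
      ∀ ζ ∈ D₂ \ critVals D₁ f, U ζ = fiberSum D₁ f (fun z => u z / deriv f z) ζ := by
  obtain ⟨hud, ⟨g, hg, hg'⟩, hui⟩ := hu
  obtain ⟨G, hG, hGeq⟩ := h.exists_extension_fiberSum hg'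
  obtain ⟨m, hm⟩ := h.exists_ncard_fiber
  have hUeq : ∀ ζ ∈ D₂ \ critVals D₁ f,
      deriv G ζ = fiberSum D₁ f (fun z => u z / deriv f z) ζ := fun ζ hζ => by
    refine ((h.hasDerivAt_fiberSum hg' hζ).congr_of_eventuallyEq ?_).deriv
    filter_upwards [h.isOpen_regular.mem_nhds hζ] with x hx using hGeq x hx
  have hUd := hG.deriv h.o₂
  refine ⟨deriv G, ⟨hUd, ⟨G, hG, fun z hz =>
    (hG.differentiableAt (h.o₂.mem_nhds hz)).hasDerivAt⟩, ?_⟩, hUeq⟩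
  refine Integrable.mono' ((h.integral_fiberSum hui).1.const_mul m)
    (MemWeightedReducedBergman.aestronglyMeasurable h.o₂ hν hUd) ?_
  rw [← Measure.restrict_congr_set h.ae_eq_regular]
  filter_upwards [ae_restrict_mem h.isOpen_regular.measurableSet] with ζ hζ
  have hp := hν.2.1 ζ hζ.1
  obtain ⟨W, -, hζW, -, S, F, hs⟩ := h.exists_splits hζ
  rw [Real.norm_of_nonneg (by positivity), hUeq ζ hζ, hs.fiberSum_eq hζW, hs.fiberSum_eq hζW,
    ← hm ζ hζ, hs.ncard_fiber hζW]
  have h1 : ‖∑ η ∈ S, u (F η ζ) / deriv f (F η ζ)‖ ^ 2 ≤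
      S.card * ∑ η ∈ S, ‖u (F η ζ) / deriv f (F η ζ)‖ ^ 2 :=
    (pow_le_pow_left₀ (norm_nonneg _) (norm_sum_le _ _) 2).trans sq_sum_le_card_mul_sum_sq
  refine (mul_le_mul_of_nonneg_right h1 hp.le).trans (le_of_eq ?_)
  rw [mul_assoc, Finset.sum_mul]
  congr 1
  refine Finset.sum_congr rfl fun η hη => ?_
  rw [hs.right_inv η hη ζ hζW, norm_div, div_pow, smul_eq_mul]
  ring

/-- The trace is adjoint to the pull-back. -/
lemma integral_pullback (h : IsProperHol D₁ D₂ f) (hν : IsWeight D₂ ν) {U k : ℂ → ℂ}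
    (hu : MemWeightedReducedBergman D₁ (fun z => ν (f z)) u)
    (hk : MemWeightedReducedBergman D₂ ν k)
    (hU : ∀ ζ ∈ D₂ \ critVals D₁ f, U ζ = fiberSum D₁ f (fun z => u z / deriv f z) ζ) :
    ∫ z in D₁, u z * (starRingEnd ℂ) (deriv f z * k (f z)) * (ν (f z) : ℂ) =
      ∫ ζ in D₂, U ζ * (starRingEnd ℂ) (k ζ) * (ν ζ : ℂ) := by
  have hint := hu.integrableOn_mul h.o₁ (h.isWeight_comp hν) (h.mem_pullback hk)
  rw [← (h.integral_fiberSum hint).2]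
  rw [← Measure.restrict_congr_set h.ae_eq_regular]
  refine setIntegral_congr_fun h.isOpen_regular.measurableSet fun ζ hζ => ?_
  obtain ⟨W, -, hζW, -, S, F, hs⟩ := h.exists_splits hζ
  rw [hU ζ hζ, hs.fiberSum_eq hζW, hs.fiberSum_eq hζW, Finset.sum_mul, Finset.sum_mul]
  refine Finset.sum_congr rfl fun η hη => ?_
  have hne := hs.deriv_ne η hη ζ hζW
  have hne' : (starRingEnd ℂ) (deriv f (F η ζ)) ≠ 0 := by simpa using hne
  rw [hs.right_inv η hη ζ hζW, map_mul, Complex.real_smul, Complex.ofReal_inv,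
    Complex.ofReal_pow, ← Complex.mul_conj']
  field_simp

end IsProperHol

end Aux

/-- Transformation formula for weighted reduced Bergman kernels under a proper
holomorphic map between bounded planar domains, written via fibers. -/
theorem weightedReducedBergman_transformation (D₁ D₂ : Set ℂ)
    (hD₁o : IsOpen D₁) (hD₁c : IsConnected D₁) (hD₁b : Bornology.IsBounded D₁)
    (hD₂o : IsOpen D₂) (hD₂c : IsConnected D₂) (hD₂b : Bornology.IsBounded D₂)
    (ν : ℂ → ℝ) (hν : IsWeight D₂ ν)
    (f : ℂ → ℂ) (hf : DifferentiableOn ℂ f D₁) (hmaps : Set.MapsTo f D₁ D₂)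
    (hproper : ∀ K : Set ℂ, K ⊆ D₂ → IsCompact K → IsCompact (D₁ ∩ f ⁻¹' K))
    (K₁ K₂ : ℂ → ℂ → ℂ)
    (hK₁ : IsWeightedReducedBergmanKernel D₁ (fun z => ν (f z)) K₁)
    (hK₂ : IsWeightedReducedBergmanKernel D₂ ν K₂) :
    IsWeight D₁ (fun z => ν (f z)) ∧
      ∀ z ∈ D₁, ∀ w ∈ D₂, (∀ η ∈ D₁, f η = w → deriv f η ≠ 0) →
        deriv f z * K₂ (f z) w =
          ∑ᶠ η ∈ D₁ ∩ f ⁻¹' {w}, K₁ z η / (starRingEnd ℂ) (deriv f η) := by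
  have h : IsProperHol D₁ D₂ f := ⟨hD₁o, hD₁c, hD₂o, hD₂c, hf, hmaps, hproper⟩
  have hν₁ := h.isWeight_comp hν
  refine ⟨hν₁, fun z hz w hw hreg => ?_⟩
  have hwR : w ∈ D₂ \ critVals D₁ f := ⟨hw, fun ⟨η, hη, hηw, h0⟩ => hreg η hη hηw h0⟩
  have hfin := h.fiber_finite hw
  set T := hfin.toFinset with hT
  have hTmem : ∀ η ∈ T, η ∈ D₁ := fun η hη => (hfin.mem_toFinset.1 hη).1
  set a : ℂ → ℂ := fun z => deriv f z * K₂ (f z) w with ha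
  have haM : MemWeightedReducedBergman D₁ (fun z => ν (f z)) a := h.mem_pullback (hK₂ w hw).1
  set c : ℂ → ℂ := fun η => ((starRingEnd ℂ) (deriv f η))⁻¹ with hc
  have hcM : ∀ η ∈ T, MemWeightedReducedBergman D₁ (fun z => ν (f z)) (fun z => c η * K₁ z η) :=
    fun η hη => (hK₁ η (hTmem η hη)).1.const_mul (c η)
  -- The difference of the two sides belongs to the space.
  have hM : MemWeightedReducedBergman D₁ (fun z => ν (f z))
      (fun z => a z - ∑ η ∈ T, c η * K₁ z η) := by
    clear_value T
    clear hT
    induction T using Finset.induction_on with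
    | empty => simpa using haM
    | insert η T hη ih =>
      have h1 := (ih (fun x hx => hTmem x (Finset.mem_insert_of_mem hx))
        (fun x hx => hcM x (Finset.mem_insert_of_mem hx))).sub hD₁o hν₁
        (hcM η (Finset.mem_insert_self _ _))
      convert h1 using 2 with x
      rw [Finset.sum_insert hη]; ring
  -- The difference is orthogonal to every element of the space, hence to itself.
  have horth : ∀ u, MemWeightedReducedBergman D₁ (fun z => ν (f z)) u →
      ∫ z in D₁, u z * (starRingEnd ℂ) (a z - ∑ η ∈ T, c η * K₁ z η) * (ν (f z) : ℂ) = 0 := by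
    intro u hu
    obtain ⟨U, hU, hUeq⟩ := h.exists_trace hν hu
    have h1 : ∫ z in D₁, u z * (starRingEnd ℂ) (a z) * (ν (f z) : ℂ) =
        ∑ η ∈ T, u η / deriv f η := by
      rw [ha, h.integral_pullback hν hu (hK₂ w hw).1 hUeq, ← (hK₂ w hw).2 U hU, hUeq w hwR,
        fiberSum, finsum_mem_eq_finite_toFinset_sum _ hfin]
    have h2 : ∀ η ∈ T, ∫ z in D₁, u z * (starRingEnd ℂ) (c η * K₁ z η) * (ν (f z) : ℂ) =
        u η / deriv f η := by
      intro η hη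
      rw [(hK₁ η (hTmem η hη)).2 u hu, div_eq_inv_mul, ← integral_const_mul]
      refine integral_congr_ae (Filter.Eventually.of_forall fun x => ?_)
      simp only [hc, map_mul, map_inv₀, Complex.conj_conj]
      ring
    have h3 : ∀ η ∈ T, IntegrableOn
        (fun z => u z * (starRingEnd ℂ) (c η * K₁ z η) * (ν (f z) : ℂ)) D₁ :=
      fun η hη => hu.integrableOn_mul hD₁o hν₁ (hcM η hη)
    calc ∫ z in D₁, u z * (starRingEnd ℂ) (a z - ∑ η ∈ T, c η * K₁ z η) * (ν (f z) : ℂ)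
        = ∫ z in D₁, (u z * (starRingEnd ℂ) (a z) * (ν (f z) : ℂ) -
            ∑ η ∈ T, u z * (starRingEnd ℂ) (c η * K₁ z η) * (ν (f z) : ℂ)) := by
          refine integral_congr_ae (Filter.Eventually.of_forall fun x => ?_)
          simp only [map_sub, map_sum]
          rw [mul_sub, sub_mul, Finset.mul_sum, Finset.sum_mul]
      _ = 0 := by
          rw [integral_sub (hu.integrableOn_mul hD₁o hν₁ haM) (integrable_finsetSum T h3),
            integral_finsetSum T h3, h1, Finset.sum_congr rfl h2, sub_self]
  have hzero := hM.eq_zero hD₁o hν₁ (horth _ hM) z hz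
  rw [finsum_mem_eq_finite_toFinset_sum _ hfin]
  rw [sub_eq_zero] at hzero
  refine hzero.trans (Finset.sum_congr rfl fun η _ => ?_)
  simp only [hc]
  rw [div_eq_mul_inv, mul_comm]
end
end

section
/- Let D be a bounded domain in ℂ whose reduced Bergman kernel K̃_D is a rational function, i.e. there exist polynomials P, Q ∈ ℂ[X, Y] with Q not identically zero such that K̃_D(z, w)·Q(z, conj(w)) = P(z, conj(w)) for all z, w ∈ D. Then every proper holomorphic map f : D → 𝔻 to the open unit disc 𝔻 is rational: there exist polynomials p, q ∈ ℂ[X] with q not identically zero such that f(z)·q(z) = p(z) for all z ∈ D. -/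
/-!
Let `g` be a proper holomorphic map from `D` to the unit disc and `ψ` a function of one real
variable vanishing near `1`. By properness `ψ(|g|²)` has compact support in `D`, so Green's
formula applies on `D` without any boundary regularity (`ProperToDisc.green`). Letting `ψ'` tend
to `1` on `[0, 1)` gives two facts: `g' ∈ L²(D)` (`ProperToDisc.integrableOn_deriv`), so `g'` lies
in the reduced Bergman space, and every element of that space divisible by `g` is orthogonal
to `g'` (`ProperToDisc.orthogonal`).

If all zeros of `g` are simple, there are finitely many of them, and an element of the reduced
Bergman space vanishing at all of them is divisible by `g`. Hence the functional `u ↦ ⟨u, g'⟩`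
vanishes wherever the evaluations at the zeros of `g` do, so `g'` is a linear combination of the
functions `K(·, a)` with `g a = 0` (`ProperToDisc.deriv_eq_sum`).

For `|c| < 1` this applies to `g = (f - c) / (1 - c̄ f)` whenever `c` is a regular value of `f`.
Outside a countable set of `c`, each `K(·, a)` with `f a = c` is moreover a rational function, and
`g' = (1 - |c|²) f' / (1 - c̄ f)²` shows that `f' / (1 - c̄ f)²` is rational
(`ProperToDisc.isRat_deriv_div`). Three such values of `c` suffice to recover `f`: quotients give
the squares of `(1 - c̄₂ f) / (1 - c̄₁ f)` and of `(1 - c̄₃ f) / (1 - c̄₁ f)`, which are two affinely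
related functions, and comparing them determines the first one, hence `f`, rationally
(`isRat_of_three`).
-/

open MeasureTheory Complex Metric

noncomputable section

/-! ### Stokes' theorem for `∂/∂z̄` -/

/-- Twice the Cauchy-Riemann operator `∂/∂z̄`. -/
def dbar (Φ : ℂ → ℂ) (z : ℂ) : ℂ := fderiv ℝ Φ z 1 + I * fderiv ℝ Φ z I

/-- Stokes' theorem for a function with compact support in `D`, of class `C¹` on `D` only:
its extension by zero is `C¹` on the plane. -/
theorem integral_dbar_eq_zero {D C : Set ℂ} (hD : IsOpen D) (hC : IsCompact C) (hCD : C ⊆ D)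
    {Φ : ℂ → ℂ} (hΦ : ContDiffOn ℝ 1 Φ D) (h0 : ∀ z ∈ D, z ∉ C → Φ z = 0) :
    ∫ z in D, dbar Φ z = 0 := by
  classical
  set Ψ : ℂ → ℂ := D.indicator Φ with hΨ
  have hoff : ∀ z, z ∉ C → Ψ z = 0 := by
    intro z hz
    by_cases hzD : z ∈ D
    · simp [hΨ, hzD, h0 z hzD hz]
    · simp [hΨ, hzD]
  have heq : ∀ z ∈ D, Ψ =ᶠ[nhds z] Φ := by
    intro z hz
    filter_upwards [hD.mem_nhds hz] with w hw
    simp [hΨ, hw]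
  have hsmooth : ContDiff ℝ 1 Ψ := by
    rw [contDiff_iff_contDiffAt]
    intro z
    by_cases hz : z ∈ C
    · exact ((hΦ.contDiffAt (hD.mem_nhds (hCD hz)))).congr_of_eventuallyEq (heq z (hCD hz))
    · have : Ψ =ᶠ[nhds z] fun _ => 0 := by
        filter_upwards [hC.isClosed.isOpen_compl.mem_nhds hz] with w hw
        exact hoff w hw
      exact contDiffAt_const.congr_of_eventuallyEq this
  have hsupp : HasCompactSupport Ψ := HasCompactSupport.intro hC hoff
  have hint : ∀ v : ℂ, Integrable (fun z => fderiv ℝ Ψ z v) :=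
    fun v => ((hsmooth.continuous_fderiv one_ne_zero).clm_apply
      continuous_const).integrable_of_hasCompactSupport (hsupp.fderiv_apply ℝ v)
  have hzero : ∀ v : ℂ, ∫ z, fderiv ℝ Ψ z v = 0 := by
    intro v
    have h := integral_mul_fderiv_eq_neg_fderiv_mul_of_integrable (μ := (volume : Measure ℂ))
      (f := fun _ : ℂ => (1 : ℂ)) (g := Ψ) (v := v) (by simp) (by simpa using hint v)
      (by simpa using hsmooth.continuous.integrable_of_hasCompactSupport hsupp)
      (fun x _ => by fun_prop) (fun x _ => (hsmooth.differentiable one_ne_zero) x)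
    simpa using h
  have h1 : ∫ z in D, dbar Φ z = ∫ z in D, dbar Ψ z := by
    refine setIntegral_congr_fun hD.measurableSet fun z hz => ?_
    simp only [dbar, (heq z hz).fderiv_eq]
  rw [h1, setIntegral_eq_integral_of_forall_compl_eq_zero]
  · simp only [dbar]
    rw [integral_add (hint 1) ((hint I).const_mul I), integral_const_mul, hzero, hzero]
    simp
  · intro z hz
    have : Ψ =ᶠ[nhds z] fun _ => 0 := by
      filter_upwards [hC.isClosed.isOpen_compl.mem_nhds (fun h => hz (hCD h))] with w hw
      exact hoff w hw
    simp [dbar, this.fderiv_eq]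

theorem dbar_mul {F G : ℂ → ℂ} {z : ℂ} (hF : DifferentiableAt ℝ F z)
    (hG : DifferentiableAt ℝ G z) :
    dbar (fun w => F w * G w) z = dbar F z * G z + F z * dbar G z := by
  simp only [dbar, fderiv_fun_mul hF hG]
  simp
  ring

theorem dbar_of_holomorphic {F : ℂ → ℂ} {z : ℂ} (hF : DifferentiableAt ℂ F z) :
    dbar F z = 0 := by
  simp only [dbar, hF.fderiv_restrictScalars ℝ]
  have : fderiv ℂ F z I = I * fderiv ℂ F z 1 := by
    rw [← smul_eq_mul, ← map_smul]; simp
  simp only [ContinuousLinearMap.coe_restrictScalars', this, ← mul_assoc, I_mul_I]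
  ring

theorem dbar_conj {g : ℂ → ℂ} {z : ℂ} (hg : DifferentiableAt ℂ g z) :
    dbar (fun w => (starRingEnd ℂ) (g w)) z = 2 * (starRingEnd ℂ) (deriv g z) := by
  have h := (hg.hasDerivAt.hasFDerivAt.restrictScalars ℝ)
  have h2 := (conjCLE.toContinuousLinearMap.hasFDerivAt (x := g z)).comp z h
  have h3 : HasFDerivAt (fun w => (starRingEnd ℂ) (g w)) _ z := h2
  simp only [dbar, h3.fderiv]
  simp
  linear_combination -((starRingEnd ℂ) (deriv g z)) * I_mul_I

theorem dbar_normSq {g : ℂ → ℂ} {z : ℂ} (hg : DifferentiableAt ℂ g z) {ψ : ℝ → ℝ} {m : ℝ}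
    (hψ : HasDerivAt ψ m (normSq (g z))) :
    dbar (fun w => ((ψ (normSq (g w)) : ℝ) : ℂ)) z =
      2 * m * g z * (starRingEnd ℂ) (deriv g z) := by
  have hr : DifferentiableAt ℝ g z := hg.restrictScalars ℝ
  have hc : DifferentiableAt ℝ (fun w => (starRingEnd ℂ) (g w)) z :=
    conjCLE.differentiableAt.comp z hr
  have e : (fun w => g w * (starRingEnd ℂ) (g w)) = fun w => ((normSq (g w) : ℝ) : ℂ) := by
    funext w; exact mul_conj _
  have hN : DifferentiableAt ℝ (fun w => normSq (g w)) z := by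
    have : DifferentiableAt ℝ (fun w => (((normSq (g w) : ℝ) : ℂ)).re) z := by
      have hm := hr.mul hc
      have hm' : DifferentiableAt ℝ (fun w => ((normSq (g w) : ℝ) : ℂ)) z := by
        rw [← e]; exact hm
      exact reCLM.differentiableAt.comp z hm'
    simpa using this
  have h1 : dbar (fun w => ((normSq (g w) : ℝ) : ℂ)) z =
      2 * g z * (starRingEnd ℂ) (deriv g z) := by
    rw [← e, dbar_mul hr hc, dbar_of_holomorphic hg, dbar_conj hg]; ring
  have h2 : fderiv ℝ (fun w => ((normSq (g w) : ℝ) : ℂ)) z =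
      ofRealCLM.comp (fderiv ℝ (fun w => normSq (g w)) z) :=
    (ofRealCLM.hasFDerivAt.comp z hN.hasFDerivAt).fderiv
  have h3 : fderiv ℝ (fun w => ((ψ (normSq (g w)) : ℝ) : ℂ)) z =
      ofRealCLM.comp (m • fderiv ℝ (fun w => normSq (g w)) z) :=
    (ofRealCLM.hasFDerivAt.comp z (hψ.comp_hasFDerivAt z hN.hasFDerivAt)).fderiv
  have h4 : dbar (fun w => ((ψ (normSq (g w)) : ℝ) : ℂ)) z =
      m * dbar (fun w => ((normSq (g w) : ℝ) : ℂ)) z := by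
    simp only [dbar, h2, h3]
    simp
    ring
  rw [h4, h1]; ring

/-! ### Cutoff functions -/

/-- A continuous non-increasing cutoff: `1` for `t ≤ 1 - 2/(j+1)` and `0` for
`t ≥ 1 - 1/(j+1)`. -/
def cut (j : ℕ) (t : ℝ) : ℝ := max 0 (min 1 (((j : ℝ) + 1) * (1 - t) - 1))

theorem cut_continuous (j : ℕ) : Continuous (cut j) := by unfold cut; fun_prop

theorem cut_nonneg (j : ℕ) (t : ℝ) : 0 ≤ cut j t := le_max_left _ _

theorem cut_le_one (j : ℕ) (t : ℝ) : cut j t ≤ 1 := max_le zero_le_one (min_le_left _ _)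

theorem cut_antitone (j : ℕ) : Antitone (cut j) := by
  intro s t h
  unfold cut
  have : ((j : ℝ) + 1) * (1 - t) ≤ ((j : ℝ) + 1) * (1 - s) :=
    mul_le_mul_of_nonneg_left (by linarith) (by positivity)
  gcongr

/-- The threshold from which on `cut j` vanishes. -/
def cutRadius (j : ℕ) : ℝ := 1 - 1 / ((j : ℝ) + 1)

theorem cutRadius_lt (j : ℕ) : cutRadius j < 1 := by
  have : (0 : ℝ) < 1 / ((j : ℝ) + 1) := by positivity
  unfold cutRadius; linarith

theorem cut_eq_zero {j : ℕ} {t : ℝ} (h : cutRadius j ≤ t) : cut j t = 0 := by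
  unfold cut
  unfold cutRadius at h
  have hj : (0 : ℝ) < (j : ℝ) + 1 := by positivity
  have : ((j : ℝ) + 1) * (1 - t) ≤ ((j : ℝ) + 1) * (1 / ((j : ℝ) + 1)) :=
    mul_le_mul_of_nonneg_left (by linarith) (by positivity)
  rw [mul_one_div_cancel hj.ne'] at this
  exact max_eq_left (min_le_of_right_le (by linarith))

theorem cut_eq_one {j : ℕ} {t : ℝ} (h : t ≤ 1 - 2 / ((j : ℝ) + 1)) : cut j t = 1 := by
  unfold cut
  have hj : (0 : ℝ) < (j : ℝ) + 1 := by positivity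
  have : ((j : ℝ) + 1) * (2 / ((j : ℝ) + 1)) ≤ ((j : ℝ) + 1) * (1 - t) :=
    mul_le_mul_of_nonneg_left (by linarith) (by positivity)
  rw [mul_div_cancel₀ _ hj.ne'] at this
  rw [min_eq_left (by linarith)]
  exact max_eq_right zero_le_one

theorem eventually_le_one_sub {t : ℝ} (ht : t < 1) :
    ∀ᶠ j : ℕ in Filter.atTop, t ≤ 1 - 2 / ((j : ℝ) + 1) := by
  have h : Filter.Tendsto (fun j : ℕ => 1 - 2 * (1 / ((j : ℝ) + 1))) Filter.atTop
      (nhds (1 - 2 * 0)) :=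
    (tendsto_one_div_add_atTop_nhds_zero_nat.const_mul 2).const_sub 1
  have h2 := h.eventually_const_lt (u := t) (by linarith)
  filter_upwards [h2] with j hj
  have : 2 / ((j : ℝ) + 1) = 2 * (1 / ((j : ℝ) + 1)) := by ring
  linarith

/-- The primitive of `cut j` vanishing near and beyond `1`. -/
def cutPrim (j : ℕ) (t : ℝ) : ℝ := ∫ s in (1 : ℝ)..t, cut j s

theorem cutPrim_hasDerivAt (j : ℕ) (t : ℝ) : HasDerivAt (cutPrim j) (cut j t) t :=
  (cut_continuous j).integral_hasStrictDerivAt 1 t |>.hasDerivAt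

theorem cutPrim_contDiff (j : ℕ) : ContDiff ℝ 1 (cutPrim j) := by
  rw [contDiff_one_iff_deriv]
  refine ⟨fun t => (cutPrim_hasDerivAt j t).differentiableAt, ?_⟩
  rw [show deriv (cutPrim j) = cut j from funext fun t => (cutPrim_hasDerivAt j t).deriv]
  exact cut_continuous j

theorem cutPrim_eq_zero {j : ℕ} {t : ℝ} (h : cutRadius j ≤ t) : cutPrim j t = 0 := by
  unfold cutPrim
  rw [intervalIntegral.integral_congr (g := fun _ => (0 : ℝ))]
  · simp
  · intro s hs
    refine cut_eq_zero (le_trans ?_ hs.1)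
    exact le_min (cutRadius_lt j).le h

/-- Because `cut j` is non-increasing, its integral over `[t, 1]` is at most
`(1 - t) * cut j t`. -/
theorem neg_cutPrim_le {j : ℕ} {t : ℝ} (h : t ≤ 1) : -cutPrim j t ≤ (1 - t) * cut j t := by
  unfold cutPrim
  rw [← intervalIntegral.integral_symm]
  calc ∫ s in t..1, cut j s ≤ ∫ _s in t..1, cut j t :=
        intervalIntegral.integral_mono_on h ((cut_continuous j).intervalIntegrable _ _)
          (by simp) fun s hs => cut_antitone j hs.1
    _ = _ := by simp

/-! ### Proper maps to the disc and Green's formula -/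

/-- A proper holomorphic map from `D` to the unit disc, given as a total function on `ℂ` whose
values outside `D` are arbitrary. -/
structure ProperToDisc (D : Set ℂ) (g : ℂ → ℂ) : Prop where
  holo : DifferentiableOn ℂ g D
  maps : Set.MapsTo g D (ball (0 : ℂ) 1)
  proper : ∀ C : Set ℂ, C ⊆ ball (0 : ℂ) 1 → IsCompact C → IsCompact (D ∩ g ⁻¹' C)

theorem ProperToDisc.normSq_lt {D : Set ℂ} {g : ℂ → ℂ} (hg : ProperToDisc D g) {z : ℂ}
    (hz : z ∈ D) : normSq (g z) < 1 := by
  have := hg.maps hz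
  rw [mem_ball_zero_iff] at this
  rw [normSq_eq_norm_sq]
  nlinarith [norm_nonneg (g z)]

theorem ProperToDisc.isCompact_sublevel {D : Set ℂ} {g : ℂ → ℂ} (hg : ProperToDisc D g) {r : ℝ}
    (hr : r < 1) : IsCompact (D ∩ g ⁻¹' {w | normSq w ≤ r}) := by
  have hsub : {w : ℂ | normSq w ≤ r} ⊆ ball (0 : ℂ) 1 := by
    intro w hw
    have hw' : normSq w ≤ r := hw
    rw [mem_ball_zero_iff]
    rw [normSq_eq_norm_sq] at hw'
    nlinarith [norm_nonneg w]
  refine hg.proper _ hsub ?_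
  refine Metric.isCompact_of_isClosed_isBounded
    (isClosed_le continuous_normSq continuous_const) ?_
  exact isBounded_ball.subset hsub

/-- Green's formula for the form `V ψ(|g|²) dz`, where `ψ = cutPrim j`; properness of `g` makes
`ψ(|g|²)` compactly supported in `D`. -/
theorem ProperToDisc.green {D : Set ℂ} {g : ℂ → ℂ} (hg : ProperToDisc D g) (hD : IsOpen D)
    {V : ℂ → ℂ} (hV : ContDiffOn ℝ 1 V D) (j : ℕ) :
    ∫ z in D, (dbar V z * (cutPrim j (normSq (g z)) : ℝ) +
      2 * V z * (cut j (normSq (g z)) : ℝ) * g z * (starRingEnd ℂ) (deriv g z)) = 0 := by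
  have hgs : ContDiffOn ℝ 1 g D := (hg.holo.contDiffOn hD).restrict_scalars ℝ
  have hN : ContDiffOn ℝ 1 (fun z => normSq (g z)) D := by
    simp only [normSq_eq_norm_sq]
    exact hgs.norm_sq ℝ
  have hψ : ContDiffOn ℝ 1 (fun z => ((cutPrim j (normSq (g z)) : ℝ) : ℂ)) D :=
    ofRealCLM.contDiff.comp_contDiffOn ((cutPrim_contDiff j).comp_contDiffOn hN)
  have key := integral_dbar_eq_zero hD (hg.isCompact_sublevel (cutRadius_lt j))
    Set.inter_subset_left (hV.mul hψ) (by
      intro z hz hzC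
      have : cutRadius j ≤ normSq (g z) := by
        by_contra hlt
        exact hzC ⟨hz, (not_le.1 hlt).le⟩
      simp [cutPrim_eq_zero this])
  rw [← key]
  refine setIntegral_congr_fun hD.measurableSet fun z hz => ?_
  have hnz := hD.mem_nhds hz
  have h1 : DifferentiableAt ℝ V z := (hV.differentiableOn one_ne_zero).differentiableAt hnz
  have h2 : DifferentiableAt ℝ (fun z => ((cutPrim j (normSq (g z)) : ℝ) : ℂ)) z :=
    (hψ.differentiableOn one_ne_zero).differentiableAt hnz
  have h3 := dbar_mul h1 h2
  have h4 := dbar_normSq (hg.holo.differentiableAt hnz) (cutPrim_hasDerivAt j (normSq (g z)))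
  change _ = dbar (fun w => V w * ((cutPrim j (normSq (g w)) : ℝ) : ℂ)) z
  rw [h3, h4]
  ring

/-! ### Finite Dirichlet integral and orthogonality -/

theorem integrableOn_of_eq_zero_off_compact {D C : Set ℂ} (hC : IsCompact C) (hD : IsOpen D)
    (hCD : C ⊆ D) {F : ℂ → ℝ} (hF : ContinuousOn F D) (h0 : ∀ z ∈ D, z ∉ C → F z = 0) :
    IntegrableOn F D :=
  ((hF.mono hCD).integrableOn_compact hC).of_forall_sdiff_eq_zero hD.measurableSet
    fun z hz => h0 z hz.1 hz.2

/-- A proper holomorphic map to the disc has finite Dirichlet integral. Green's formula with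
`V = g' ḡ` bounds the integral over `{|g|² ≥ 3/4}` by the one over the compact set
`{|g|² ≤ 3/4}`. -/
theorem ProperToDisc.integrableOn_deriv {D : Set ℂ} {g : ℂ → ℂ} (hg : ProperToDisc D g)
    (hD : IsOpen D) : IntegrableOn (fun z => ‖deriv g z‖ ^ 2) D := by
  have hg' : DifferentiableOn ℂ (deriv g) D := hg.holo.deriv hD
  have hgs : ContDiffOn ℝ 1 g D := (hg.holo.contDiffOn hD).restrict_scalars ℝ
  have hg's : ContDiffOn ℝ 1 (deriv g) D := (hg'.contDiffOn hD).restrict_scalars ℝ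
  have hcgs : ContDiffOn ℝ 1 (fun z => (starRingEnd ℂ) (g z)) D :=
    conjCLE.contDiff.comp_contDiffOn hgs
  set h : ℂ → ℝ := fun z => ‖deriv g z‖ ^ 2 with hh
  have hhc : ContinuousOn h D := hg'.continuousOn.norm.pow 2
  have hh0 : ∀ z, 0 ≤ h z := fun z => by positivity
  have htc : ContinuousOn (fun z => normSq (g z)) D :=
    continuous_normSq.comp_continuousOn hg.holo.continuousOn
  have hcutc : ∀ j, ContinuousOn (fun z => cut j (normSq (g z))) D := fun j =>
    (cut_continuous j).comp_continuousOn htc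
  have hprimc : ∀ j, ContinuousOn (fun z => cutPrim j (normSq (g z))) D := fun j =>
    (cutPrim_contDiff j).continuous.comp_continuousOn htc
  have hgreen : ∀ j, ∫ z in D, h z * (cutPrim j (normSq (g z)) +
      normSq (g z) * cut j (normSq (g z))) = 0 := by
    intro j
    have hG := hg.green hD (hg's.mul hcgs) j
    have e : ∫ z in D, ((2 * (h z * (cutPrim j (normSq (g z)) +
        normSq (g z) * cut j (normSq (g z)))) : ℝ) : ℂ) = 0 := by
      rw [← hG]
      refine setIntegral_congr_fun hD.measurableSet fun z hz => ?_
      have hnz := hD.mem_nhds hz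
      have h1 : DifferentiableAt ℂ (deriv g) z := hg'.differentiableAt hnz
      have h2 : DifferentiableAt ℝ (fun z => (starRingEnd ℂ) (g z)) z :=
        (hcgs.differentiableOn one_ne_zero).differentiableAt hnz
      change _ = dbar (fun w => deriv g w * (starRingEnd ℂ) (g w)) z * _ + _
      rw [dbar_mul (h1.restrictScalars ℝ) h2, dbar_of_holomorphic h1,
        dbar_conj (hg.holo.differentiableAt hnz)]
      have e1 : ((h z : ℝ) : ℂ) = deriv g z * (starRingEnd ℂ) (deriv g z) := by
        rw [mul_conj, normSq_eq_norm_sq]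
      have e2 : ((normSq (g z) : ℝ) : ℂ) = g z * (starRingEnd ℂ) (g z) := (mul_conj _).symm
      push_cast
      rw [e1]
      generalize (cutPrim j (normSq (g z)) : ℂ) = x
      generalize (cut j (normSq (g z)) : ℂ) = y
      rw [e2]
      ring
    rw [integral_complex_ofReal, integral_const_mul] at e
    have e' : 2 * ∫ z in D, h z * (cutPrim j (normSq (g z)) +
      normSq (g z) * cut j (normSq (g z))) = 0 := by exact_mod_cast e
    linarith
  set E : Set ℂ := D ∩ g ⁻¹' {w | normSq w ≤ 3 / 4} with hE
  have hEc : IsCompact E := hg.isCompact_sublevel (by norm_num)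
  have hvan : ∀ j, ∀ z ∈ D, z ∉ D ∩ g ⁻¹' {w | normSq w ≤ cutRadius j} →
      cutRadius j ≤ normSq (g z) := by
    intro j z hz hzC
    by_contra hlt
    exact hzC ⟨hz, (not_le.1 hlt).le⟩
  have hi1 : ∀ j, IntegrableOn (fun z => h z * (cutPrim j (normSq (g z)) +
      normSq (g z) * cut j (normSq (g z)))) D := by
    intro j
    refine integrableOn_of_eq_zero_off_compact (hg.isCompact_sublevel (cutRadius_lt j)) hD
      Set.inter_subset_left (hhc.mul ((hprimc j).add (htc.mul (hcutc j)))) ?_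
    intro z hz hzC
    simp [cut_eq_zero (hvan j z hz hzC), cutPrim_eq_zero (hvan j z hz hzC)]
  have hi2 : ∀ j, IntegrableOn (fun z => h z * cut j (normSq (g z))) D := by
    intro j
    refine integrableOn_of_eq_zero_off_compact (hg.isCompact_sublevel (cutRadius_lt j)) hD
      Set.inter_subset_left (hhc.mul (hcutc j)) ?_
    intro z hz hzC
    simp [cut_eq_zero (hvan j z hz hzC)]
  have hi3 : IntegrableOn (E.indicator h) D := by
    have : IntegrableOn h E := (hhc.mono Set.inter_subset_left).integrableOn_compact hEc
    exact ((integrable_indicator_iff hEc.measurableSet).2 this).integrableOn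
  have hbound : ∀ j, ∫ z in D, h z * cut j (normSq (g z)) ≤
      4 * ∫ z in D, E.indicator h z := by
    intro j
    have hmono : ∫ z in D, (1 / 2 * (h z * cut j (normSq (g z))) - 2 * E.indicator h z) ≤ 0 := by
      rw [← hgreen j]
      refine setIntegral_mono_on (((hi2 j).const_mul _).sub (hi3.const_mul _)) (hi1 j)
        hD.measurableSet fun z hz => ?_
      have ht := hg.normSq_lt hz
      have ha := neg_cutPrim_le (j := j) ht.le
      have hb := cut_nonneg j (normSq (g z))
      have hc := cut_le_one j (normSq (g z))
      have hd := normSq_nonneg (g z)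
      -- off `E`, `cutPrim + |g|² cut ≥ (2|g|² - 1) cut ≥ cut / 2`
      by_cases hzE : z ∈ E
      · rw [Set.indicator_of_mem hzE]
        have : 1 / 2 * cut j (normSq (g z)) - 2 ≤ cutPrim j (normSq (g z)) +
          normSq (g z) * cut j (normSq (g z)) := by nlinarith
        nlinarith [mul_le_mul_of_nonneg_left this (hh0 z)]
      · rw [Set.indicator_of_notMem hzE]
        have h34 : 3 / 4 ≤ normSq (g z) := by
          by_contra hlt
          exact hzE ⟨hz, (not_le.1 hlt).le⟩
        have : 1 / 2 * cut j (normSq (g z)) ≤ cutPrim j (normSq (g z)) +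
          normSq (g z) * cut j (normSq (g z)) := by nlinarith
        nlinarith [mul_le_mul_of_nonneg_left this (hh0 z)]
    rw [integral_sub ((hi2 j).const_mul _) (hi3.const_mul _), integral_const_mul,
      integral_const_mul] at hmono
    linarith
  have hr : ∀ j : ℕ, 1 - 2 / ((j : ℝ) + 1) < 1 := fun j => by
    have : (0 : ℝ) < 2 / ((j : ℝ) + 1) := by positivity
    linarith
  have hcover : AECover (volume.restrict D) Filter.atTop
      (fun j : ℕ => D ∩ g ⁻¹' {w | normSq w ≤ 1 - 2 / ((j : ℝ) + 1)}) := by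
    constructor
    · refine ae_restrict_of_forall_mem hD.measurableSet fun z hz => ?_
      filter_upwards [eventually_le_one_sub (hg.normSq_lt hz)] with j hj
      exact ⟨hz, hj⟩
    · exact fun j => (hg.isCompact_sublevel (hr j)).measurableSet
  refine hcover.integrable_of_integral_bounded_of_nonneg_ae (4 * ∫ z in D, E.indicator h z)
    ?_ (Filter.Eventually.of_forall hh0) (Filter.Eventually.of_forall fun j => ?_)
  · intro j
    exact (((hhc.mono Set.inter_subset_left).integrableOn_compact
      (hg.isCompact_sublevel (hr j)))).mono_measure (Measure.restrict_le_self)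
  · refine le_trans ?_ (hbound j)
    have hm := (hg.isCompact_sublevel (hr j)).measurableSet
    calc _ = ∫ z in D ∩ g ⁻¹' {w | normSq w ≤ 1 - 2 / ((j : ℝ) + 1)},
          h z * cut j (normSq (g z)) ∂(volume.restrict D) := by
          refine setIntegral_congr_fun hm fun z hz => ?_
          have : cut j (normSq (g z)) = 1 := cut_eq_one hz.2
          simp [this]
      _ ≤ _ := setIntegral_le_integral (hi2 j)
          (Filter.Eventually.of_forall fun z => mul_nonneg (hh0 z) (cut_nonneg j _))

/-- Functions divisible by `g` are orthogonal to `g'`: Green's formula with `V = v = u / g`,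
in the limit where the cutoffs tend to `1`. -/
theorem ProperToDisc.orthogonal {D : Set ℂ} {g : ℂ → ℂ} (hg : ProperToDisc D g)
    (hD : IsOpen D) {u v : ℂ → ℂ} (hv : DifferentiableOn ℂ v D)
    (huv : ∀ z ∈ D, u z = v z * g z)
    (hint : IntegrableOn (fun z => u z * (starRingEnd ℂ) (deriv g z)) D) :
    ∫ z in D, u z * (starRingEnd ℂ) (deriv g z) = 0 := by
  have hvs : ContDiffOn ℝ 1 v D := (hv.contDiffOn hD).restrict_scalars ℝ
  have hgreen : ∀ j, ∫ z in D, (cut j (normSq (g z)) : ℂ) *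
      (u z * (starRingEnd ℂ) (deriv g z)) = 0 := by
    intro j
    have hG := hg.green hD hvs j
    have e : ∫ z in D, 2 * ((cut j (normSq (g z)) : ℂ) *
      (u z * (starRingEnd ℂ) (deriv g z))) = 0 := by
      rw [← hG]
      refine setIntegral_congr_fun hD.measurableSet fun z hz => ?_
      rw [dbar_of_holomorphic (hv.differentiableAt (hD.mem_nhds hz)), huv z hz]
      ring
    rw [integral_const_mul] at e
    simpa using e
  have hcutc : ∀ j, ContinuousOn (fun z => ((cut j (normSq (g z)) : ℝ) : ℂ)) D := fun j =>
    continuous_ofReal.comp_continuousOn ((cut_continuous j).comp_continuousOn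
      (continuous_normSq.comp_continuousOn hg.holo.continuousOn))
  have hlim : Filter.Tendsto (fun j : ℕ => ∫ z in D, (cut j (normSq (g z)) : ℂ) *
      (u z * (starRingEnd ℂ) (deriv g z))) Filter.atTop
      (nhds (∫ z in D, u z * (starRingEnd ℂ) (deriv g z))) := by
    refine tendsto_integral_of_dominated_convergence
      (fun z => ‖u z * (starRingEnd ℂ) (deriv g z)‖) (fun j => ?_) hint.norm (fun j => ?_) ?_
    · exact ((hcutc j).aestronglyMeasurable hD.measurableSet).mul hint.aestronglyMeasurable
    · refine Filter.Eventually.of_forall fun z => ?_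
      rw [norm_mul, norm_real, Real.norm_of_nonneg (cut_nonneg _ _)]
      exact mul_le_of_le_one_left (norm_nonneg _) (cut_le_one _ _)
    · refine ae_restrict_of_forall_mem hD.measurableSet fun z hz => ?_
      refine tendsto_const_nhds.congr' ?_
      filter_upwards [eventually_le_one_sub (hg.normSq_lt hz)] with j hj
      simp [cut_eq_one hj]
  simp only [hgreen] at hlim
  exact (tendsto_nhds_unique hlim tendsto_const_nhds)

/-! ### The derivative as a combination of kernel functions -/

theorem MemReducedBergman.memLp_s2 {D : Set ℂ} {u : ℂ → ℂ} (hD : IsOpen D)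
    (hu : MemReducedBergman D u) : MemLp u 2 (volume.restrict D) :=
  (memLp_two_iff_integrable_sq_norm
    (hu.1.continuousOn.aestronglyMeasurable hD.measurableSet)).2 hu.2.2

theorem MemReducedBergman.integrable_mul_conj {D : Set ℂ} {u w : ℂ → ℂ} (hD : IsOpen D)
    (hu : MemReducedBergman D u) (hw : MemReducedBergman D w) :
    IntegrableOn (fun z => u z * (starRingEnd ℂ) (w z)) D :=
  (hu.memLp_s2 hD).integrable_mul (hw.memLp_s2 hD).star

/-- The reduced Bergman space as a subspace of all functions `ℂ → ℂ`; the values outside `D`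
are arbitrary. -/
def reducedBergman (D : Set ℂ) (hD : IsOpen D) : Submodule ℂ (ℂ → ℂ) where
  carrier := {u | MemReducedBergman D u}
  zero_mem' := ⟨differentiableOn_const 0, ⟨fun _ => 0, differentiableOn_const 0,
    fun z _ => hasDerivAt_const z 0⟩, by simp⟩
  add_mem' := by
    rintro u w hu hw
    have hL := (hu.memLp_s2 hD).add (hw.memLp_s2 hD)
    obtain ⟨G, hG, hG'⟩ := hu.2.1
    obtain ⟨H, hH, hH'⟩ := hw.2.1
    exact ⟨hu.1.add hw.1, ⟨G + H, hG.add hH, fun z hz => (hG' z hz).add (hH' z hz)⟩,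
      (memLp_two_iff_integrable_sq_norm hL.1).1 hL⟩
  smul_mem' := by
    rintro c u hu
    have hL := (hu.memLp_s2 hD).const_smul c
    obtain ⟨G, hG, hG'⟩ := hu.2.1
    exact ⟨hu.1.const_smul c, ⟨c • G, hG.const_smul c, fun z hz => (hG' z hz).const_smul c⟩,
      (memLp_two_iff_integrable_sq_norm hL.1).1 hL⟩

/-- Division by a function with simple zeros. -/
theorem exists_holomorphic_quotient {D : Set ℂ} (hD : IsOpen D) {u g : ℂ → ℂ}
    (hu : DifferentiableOn ℂ u D) (hg : DifferentiableOn ℂ g D)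
    (hsimple : ∀ z ∈ D, g z = 0 → deriv g z ≠ 0) (hzero : ∀ z ∈ D, g z = 0 → u z = 0) :
    ∃ v : ℂ → ℂ, DifferentiableOn ℂ v D ∧ ∀ z ∈ D, u z = v z * g z := by
  classical
  refine ⟨fun z => if g z = 0 then deriv u z / deriv g z else u z / g z, ?_, ?_⟩
  · intro a ha
    refine DifferentiableAt.differentiableWithinAt ?_
    have hna := hD.mem_nhds ha
    have hgd := hg.differentiableAt hna
    have hud := hu.differentiableAt hna
    by_cases h0 : g a = 0
    · have h1 : DifferentiableAt ℂ (dslope u a) a :=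
        ((differentiableOn_dslope hna).2 hu).differentiableAt hna
      have h2 : DifferentiableAt ℂ (dslope g a) a :=
        ((differentiableOn_dslope hna).2 hg).differentiableAt hna
      have h3 : dslope g a a ≠ 0 := by rw [dslope_same]; exact hsimple a ha h0
      refine (h1.div h2 h3).congr_of_eventuallyEq ?_
      filter_upwards [h2.continuousAt.eventually_ne h3] with z hz
      rcases eq_or_ne z a with rfl | hza
      · simp [h0]
      · have hga : dslope g a z = (z - a)⁻¹ * g z := by
          rw [dslope_of_ne _ hza, slope_def_module, h0]; simp
        have hua : dslope u a z = (z - a)⁻¹ * u z := by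
          rw [dslope_of_ne _ hza, slope_def_module, hzero a ha h0]; simp
        have hz0 : g z ≠ 0 := by
          intro h; rw [hga, h] at hz; simp at hz
        have hza' : z - a ≠ 0 := sub_ne_zero.2 hza
        simp only [hz0, if_false, Pi.div_apply, hga, hua]
        field_simp
    · refine (hud.div hgd h0).congr_of_eventuallyEq ?_
      filter_upwards [hgd.continuousAt.eventually_ne h0] with z hz
      simp [hz]
  · intro z hz
    by_cases h0 : g z = 0
    · simp [h0, hzero z hz h0]
    · simp [h0]

theorem ProperToDisc.finite_zeros {D : Set ℂ} {g : ℂ → ℂ} (hg : ProperToDisc D g)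
    (hD : IsOpen D) (hsimple : ∀ z ∈ D, g z = 0 → deriv g z ≠ 0) :
    (D ∩ g ⁻¹' {0}).Finite := by
  by_contra hinf
  obtain ⟨a, haZ, hacc⟩ := Set.Infinite.exists_accPt_of_subset_isCompact hinf
    (hg.proper {0} (by simp) isCompact_singleton) subset_rfl
  have h1 := (hg.holo.differentiableAt (hD.mem_nhds haZ.1)).hasDerivAt.eventually_ne
    (c := 0) (hsimple a haZ.1 haZ.2)
  rw [accPt_iff_frequently_nhdsNE] at hacc
  exact hacc (h1.mono fun z hz hzZ => hz hzZ.2)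

/-- If all zeros of a proper map `g` to the disc are simple, then `g'` is a linear combination
of the kernel functions `K(·, a)` with `g a = 0`: the functional `u ↦ ⟨u, g'⟩` vanishes on the
common kernel of the finitely many evaluations at the zeros of `g`. -/
theorem ProperToDisc.deriv_eq_sum {D : Set ℂ} {g : ℂ → ℂ} (hg : ProperToDisc D g)
    (hD : IsOpen D) {K : ℂ → ℂ → ℂ} (hK : IsReducedBergmanKernel D K)
    (hsimple : ∀ z ∈ D, g z = 0 → deriv g z ≠ 0) :
    ∃ (s : Finset ℂ) (α : ℂ → ℂ), (∀ a ∈ s, a ∈ D ∧ g a = 0) ∧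
      ∀ z ∈ D, deriv g z = ∑ a ∈ s, α a * K z a := by
  classical
  have hfin := hg.finite_zeros hD hsimple
  set s := hfin.toFinset with hs
  have hsmem : ∀ a, a ∈ s ↔ a ∈ D ∧ g a = 0 := by intro a; simp [hs]
  have hg'mem : MemReducedBergman D (deriv g) :=
    ⟨hg.holo.deriv hD, ⟨g, hg.holo, fun z hz =>
      (hg.holo.differentiableAt (hD.mem_nhds hz)).hasDerivAt⟩, hg.integrableOn_deriv hD⟩
  -- pairing with a fixed element, as a linear functional
  let L : (w : ℂ → ℂ) → MemReducedBergman D w → (reducedBergman D hD →ₗ[ℂ] ℂ) := fun w hw =>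
    { toFun := fun u => ∫ z in D, u.1 z * (starRingEnd ℂ) (w z)
      map_add' := by
        intro u v
        rw [← integral_add (u.2.integrable_mul_conj hD hw) (v.2.integrable_mul_conj hD hw)]
        simp [add_mul]
      map_smul' := by
        intro c u
        simp only [RingHom.id_apply, smul_eq_mul]
        rw [← integral_const_mul]
        simp [mul_assoc] }
  have hspan : L (deriv g) hg'mem ∈ Submodule.span ℂ
      (Set.range fun a : s => L (fun z => K z a) (hK a ((hsmem a).1 a.2).1).1) := by
    refine mem_span_of_iInf_ker_le_ker fun u hu => ?_
    rw [Submodule.mem_iInf] at hu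
    have hu0 : ∀ z ∈ D, g z = 0 → u.1 z = 0 := by
      intro a ha ha0
      rw [(hK a ha).2 u.1 u.2]
      exact hu ⟨a, (hsmem a).2 ⟨ha, ha0⟩⟩
    obtain ⟨v, hv, huv⟩ := exists_holomorphic_quotient hD u.2.1 hg.holo hsimple hu0
    exact hg.orthogonal hD hv huv (u.2.integrable_mul_conj hD hg'mem)
  obtain ⟨c, hc⟩ := (Submodule.mem_span_range_iff_exists_fun ℂ).1 hspan
  set α : ℂ → ℂ := fun a => if h : a ∈ s then (starRingEnd ℂ) (c ⟨a, h⟩) else 0 with hα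
  refine ⟨s, α, fun a ha => (hsmem a).1 ha, ?_⟩
  -- the difference of the two sides is orthogonal to itself
  set d : ℂ → ℂ := deriv g - ∑ a ∈ s, α a • fun z => K z a with hd
  have hdmem : d ∈ reducedBergman D hD := by
    refine Submodule.sub_mem _ hg'mem (Submodule.sum_mem _ fun a ha => ?_)
    exact Submodule.smul_mem _ _ (hK a ((hsmem a).1 ha).1).1
  have hortho : ∫ z in D, d z * (starRingEnd ℂ) (d z) = 0 := by
    have h1 := LinearMap.congr_fun hc ⟨d, hdmem⟩
    simp only [LinearMap.sum_apply, LinearMap.smul_apply, smul_eq_mul] at h1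
    have hI : ∀ a ∈ s, IntegrableOn (fun z => d z * (starRingEnd ℂ) (K z a)) D := fun a ha =>
      MemReducedBergman.integrable_mul_conj hD hdmem (hK a ((hsmem a).1 ha).1).1
    have e : ∀ z, d z * (starRingEnd ℂ) (d z) = d z * (starRingEnd ℂ) (deriv g z) -
        ∑ a ∈ s, (starRingEnd ℂ) (α a) * (d z * (starRingEnd ℂ) (K z a)) := by
      intro z
      have hz : (starRingEnd ℂ) (d z) = (starRingEnd ℂ) (deriv g z) -
          ∑ a ∈ s, (starRingEnd ℂ) (α a) * (starRingEnd ℂ) (K z a) := by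
        simp [hd]
      rw [hz, mul_sub, Finset.mul_sum]
      congr 1
      refine Finset.sum_congr rfl fun a _ => by ring
    simp only [e]
    rw [integral_sub (MemReducedBergman.integrable_mul_conj hD hdmem hg'mem)
      (integrable_finsetSum _ fun a ha => (hI a ha).const_mul _), integral_finsetSum _
      fun a ha => (hI a ha).const_mul _, sub_eq_zero]
    simp only [integral_const_mul]
    rw [← Finset.sum_attach]
    refine Eq.trans h1.symm ?_
    rw [← Finset.univ_eq_attach]
    refine Finset.sum_congr rfl fun a _ => ?_
    simp [hα, L]
  have hd0 : ∀ z ∈ D, d z = 0 := by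
    have hint : IntegrableOn (fun z => ‖d z‖ ^ 2) D := hdmem.2.2
    have h2 : ∫ z in D, ‖d z‖ ^ 2 = 0 := by
      have : ∫ z in D, ((‖d z‖ ^ 2 : ℝ) : ℂ) = 0 := by
        rw [← hortho]
        refine integral_congr_ae (Filter.Eventually.of_forall fun z => ?_)
        simp [mul_conj, normSq_eq_norm_sq]
      rw [integral_complex_ofReal] at this
      exact_mod_cast this
    have hae := (integral_eq_zero_iff_of_nonneg (fun z => by positivity) hint).1 h2
    have hcont : ContinuousOn (fun z => ‖d z‖ ^ 2) D := hdmem.1.continuousOn.norm.pow 2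
    have := Measure.eqOn_open_of_ae_eq hae hD hcont continuousOn_const
    intro z hz
    simpa using this hz
  intro z hz
  have := hd0 z hz
  simp only [hd, Pi.sub_apply, Finset.sum_apply, Pi.smul_apply, smul_eq_mul] at this
  exact sub_eq_zero.1 this

/-! ### Disc automorphisms -/

/-- The disc automorphism sending `c` to `0`. -/
def moeb (c w : ℂ) : ℂ := (w - c) / (1 - (starRingEnd ℂ) c * w)

theorem one_sub_conj_mul_ne_zero {c w : ℂ} (hc : ‖c‖ < 1) (hw : ‖w‖ < 1) :
    1 - (starRingEnd ℂ) c * w ≠ 0 := by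
  intro h
  have h1 : ‖(starRingEnd ℂ) c * w‖ = 1 := by rw [← sub_eq_zero.1 h]; simp
  rw [norm_mul, RCLike.norm_conj] at h1
  nlinarith [norm_nonneg c, norm_nonneg w]

theorem norm_moeb_lt_one {c w : ℂ} (hc : ‖c‖ < 1) (hw : ‖w‖ < 1) : ‖moeb c w‖ < 1 := by
  have h0 := one_sub_conj_mul_ne_zero hc hw
  rw [moeb, norm_div, div_lt_one (norm_pos_iff.2 h0)]
  refine lt_of_pow_lt_pow_left₀ 2 (norm_nonneg _) ?_
  have e : ‖1 - (starRingEnd ℂ) c * w‖ ^ 2 - ‖w - c‖ ^ 2 = (1 - ‖c‖ ^ 2) * (1 - ‖w‖ ^ 2) := by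
    simp only [← normSq_eq_norm_sq, normSq_apply]
    simp
    ring
  have : 0 < (1 - ‖c‖ ^ 2) * (1 - ‖w‖ ^ 2) :=
    mul_pos (by nlinarith [norm_nonneg c]) (by nlinarith [norm_nonneg w])
  linarith

theorem moeb_neg_moeb {c w : ℂ} (hc : ‖c‖ < 1) (hw : ‖w‖ < 1) : moeb (-c) (moeb c w) = w := by
  have h0 := one_sub_conj_mul_ne_zero hc hw
  have h1 := one_sub_conj_mul_ne_zero hc hc
  have e : 1 - (starRingEnd ℂ) (-c) * ((w - c) / (1 - (starRingEnd ℂ) c * w)) =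
      (1 - (starRingEnd ℂ) c * c) / (1 - (starRingEnd ℂ) c * w) := by
    rw [map_neg]; field_simp; ring
  have e2 : (w - c) / (1 - (starRingEnd ℂ) c * w) - -c =
      w * ((1 - (starRingEnd ℂ) c * c) / (1 - (starRingEnd ℂ) c * w)) := by
    rw [← mul_div_assoc, eq_div_iff h0, sub_mul, div_mul_cancel₀ _ h0]; ring
  rw [moeb, moeb, e, e2, mul_div_assoc, div_self (div_ne_zero h1 h0), mul_one]

theorem continuousOn_moeb {c : ℂ} (hc : ‖c‖ < 1) : ContinuousOn (moeb c) (ball 0 1) := by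
  unfold moeb
  refine ContinuousOn.div (by fun_prop) (by fun_prop) fun w hw => ?_
  exact one_sub_conj_mul_ne_zero hc (mem_ball_zero_iff.1 hw)

theorem hasDerivAt_moeb_comp {c : ℂ} (hc : ‖c‖ < 1) {f : ℂ → ℂ} {z : ℂ}
    (hf : DifferentiableAt ℂ f z) (hz : ‖f z‖ < 1) :
    HasDerivAt (fun z => moeb c (f z)) (deriv f z * (1 - (starRingEnd ℂ) c * c) /
      (1 - (starRingEnd ℂ) c * f z) ^ 2) z := by
  have h0 := one_sub_conj_mul_ne_zero hc hz
  have h := (hf.hasDerivAt.sub_const c).fun_div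
    ((hf.hasDerivAt.const_mul ((starRingEnd ℂ) c)).const_sub 1) h0
  refine h.congr_deriv ?_
  congr 1
  ring

theorem ProperToDisc.moeb_comp {D : Set ℂ} {f : ℂ → ℂ} (hf : ProperToDisc D f) (hD : IsOpen D)
    {c : ℂ} (hc : ‖c‖ < 1) : ProperToDisc D (fun z => moeb c (f z)) := by
  have hm : ∀ z ∈ D, ‖f z‖ < 1 := fun z hz => mem_ball_zero_iff.1 (hf.maps hz)
  have hc' : ‖-c‖ < 1 := by rwa [norm_neg]
  refine ⟨fun z hz => ?_, fun z hz => ?_, fun C hC hCc => ?_⟩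
  · exact (hasDerivAt_moeb_comp hc (hf.holo.differentiableAt (hD.mem_nhds hz))
      (hm z hz)).differentiableAt.differentiableWithinAt
  · exact mem_ball_zero_iff.2 (norm_moeb_lt_one hc (hm z hz))
  · have e : D ∩ (fun z => moeb c (f z)) ⁻¹' C = D ∩ f ⁻¹' (moeb (-c) '' C) := by
      ext z
      constructor
      · rintro ⟨hz, hzC⟩
        exact ⟨hz, _, hzC, moeb_neg_moeb hc (hm z hz)⟩
      · rintro ⟨hz, w, hw, hwz⟩
        refine ⟨hz, ?_⟩
        have := moeb_neg_moeb hc' (mem_ball_zero_iff.1 (hC hw))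
        rw [neg_neg, hwz] at this
        simpa [this] using hw
    rw [e]
    refine hf.proper _ ?_ (hCc.image_of_continuousOn ((continuousOn_moeb hc').mono hC))
    rintro _ ⟨w, hw, rfl⟩
    exact mem_ball_zero_iff.2 (norm_moeb_lt_one hc' (mem_ball_zero_iff.1 (hC hw)))

/-! ### Rational functions -/

/-- `h` agrees on `D` with a quotient of polynomials, in cleared-denominator form. -/
def IsRat (D : Set ℂ) (h : ℂ → ℂ) : Prop :=
  ∃ p q : Polynomial ℂ, q ≠ 0 ∧ ∀ z ∈ D, h z * q.eval z = p.eval z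

theorem IsRat.congr {D : Set ℂ} {h k : ℂ → ℂ} (hh : IsRat D h) (e : ∀ z ∈ D, k z = h z) :
    IsRat D k := by
  obtain ⟨p, q, hq, H⟩ := hh
  exact ⟨p, q, hq, fun z hz => by rw [e z hz, H z hz]⟩

theorem isRat_const (D : Set ℂ) (c : ℂ) : IsRat D fun _ => c :=
  ⟨Polynomial.C c, 1, one_ne_zero, by simp⟩

theorem IsRat.add {D : Set ℂ} {h k : ℂ → ℂ} (hh : IsRat D h) (hk : IsRat D k) :
    IsRat D fun z => h z + k z := by
  obtain ⟨p, q, hq, H⟩ := hh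
  obtain ⟨r, s, hs, J⟩ := hk
  refine ⟨p * s + r * q, q * s, mul_ne_zero hq hs, fun z hz => ?_⟩
  simp only [Polynomial.eval_add, Polynomial.eval_mul, ← H z hz, ← J z hz]
  ring

theorem IsRat.mul {D : Set ℂ} {h k : ℂ → ℂ} (hh : IsRat D h) (hk : IsRat D k) :
    IsRat D fun z => h z * k z := by
  obtain ⟨p, q, hq, H⟩ := hh
  obtain ⟨r, s, hs, J⟩ := hk
  refine ⟨p * r, q * s, mul_ne_zero hq hs, fun z hz => ?_⟩
  simp only [Polynomial.eval_mul, ← H z hz, ← J z hz]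
  ring

theorem IsRat.sum {D : Set ℂ} {ι : Type*} {s : Finset ι} {h : ι → ℂ → ℂ}
    (H : ∀ i ∈ s, IsRat D (h i)) : IsRat D fun z => ∑ i ∈ s, h i z := by
  classical
  induction s using Finset.induction_on with
  | empty => simpa using isRat_const D 0
  | insert a s ha ih =>
    simp only [Finset.sum_insert ha]
    exact (H a (by simp)).add (ih fun i hi => H i (by simp [hi]))

/-- Division by a rational function that is nonzero at infinitely many points. -/
theorem IsRat.of_mul {D : Set ℂ} {h k : ℂ → ℂ} (hhk : IsRat D fun z => h z * k z)
    (hk : IsRat D k) (hinf : {z ∈ D | k z ≠ 0}.Infinite) : IsRat D h := by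
  obtain ⟨p, q, hq, H⟩ := hhk
  obtain ⟨r, s, hs, J⟩ := hk
  have hr : r ≠ 0 := by
    rintro rfl
    refine hinf ((s.rootSet_finite ℂ).subset ?_)
    rintro z ⟨hz, hkz⟩
    have := J z hz
    rw [Polynomial.eval_zero] at this
    rw [Polynomial.mem_rootSet]
    exact ⟨hs, by simpa using (mul_eq_zero.1 this).resolve_left hkz⟩
  refine ⟨p * s, r * q, mul_ne_zero hr hq, fun z hz => ?_⟩
  simp only [Polynomial.eval_mul, ← H z hz, ← J z hz]
  ring

/-- The polynomial `Q(X, b)`. -/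
def sliceFst (Q : MvPolynomial (Fin 2) ℂ) (b : ℂ) : Polynomial ℂ :=
  MvPolynomial.aeval ![Polynomial.X, Polynomial.C b] Q

theorem eval_sliceFst (Q : MvPolynomial (Fin 2) ℂ) (z b : ℂ) :
    (sliceFst Q b).eval z = MvPolynomial.eval ![z, b] Q := by
  have h : (Polynomial.evalRingHom z).comp
      (MvPolynomial.aeval (R := ℂ) ![Polynomial.X, Polynomial.C b]).toRingHom =
      MvPolynomial.eval ![z, b] := by
    refine MvPolynomial.ringHom_ext (fun r => by simp) fun i => ?_
    fin_cases i <;> simp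
  exact RingHom.congr_fun h Q

/-- The polynomial `Q(a, X)`. -/
def sliceSnd (Q : MvPolynomial (Fin 2) ℂ) (a : ℂ) : Polynomial ℂ :=
  MvPolynomial.aeval ![Polynomial.C a, Polynomial.X] Q

theorem eval_sliceSnd (Q : MvPolynomial (Fin 2) ℂ) (a w : ℂ) :
    (sliceSnd Q a).eval w = MvPolynomial.eval ![a, w] Q := by
  have h : (Polynomial.evalRingHom w).comp
      (MvPolynomial.aeval (R := ℂ) ![Polynomial.C a, Polynomial.X]).toRingHom =
      MvPolynomial.eval ![a, w] := by
    refine MvPolynomial.ringHom_ext (fun r => by simp) fun i => ?_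
    fin_cases i <;> simp
  exact RingHom.congr_fun h Q

theorem finite_sliceFst_eq_zero {Q : MvPolynomial (Fin 2) ℂ} (hQ : Q ≠ 0) :
    {b | sliceFst Q b = 0}.Finite := by
  obtain ⟨x, hx⟩ : ∃ x : Fin 2 → ℂ, MvPolynomial.eval x Q ≠ 0 := by
    by_contra! h
    exact hQ (MvPolynomial.funext fun x => by simp [h x])
  have hx' : x = ![x 0, x 1] := by ext i; fin_cases i <;> rfl
  have hne : sliceSnd Q (x 0) ≠ 0 := by
    intro h
    apply hx
    rw [hx', ← eval_sliceSnd, h, Polynomial.eval_zero]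
  refine ((sliceSnd Q (x 0)).rootSet_finite ℂ).subset fun b hb => ?_
  rw [Polynomial.mem_rootSet]
  refine ⟨hne, ?_⟩
  have hb' : sliceFst Q b = 0 := hb
  rw [Polynomial.coe_aeval_eq_eval, eval_sliceSnd, ← eval_sliceFst, hb', Polynomial.eval_zero]

/-! ### Regular values and the recovery of `f` -/

/-- A holomorphic function on a domain that is not identically zero has countably many zeros. -/
theorem countable_zeros {D : Set ℂ} (hDo : IsOpen D) (hDc : IsConnected D) {h : ℂ → ℂ}
    (hh : DifferentiableOn ℂ h D) {x : ℂ} (hx : x ∈ D) (hx0 : h x ≠ 0) :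
    {z ∈ D | h z = 0}.Countable := by
  have han : AnalyticOnNhd ℂ h D := hh.analyticOnNhd hDo
  have hcod := han.preimage_zero_mem_codiscreteWithin hx0 hx hDc
  have hdisc : IsDiscrete ((h ⁻¹' {0}ᶜ)ᶜ ∩ D) :=
    isDiscrete_of_codiscreteWithin (by simpa using hcod)
  refine ((HereditarilyLindelofSpace.isLindelof _).countable_of_isDiscrete hdisc).mono ?_
  rintro z ⟨hz, hz0⟩
  exact ⟨by simp [hz0], hz⟩

theorem exists_mem_notMem_of_countable {U S : Set ℂ} (hU : IsOpen U) (hne : U.Nonempty)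
    (hS : S.Countable) : ∃ c ∈ U, c ∉ S := by
  obtain ⟨c, hcU, hcS⟩ := (hS.dense_compl ℂ).inter_open_nonempty U hU hne
  exact ⟨c, hcU, hcS⟩

/-- A proper map is not constant, as `D` would then be compact. -/
theorem ProperToDisc.exists_deriv_ne_zero {D : Set ℂ} {f : ℂ → ℂ} (hf : ProperToDisc D f)
    (hDo : IsOpen D) (hDc : IsConnected D) : ∃ x ∈ D, deriv f x ≠ 0 := by
  by_contra! h
  obtain ⟨x, hx⟩ := hDc.nonempty
  have hconst : ∀ z ∈ D, f z = f x := fun z hz =>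
    hDo.is_const_of_deriv_eq_zero hDc.isPreconnected hf.holo h hz hx
  have hcomp : IsCompact D := by
    have := hf.proper {f x} (by simpa using hf.maps hx) isCompact_singleton
    have e : D ∩ f ⁻¹' {f x} = D := Set.inter_eq_left.2 fun z hz => hconst z hz
    rwa [e] at this
  have huniv : D = Set.univ := IsClopen.eq_univ ⟨hcomp.isClosed, hDo⟩ hDc.nonempty
  rw [huniv] at hcomp
  exact noncompact_univ ℂ hcomp

/-- For a regular value `c`, the derivative of `moeb c ∘ f` is a combination of kernel functions
`K(·, a)` with `f a = c`. Each of them is rational because `Q(X, ā)` is not the zero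
polynomial. -/
theorem ProperToDisc.isRat_deriv_div {D : Set ℂ} {f : ℂ → ℂ} (hf : ProperToDisc D f)
    (hD : IsOpen D) {K : ℂ → ℂ → ℂ} (hK : IsReducedBergmanKernel D K)
    {P Q : MvPolynomial (Fin 2) ℂ}
    (hrat : ∀ z ∈ D, ∀ w ∈ D,
      K z w * MvPolynomial.eval ![z, (starRingEnd ℂ) w] Q =
        MvPolynomial.eval ![z, (starRingEnd ℂ) w] P)
    {c : ℂ} (hc : ‖c‖ < 1)
    (hreg : ∀ z ∈ D, f z = c → deriv f z ≠ 0 ∧ sliceFst Q ((starRingEnd ℂ) z) ≠ 0) :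
    IsRat D fun z => deriv f z / (1 - (starRingEnd ℂ) c * f z) ^ 2 := by
  have hm : ∀ z ∈ D, ‖f z‖ < 1 := fun z hz => mem_ball_zero_iff.1 (hf.maps hz)
  have hcc := one_sub_conj_mul_ne_zero hc hc
  have hder : ∀ z ∈ D, deriv (fun z => moeb c (f z)) z = deriv f z *
      (1 - (starRingEnd ℂ) c * c) / (1 - (starRingEnd ℂ) c * f z) ^ 2 := fun z hz =>
    (hasDerivAt_moeb_comp hc (hf.holo.differentiableAt (hD.mem_nhds hz)) (hm z hz)).deriv
  have hz0 : ∀ z ∈ D, moeb c (f z) = 0 → f z = c := by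
    intro z hz h
    rw [moeb, div_eq_zero_iff] at h
    exact sub_eq_zero.1 (h.resolve_right (one_sub_conj_mul_ne_zero hc (hm z hz)))
  obtain ⟨s, α, hs, hsum⟩ := (hf.moeb_comp hD hc).deriv_eq_sum hD hK (by
    intro z hz h
    rw [hder z hz]
    exact div_ne_zero (mul_ne_zero (hreg z hz (hz0 z hz h)).1 hcc)
      (pow_ne_zero _ (one_sub_conj_mul_ne_zero hc (hm z hz))))
  have hKrat : ∀ a ∈ s, IsRat D fun z => K z a := by
    intro a ha
    obtain ⟨haD, ha0⟩ := hs a ha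
    refine ⟨sliceFst P ((starRingEnd ℂ) a), sliceFst Q ((starRingEnd ℂ) a),
      (hreg a haD (hz0 a haD ha0)).2, fun z hz => ?_⟩
    rw [eval_sliceFst, eval_sliceFst]
    exact hrat z hz a haD
  have h := (isRat_const D (1 - (starRingEnd ℂ) c * c)⁻¹).mul
    (IsRat.sum fun a ha => (isRat_const D (α a)).mul (hKrat a ha))
  refine h.congr fun z hz => ?_
  rw [← hsum z hz, hder z hz]
  field_simp

/-- If `k / (1 - aᵢ f)²` is rational for three distinct `aᵢ`, then so is `f`. The square of
`G = (1 - a₂ f) / (1 - a₁ f)` is rational, and so is that of the affine combination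
`A + B G = (1 - a₃ f) / (1 - a₁ f)`; expanding the latter square isolates `G`. -/
theorem isRat_of_three {D : Set ℂ} {f k : ℂ → ℂ} {a₁ a₂ a₃ : ℂ} (h12 : a₁ ≠ a₂) (h13 : a₁ ≠ a₃)
    (h23 : a₂ ≠ a₃) (n1 : ∀ z ∈ D, 1 - a₁ * f z ≠ 0) (n2 : ∀ z ∈ D, 1 - a₂ * f z ≠ 0)
    (n3 : ∀ z ∈ D, 1 - a₃ * f z ≠ 0) (hinf : {z ∈ D | k z ≠ 0}.Infinite)
    (r1 : IsRat D fun z => k z / (1 - a₁ * f z) ^ 2)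
    (r2 : IsRat D fun z => k z / (1 - a₂ * f z) ^ 2)
    (r3 : IsRat D fun z => k z / (1 - a₃ * f z) ^ 2) : IsRat D f := by
  have hsq : ∀ a : ℂ, (∀ z ∈ D, 1 - a * f z ≠ 0) →
      (IsRat D fun z => k z / (1 - a * f z) ^ 2) →
      IsRat D fun z => ((1 - a * f z) / (1 - a₁ * f z)) ^ 2 := by
    intro a na ra
    refine IsRat.of_mul (r1.congr fun z hz => ?_) ra (hinf.mono ?_)
    · have := na z hz
      have := n1 z hz
      field_simp
    · rintro z ⟨hz, hkz⟩
      exact ⟨hz, div_ne_zero hkz (pow_ne_zero _ (na z hz))⟩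
  have s2 := hsq a₂ n2 r2
  have s3 := hsq a₃ n3 r3
  have d12 : a₂ - a₁ ≠ 0 := sub_ne_zero.2 h12.symm
  have d13 : a₃ - a₁ ≠ 0 := sub_ne_zero.2 h13.symm
  have d23 : a₂ - a₃ ≠ 0 := sub_ne_zero.2 h23
  have hG : IsRat D fun z => (1 - a₂ * f z) / (1 - a₁ * f z) := by
    have h := (isRat_const D ((a₂ - a₁) ^ 2 / (2 * (a₂ - a₃) * (a₃ - a₁)))).mul
      (s3.add (((isRat_const D (-((a₂ - a₃) / (a₂ - a₁)) ^ 2))).add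
        ((isRat_const D (-((a₃ - a₁) / (a₂ - a₁)) ^ 2)).mul s2)))
    refine h.congr fun z hz => ?_
    have hn := n1 z hz
    have e3 : (1 - a₃ * f z) / (1 - a₁ * f z) = (a₂ - a₃) / (a₂ - a₁) +
        (a₃ - a₁) / (a₂ - a₁) * ((1 - a₂ * f z) / (1 - a₁ * f z)) := by
      rw [div_eq_iff hn, add_mul, mul_assoc, div_mul_cancel₀ _ hn]
      field_simp
      ring
    rw [e3]
    generalize (1 - a₂ * f z) / (1 - a₁ * f z) = G
    field_simp
    ring
  -- solve `1 - a₂ f = G (1 - a₁ f)` for `f`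
  have hden : IsRat D fun z => a₁ * ((1 - a₂ * f z) / (1 - a₁ * f z)) + -a₂ :=
    ((isRat_const D a₁).mul hG).add (isRat_const D (-a₂))
  refine IsRat.of_mul ((hG.add (isRat_const D (-1))).congr fun z hz => ?_) hden
    (hinf.mono ?_)
  · have hG' := div_mul_cancel₀ (1 - a₂ * f z) (n1 z hz)
    linear_combination -hG'
  · rintro z ⟨hz, -⟩
    have hn := n1 z hz
    refine ⟨hz, ?_⟩
    have e : a₁ * ((1 - a₂ * f z) / (1 - a₁ * f z)) + -a₂ = (a₁ - a₂) / (1 - a₁ * f z) := by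
      field_simp
      ring
    rw [e]
    exact div_ne_zero (sub_ne_zero.2 h12) hn

/-- If the reduced Bergman kernel of a bounded planar domain `D` is rational, then
every proper holomorphic map `f : D → 𝔻` is a rational function. -/
theorem proper_map_rational_of_reducedBergmanKernel_rational (D : Set ℂ)
    (hDo : IsOpen D) (hDc : IsConnected D) (hDb : Bornology.IsBounded D)
    (K : ℂ → ℂ → ℂ) (hK : IsReducedBergmanKernel D K)
    (P Q : MvPolynomial (Fin 2) ℂ) (hQ : Q ≠ 0)
    (hrat : ∀ z ∈ D, ∀ w ∈ D,
      K z w * MvPolynomial.eval ![z, (starRingEnd ℂ) w] Q =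
        MvPolynomial.eval ![z, (starRingEnd ℂ) w] P)
    (f : ℂ → ℂ) (hf : DifferentiableOn ℂ f D) (hmaps : Set.MapsTo f D (ball (0 : ℂ) 1))
    (hproper : ∀ C : Set ℂ, C ⊆ ball (0 : ℂ) 1 → IsCompact C → IsCompact (D ∩ f ⁻¹' C)) :
    ∃ p q : Polynomial ℂ, q ≠ 0 ∧ ∀ z ∈ D, f z * q.eval z = p.eval z := by
  have hF : ProperToDisc D f := ⟨hf, hmaps, hproper⟩
  have hm : ∀ z ∈ D, ‖f z‖ < 1 := fun z hz => mem_ball_zero_iff.1 (hmaps hz)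
  obtain ⟨x, hxD, hx⟩ := hF.exists_deriv_ne_zero hDo hDc
  have hcrit := countable_zeros hDo hDc (hf.deriv hDo) hxD hx
  have hinf : {z ∈ D | deriv f z ≠ 0}.Infinite := by
    intro hfin
    obtain ⟨z, hz, hzn⟩ := exists_mem_notMem_of_countable hDo ⟨x, hxD⟩
      (hcrit.union hfin.countable)
    by_cases h : deriv f z = 0
    · exact hzn (Or.inl ⟨hz, h⟩)
    · exact hzn (Or.inr ⟨hz, h⟩)
  have hbad : {z : ℂ | sliceFst Q ((starRingEnd ℂ) z) = 0}.Countable :=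
    ((finite_sliceFst_eq_zero hQ).preimage
      ((starRingEnd ℂ).injective.injOn (s := (starRingEnd ℂ) ⁻¹' _))).countable
  -- the values to avoid: critical values, and images of points `a` with `Q(X, ā) = 0`
  set S : Set ℂ := f '' ({z ∈ D | deriv f z = 0} ∪ {z | sliceFst Q ((starRingEnd ℂ) z) = 0})
  have hS : S.Countable := (hcrit.union hbad).image f
  have hgood : ∀ c ∈ ball (0 : ℂ) 1, c ∉ S →
      IsRat D fun z => deriv f z / (1 - (starRingEnd ℂ) c * f z) ^ 2 := by
    intro c hc hcS
    refine hF.isRat_deriv_div hDo hK hrat (mem_ball_zero_iff.1 hc) fun z hz hzc => ?_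
    exact ⟨fun h => hcS ⟨z, Or.inl ⟨hz, h⟩, hzc⟩, fun h => hcS ⟨z, Or.inr h, hzc⟩⟩
  have hne : (ball (0 : ℂ) 1).Nonempty := ⟨0, by simp⟩
  obtain ⟨c₁, b1, g1⟩ := exists_mem_notMem_of_countable isOpen_ball hne hS
  obtain ⟨c₂, b2, g2⟩ := exists_mem_notMem_of_countable isOpen_ball hne
    (hS.union (Set.countable_singleton c₁))
  obtain ⟨c₃, b3, g3⟩ := exists_mem_notMem_of_countable isOpen_ball hne
    (hS.union ((Set.countable_singleton c₁).union (Set.countable_singleton c₂)))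
  simp only [Set.mem_union, Set.mem_singleton_iff, not_or] at g2 g3
  have hnz : ∀ c ∈ ball (0 : ℂ) 1, ∀ z ∈ D, 1 - (starRingEnd ℂ) c * f z ≠ 0 :=
    fun c hc z hz => one_sub_conj_mul_ne_zero (mem_ball_zero_iff.1 hc) (hm z hz)
  have hinj := (starRingEnd ℂ).injective
  exact isRat_of_three (hinj.ne (Ne.symm g2.2)) (hinj.ne (Ne.symm g3.2.1))
    (hinj.ne (Ne.symm g3.2.2)) (hnz c₁ b1) (hnz c₂ b2) (hnz c₃ b3) hinf
    (hgood c₁ b1 g1) (hgood c₂ b2 g2.1) (hgood c₃ b3 g3.1)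
end
end

section
/- Let D ⊆ ℂ be a domain and V ⊆ D a discrete subset (V is closed in D and each of its points is isolated). Suppose h is holomorphic on D \ V and the derivative h′ extends holomorphically across V, i.e. there exists a holomorphic function g on D with g(z) = h′(z) for all z ∈ D \ V. Then h extends holomorphically across V: there exists a holomorphic function H on D with H(z) = h(z) for all z ∈ D \ V. -/
/-!
The extension exists locally, and the local extensions are forced to agree. Around a point
`c ∈ D` take a disc in `D` whose only possible point of `V` is `c`. The holomorphic function `g`
has a primitive `F` on this disc, and `h - F` has derivative zero on the punctured disc, which is
connected (`isPreconnected_ball_diff_center`), so `h` equals `F` plus a constant there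
(`exists_local_extension`). Since the value of a continuous extension at each point is the
punctured limit of `h`, the function `z ↦ limUnder (𝓝[≠] z) h` coincides with the local
extension on every such disc; this makes it a global holomorphic extension.
-/


open MeasureTheory Complex Metric

noncomputable section

/-- `V` is a discrete subset of `D`: it is contained in `D` and has no accumulation
point in `D` (equivalently, it is closed in `D` and all its points are isolated). -/
def IsDiscreteIn (V D : Set ℂ) : Prop :=
  V ⊆ D ∧ ∀ z ∈ D, ∃ ε > 0, ∀ v ∈ V, v ∈ ball z ε → v = z

open Filter Topology

/-- A punctured disc about `0` is the image of a half-plane under `exp`; the general case follows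
by translation. -/
lemma isPreconnected_ball_diff_center (c : ℂ) (r : ℝ) : IsPreconnected (ball c r \ {c}) := by
  rcases le_or_gt r 0 with hr | hr
  · simp [ball_eq_empty.2 hr, isPreconnected_empty]
  have himage : (fun w : ℂ => c + exp w) '' {w : ℂ | w.re < Real.log r} = ball c r \ {c} := by
    ext z
    constructor
    · rintro ⟨w, hw, rfl⟩
      refine ⟨?_, by simp [exp_ne_zero]⟩
      simpa [mem_ball, dist_eq_norm, norm_exp] using (Real.lt_log_iff_exp_lt hr).1 hw
    · rintro ⟨hz, hzc⟩
      have hne : z - c ≠ 0 := sub_ne_zero.2 hzc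
      refine ⟨log (z - c), ?_, by simp [exp_log hne]⟩
      have hz' : ‖z - c‖ < r := by simpa [dist_eq_norm] using hz
      simpa [log_re] using Real.log_lt_log (norm_pos_iff.2 hne) hz'
  rw [← himage]
  exact (convex_halfSpace_re_lt _).isPreconnected.image _ (by fun_prop)

/-- Subtracting a primitive of `g` from `h` leaves a constant on the punctured disc. -/
lemma exists_local_extension {c : ℂ} {r : ℝ} {h g : ℂ → ℂ}
    (hh : DifferentiableOn ℂ h (ball c r \ {c})) (hg : DifferentiableOn ℂ g (ball c r))
    (hgh : ∀ z ∈ ball c r \ {c}, g z = deriv h z) :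
    ∃ F : ℂ → ℂ, DifferentiableOn ℂ F (ball c r) ∧ ∀ z ∈ ball c r \ {c}, h z = F z := by
  obtain ⟨F, hF⟩ := hg.isExactOn_ball
  have hFd : DifferentiableOn ℂ F (ball c r) :=
    fun z hz => (hF z hz).differentiableAt.differentiableWithinAt
  obtain ⟨a, ha⟩ := (isOpen_ball.sdiff isClosed_singleton).exists_eq_add_of_deriv_eq
    (isPreconnected_ball_diff_center c r) hh (hFd.mono Set.sdiff_subset)
    (fun z hz => by rw [← hgh z hz, (hF z hz.1).deriv])
  exact ⟨fun z => F z + a, hFd.add_const a, ha⟩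

/-- A function agreeing with a holomorphic `F` on the punctured disc about `c` has punctured limit
`F w` at every point `w` of the disc, the centre included. -/
lemma limUnder_eq_of_eq_on_punctured {c : ℂ} {r : ℝ} {h F : ℂ → ℂ}
    (hF : DifferentiableOn ℂ F (ball c r)) (hhF : ∀ z ∈ ball c r \ {c}, h z = F z)
    {w : ℂ} (hw : w ∈ ball c r) : limUnder (𝓝[≠] w) h = F w := by
  have hball : ball c r ∈ 𝓝 w := isOpen_ball.mem_nhds hw
  have hne : ∀ᶠ z in 𝓝[≠] w, z ≠ c := by
    rcases eq_or_ne w c with rfl | hwc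
    · exact self_mem_nhdsWithin
    · exact nhdsWithin_le_nhds (isOpen_ne.mem_nhds hwc)
  have heq : F =ᶠ[𝓝[≠] w] h := by
    filter_upwards [nhdsWithin_le_nhds hball, hne] with z hz hzc
    exact (hhF z ⟨hz, hzc⟩).symm
  have hcont : Tendsto F (𝓝[≠] w) (𝓝 (F w)) :=
    (hF.differentiableAt hball).continuousAt.tendsto.mono_left nhdsWithin_le_nhds
  exact (hcont.congr' heq).limUnder_eq

/-- If `h` is holomorphic on `D \ V` for a discrete subset `V` of a domain `D`, and the
derivative `h'` extends holomorphically across `V`, then `h` itself extends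
holomorphically across `V`. -/
theorem extends_of_deriv_extends (D V : Set ℂ)
    (hDo : IsOpen D) (hDc : IsConnected D) (hV : IsDiscreteIn V D)
    (h : ℂ → ℂ) (hh : DifferentiableOn ℂ h (D \ V))
    (g : ℂ → ℂ) (hg : DifferentiableOn ℂ g D)
    (hgh : ∀ z ∈ D \ V, g z = deriv h z) :
    ∃ H : ℂ → ℂ, DifferentiableOn ℂ H D ∧ ∀ z ∈ D \ V, H z = h z := by
  have hdisc : ∀ c ∈ D, ∃ r > 0, ball c r ⊆ D ∧ ball c r \ {c} ⊆ D \ V := by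
    intro c hc
    obtain ⟨ε, hε, hεV⟩ := hV.2 c hc
    obtain ⟨δ, hδ, hδD⟩ := Metric.isOpen_iff.1 hDo c hc
    have hsub : ball c (min ε δ) ⊆ D := (ball_subset_ball (min_le_right _ _)).trans hδD
    exact ⟨min ε δ, lt_min hε hδ, hsub, fun z hz => ⟨hsub hz.1, fun hzV =>
      hz.2 (hεV z hzV (ball_subset_ball (min_le_left _ _) hz.1))⟩⟩
  refine ⟨fun z => limUnder (𝓝[≠] z) h, fun c hc => ?_, fun c hc => ?_⟩
  · obtain ⟨r, hr, hrD, hrV⟩ := hdisc c hc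
    obtain ⟨F, hF, hhF⟩ := exists_local_extension (hh.mono hrV) (hg.mono hrD)
      (fun z hz => hgh z (hrV hz))
    have hnhds : ball c r ∈ 𝓝 c := ball_mem_nhds c hr
    have heq : (fun z => limUnder (𝓝[≠] z) h) =ᶠ[𝓝 c] F := by
      filter_upwards [hnhds] with w hw
      exact limUnder_eq_of_eq_on_punctured hF hhF hw
    exact ((hF.differentiableAt hnhds).congr_of_eventuallyEq heq).differentiableWithinAt
  · obtain ⟨r, hr, -, hrV⟩ := hdisc c hc.1
    -- As `c ∉ V`, the whole disc avoids `V`, so `h` serves as its own local extension.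
    have hball : ball c r ⊆ D \ V := fun z hz => by
      rcases eq_or_ne z c with rfl | hzc
      · exact hc
      · exact hrV ⟨hz, hzc⟩
    exact limUnder_eq_of_eq_on_punctured (hh.mono hball) (fun _ _ => rfl) (mem_ball_self hr)
end
end

section
/- Let D ⊆ ℂ be a domain, V ⊆ D a discrete subset (closed in D with all points isolated), and μ : D → (0, ∞) a measurable function with 1/μ ∈ L^∞_loc(D), i.e. for every compact K ⊆ D there is c > 0 with μ ≥ c almost everywhere on K. If h is holomorphic on D \ V and ∫_{D \ V} |h|² μ dA < ∞, then h extends holomorphically across V: there exists a holomorphic function H on D with H = h on D \ V, and ∫_D |H|² μ dA < ∞. -/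
/-!
Near a point `v ∈ V` the weight is bounded below, so `h` is square-integrable for Lebesgue measure
on a punctured disc around `v`. Applying the area mean value inequality to `h ^ 2` on the disc
`ball z (‖z - v‖ / 2)`, which avoids `v`, gives
`π ‖z - v‖² / 4 * ‖h z‖² ≤ ∫_{ball z (‖z - v‖ / 2)} ‖h‖²`, and the right side tends to `0` as
`z → v` by absolute continuity of the integral. Hence `h z = o((z - v)⁻¹)`, which is the hypothesis
of Riemann's removable singularity theorem. The extension is given on `V` by the punctured limits
of `h`; since `V` is a null set, the integrability statement does not see the new values.
-/

open MeasureTheory Complex Metric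

noncomputable section

open Filter Topology Set in
/-- Mean value inequality on a circle, in the parametrization used by polar coordinates. -/
lemma enorm_center_le_circle {f : ℂ → ℂ} {z : ℂ} {r ρ : ℝ} (hf : DifferentiableOn ℂ f (ball z r))
    (h0 : 0 < ρ) (hr : ρ < r) :
    ENNReal.ofReal (2 * Real.pi) * ‖f z‖ₑ ≤
      ∫⁻ θ in Ioo (-Real.pi) Real.pi, ‖f (circleMap z ρ θ)‖ₑ := by
  have hsub : closedBall z |ρ| ⊆ ball z r := by
    rw [abs_of_pos h0]; exact closedBall_subset_ball hr
  have h1 : Real.circleAverage f z ρ = f z := (hf.diffContOnCl_ball hsub).circleAverage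
  rw [Real.circleAverage_eq_integral_add (-Real.pi), intervalIntegral.integral_comp_add_right
    (fun θ => f (circleMap z ρ θ))] at h1
  have h2 : (2 * Real.pi) • f z = ∫ θ in Ioo (-Real.pi) Real.pi, f (circleMap z ρ θ) := by
    rw [← h1, smul_inv_smul₀ (by positivity), intervalIntegral.integral_of_le
      (by linarith [Real.pi_pos]), integral_Ioc_eq_integral_Ioo]
    congr 3 <;> ring
  calc ENNReal.ofReal (2 * Real.pi) * ‖f z‖ₑ = ‖(2 * Real.pi) • f z‖ₑ := by
        rw [enorm_smul, Real.enorm_of_nonneg (by positivity)]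
    _ ≤ _ := by rw [h2]; exact enorm_integral_le_lintegral_enorm _

open Filter Topology Set in
/-- Area mean value inequality for holomorphic functions on a disc; it is the circle inequality
integrated over the radius. -/
lemma enorm_center_le_area {f : ℂ → ℂ} {z : ℂ} {r : ℝ} (hf : DifferentiableOn ℂ f (ball z r))
    (hr : 0 < r) :
    ENNReal.ofReal (Real.pi * r ^ 2) * ‖f z‖ₑ ≤ ∫⁻ w in ball z r, ‖f w‖ₑ := by
  set G : ℂ → ENNReal := (ball z r).indicator fun w => ‖f w‖ₑ with hG
  have hGm : Measurable G := by
    have : Measurable ((ball z r).indicator f) := by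
      classical
      rw [← piecewise_eq_indicator]
      exact hf.continuousOn.measurable_piecewise continuousOn_const measurableSet_ball
    have h2 := this.enorm
    convert h2 using 1
    ext w
    by_cases hw : w ∈ ball z r <;> simp [hG, hw]
  have hpol : Measurable fun p : ℝ × ℝ =>
      ENNReal.ofReal p.1 • G (z + Complex.polarCoord.symm p) := by
    have h1 : Measurable fun p : ℝ × ℝ => z + Complex.polarCoord.symm p := by
      simp only [Complex.polarCoord_symm_apply]
      fun_prop
    exact (ENNReal.measurable_ofReal.comp measurable_fst).mul (hGm.comp h1)
  have hin : ∀ ρ ∈ Ioo 0 r, ENNReal.ofReal (2 * Real.pi * ρ) * ‖f z‖ₑ ≤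
      ∫⁻ θ in Ioo (-Real.pi) Real.pi,
        ENNReal.ofReal ρ • G (z + Complex.polarCoord.symm (ρ, θ)) := by
    intro ρ hρ
    have hE : ∀ θ : ℝ, G (z + Complex.polarCoord.symm (ρ, θ)) = ‖f (circleMap z ρ θ)‖ₑ := by
      intro θ
      have e : z + Complex.polarCoord.symm (ρ, θ) = circleMap z ρ θ := by
        simp [circleMap, Complex.exp_mul_I]
      rw [e]
      refine indicator_of_mem ?_ _
      simp [mem_ball, dist_eq_norm, circleMap, abs_of_pos hρ.1, hρ.2]
    simp only [hE, smul_eq_mul]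
    rw [lintegral_const_mul' _ _ ENNReal.ofReal_ne_top, mul_comm _ ρ,
      ENNReal.ofReal_mul hρ.1.le, mul_assoc]
    gcongr
    exact enorm_center_le_circle hf hρ.1 hρ.2
  have hrad : ENNReal.ofReal (Real.pi * r ^ 2) =
      ∫⁻ ρ in Ioo 0 r, ENNReal.ofReal (2 * Real.pi * ρ) := by
    rw [← ofReal_integral_eq_lintegral_ofReal]
    · rw [← integral_Ioc_eq_integral_Ioo, ← intervalIntegral.integral_of_le hr.le,
        intervalIntegral.integral_const_mul, integral_id]
      congr 1; ring
    · exact ((Continuous.integrableOn_Icc (by fun_prop)).mono_set Ioo_subset_Icc_self)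
    · filter_upwards [ae_restrict_mem measurableSet_Ioo] with ρ hρ
      have := hρ.1
      have := Real.pi_pos
      simp only [Pi.zero_apply]
      positivity
  calc ENNReal.ofReal (Real.pi * r ^ 2) * ‖f z‖ₑ
      = ∫⁻ ρ in Ioo 0 r, ENNReal.ofReal (2 * Real.pi * ρ) * ‖f z‖ₑ := by
        rw [lintegral_mul_const' _ _ enorm_ne_top, hrad]
    _ ≤ ∫⁻ ρ in Ioo 0 r, ∫⁻ θ in Ioo (-Real.pi) Real.pi,
          ENNReal.ofReal ρ • G (z + Complex.polarCoord.symm (ρ, θ)) :=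
        setLIntegral_mono' measurableSet_Ioo hin
    _ ≤ ∫⁻ ρ in Ioi 0, ∫⁻ θ in Ioo (-Real.pi) Real.pi,
          ENNReal.ofReal ρ • G (z + Complex.polarCoord.symm (ρ, θ)) :=
        lintegral_mono_set Ioo_subset_Ioi_self
    _ = ∫⁻ p in polarCoord.target, ENNReal.ofReal p.1 • G (z + Complex.polarCoord.symm p) := by
        rw [polarCoord_target, Measure.volume_eq_prod, ← Measure.prod_restrict,
          lintegral_prod _ hpol.aemeasurable]
    _ = ∫⁻ w, G (z + w) := Complex.lintegral_comp_polarCoord_symm fun w => G (z + w)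
    _ = ∫⁻ w, G w := lintegral_add_left_eq_self G z
    _ = ∫⁻ w in ball z r, ‖f w‖ₑ := lintegral_indicator measurableSet_ball _

open Filter Topology Set in
/-- A holomorphic function that is square-integrable on a punctured disc is `o((z - v)⁻¹)` at the
puncture. -/
lemma isLittleO_of_sq_integrable {h : ℂ → ℂ} {v : ℂ} {R : ℝ} (hR : 0 < R)
    (hh : DifferentiableOn ℂ h (ball v R \ {v}))
    (hint : ∫⁻ w in ball v R, ‖h w‖ₑ ^ 2 ≠ ⊤) :
    h =o[𝓝[≠] v] fun z => (z - v)⁻¹ := by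
  rw [Asymptotics.isLittleO_iff]
  intro ε hε
  obtain ⟨δ, hδ, H⟩ := exists_pos_setLIntegral_lt_of_measure_lt hint
    (ε := ENNReal.ofReal (Real.pi * ε ^ 2 / 4)) (by
      have := Real.pi_pos
      simp only [ne_eq, ENNReal.ofReal_eq_zero, not_le]; positivity)
  have hsmall : ∀ᶠ z in 𝓝 v, volume (ball z (‖z - v‖ / 2)) < δ := by
    simp only [Complex.volume_ball]
    have : Tendsto (fun z : ℂ => ENNReal.ofReal (‖z - v‖ / 2) ^ 2 * (NNReal.pi : ENNReal)) (𝓝 v)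
        (𝓝 (ENNReal.ofReal (‖v - v‖ / 2) ^ 2 * (NNReal.pi : ENNReal))) := by
      refine ENNReal.Tendsto.mul_const ?_ (Or.inr ENNReal.coe_ne_top)
      refine ENNReal.Tendsto.pow (ENNReal.tendsto_ofReal ?_)
      exact Continuous.tendsto (by fun_prop : Continuous fun z : ℂ => ‖z - v‖ / 2) v
    refine this.eventually_lt_const ?_
    simpa using hδ
  filter_upwards [nhdsWithin_le_nhds hsmall, self_mem_nhdsWithin,
    nhdsWithin_le_nhds (ball_mem_nhds v (half_pos hR))] with z hz hzv hzR
  have hpos : 0 < ‖z - v‖ := norm_pos_iff.2 (sub_ne_zero.2 hzv)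
  rw [mem_ball, dist_eq_norm] at hzR
  have hsub : ball z (‖z - v‖ / 2) ⊆ ball v R \ {v} := by
    intro w hw
    rw [mem_ball] at hw
    refine ⟨?_, ?_⟩
    · have := dist_triangle w z v
      rw [dist_eq_norm z v] at this
      rw [mem_ball]; linarith
    · rintro rfl
      rw [dist_comm, dist_eq_norm] at hw
      linarith
  have h1 := enorm_center_le_area (f := fun w => h w ^ 2) ((hh.mono hsub).pow 2) (half_pos hpos)
  have h2 := H (ball z (‖z - v‖ / 2)) ((Measure.restrict_apply_le _ _).trans_lt hz)
  rw [Measure.restrict_restrict measurableSet_ball,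
    inter_eq_left.2 (hsub.trans sdiff_subset)] at h2
  simp only [enorm_pow] at h1
  have h3 := h1.trans_lt h2
  rw [← ofReal_norm, ← ENNReal.ofReal_pow (norm_nonneg _),
    ← ENNReal.ofReal_mul (by positivity), ENNReal.ofReal_lt_ofReal_iff (by positivity)] at h3
  have h4 : (‖h z‖ * ‖z - v‖) ^ 2 < ε ^ 2 := by
    have := Real.pi_pos
    refine lt_of_mul_lt_mul_left (a := Real.pi / 4) ?_ (by positivity)
    linarith
  rw [norm_inv, ← div_eq_mul_inv, le_div_iff₀ hpos]
  exact (lt_of_pow_lt_pow_left₀ 2 hε.le h4).le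

open Filter Topology Set in
/-- A function whose weighted `L²` integral is finite has finite unweighted `L²` integral wherever
the weight is bounded below. -/
lemma lintegral_sq_ne_top_of_weight {h : ℂ → ℂ} {μ : ℂ → ℝ} {S : Set ℂ} {c : ℝ} (hc : 0 < c)
    (hμ : ∀ᵐ z ∂(volume.restrict S), c ≤ μ z)
    (hint : IntegrableOn (fun z => ‖h z‖ ^ 2 * μ z) S volume) :
    ∫⁻ w in S, ‖h w‖ₑ ^ 2 ≠ ⊤ := by
  have h1 : ∫⁻ w in S, ‖‖h w‖ ^ 2 * μ w‖ₑ < ⊤ := hint.hasFiniteIntegral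
  have h2 : ENNReal.ofReal c * ∫⁻ w in S, ‖h w‖ₑ ^ 2 ≤ ∫⁻ w in S, ‖‖h w‖ ^ 2 * μ w‖ₑ := by
    rw [← lintegral_const_mul' _ _ ENNReal.ofReal_ne_top]
    refine lintegral_mono_ae ?_
    filter_upwards [hμ] with w hw
    rw [enorm_mul, enorm_pow, enorm_norm, mul_comm, Real.enorm_of_nonneg (hc.le.trans hw)]
    gcongr
  intro htop
  rw [htop, ENNReal.mul_top (by simpa using hc)] at h2
  exact (h2.trans_lt h1).false

open Filter Topology Set in
lemma IsDiscreteIn.measure_zero {V D : Set ℂ} (hV : IsDiscreteIn V D) : volume V = 0 := by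
  refine measure_null_of_locally_null V fun x hx => ?_
  obtain ⟨ε, hε, H⟩ := hV.2 x (hV.1 hx)
  refine ⟨ball x ε ∩ V, inter_mem (nhdsWithin_le_nhds (ball_mem_nhds x hε)) self_mem_nhdsWithin, ?_⟩
  exact measure_mono_null (fun w hw => H w hw.2 hw.1) (measure_singleton x)

open Filter Topology Set in
lemma IsDiscreteIn.isOpen_sdiff {V D : Set ℂ} (hDo : IsOpen D) (hV : IsDiscreteIn V D) :
    IsOpen (D \ V) := by
  refine isOpen_iff_mem_nhds.2 fun z hz => ?_
  obtain ⟨ε, hε, H⟩ := hV.2 z hz.1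
  filter_upwards [hDo.mem_nhds hz.1, ball_mem_nhds z hε] with w hw hwε
  exact ⟨hw, fun hwV => hz.2 (H w hwV hwε ▸ hwV)⟩

/-- Weighted removable singularity theorem: if `h` is holomorphic on `D \ V` for a
discrete subset `V` of a domain `D` and is square-integrable with respect to the
weight `μ` (where `1/μ ∈ L^∞_loc(D)`), then `h` extends holomorphically across `V`,
and the extension is square-integrable on `D` with respect to `μ`. -/
theorem weighted_removable_singularity (D V : Set ℂ)
    (hDo : IsOpen D) (hDc : IsConnected D) (hV : IsDiscreteIn V D)
    (μ : ℂ → ℝ) (hμ_meas : AEMeasurable μ (volume.restrict D))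
    (hμ_pos : ∀ z ∈ D, 0 < μ z)
    (hμ_loc : ∀ K : Set ℂ, K ⊆ D → IsCompact K → ∃ c > 0, ∀ᵐ z ∂(volume.restrict K), c ≤ μ z)
    (h : ℂ → ℂ) (hh : DifferentiableOn ℂ h (D \ V))
    (hint : IntegrableOn (fun z => ‖h z‖ ^ 2 * μ z) (D \ V) volume) :
    ∃ H : ℂ → ℂ, DifferentiableOn ℂ H D ∧ (∀ z ∈ D \ V, H z = h z) ∧
      IntegrableOn (fun z => ‖H z‖ ^ 2 * μ z) D volume := by
  classical
  have hopen := hV.isOpen_sdiff hDo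
  set H : ℂ → ℂ := fun z => if z ∈ V then Filter.limUnder (nhdsWithin z {z}ᶜ) h else h z with hH
  have heq : ∀ z ∈ D \ V, H z = h z := fun z hz => if_neg hz.2
  refine ⟨H, fun z hz => DifferentiableAt.differentiableWithinAt ?_, heq, ?_⟩
  · by_cases hzV : z ∈ V
    · obtain ⟨ε, hε, hiso⟩ := hV.2 z hz
      obtain ⟨ρ, hρ, hρD⟩ := Metric.nhds_basis_closedBall.mem_iff.1 (hDo.mem_nhds hz)
      set R := min ε ρ
      have hR : 0 < R := lt_min hε hρ
      have hisoR : ∀ w ∈ ball z R, w ∈ V → w = z := fun w hw hwV =>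
        hiso w hwV (ball_subset_ball (min_le_left _ _) hw)
      have hBK : ball z R ⊆ closedBall z ρ :=
        (ball_subset_ball (min_le_right _ _)).trans ball_subset_closedBall
      have hsub : ball z R \ {z} ⊆ D \ V := fun w hw =>
        ⟨hρD (hBK hw.1), fun hwV => hw.2 (hisoR w hw.1 hwV)⟩
      obtain ⟨c, hc, hcμ⟩ := hμ_loc _ hρD (isCompact_closedBall z ρ)
      have hae : (ball z R \ {z} : Set ℂ) =ᵐ[volume] ball z R :=
        sdiff_null_ae_eq_self (measure_singleton z)
      have hfin := lintegral_sq_ne_top_of_weight hc (ae_restrict_of_ae_restrict_of_subset hBK hcμ)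
        ((hint.mono_set hsub).congr_set_ae hae.symm)
      have ho := isLittleO_of_sq_integrable hR (hh.mono hsub) hfin
      -- the constant `h z` is bounded, hence negligible against `(w - z)⁻¹`
      have hconst : (fun _ : ℂ => h z) =o[nhdsWithin z {z}ᶜ] fun w => (w - z)⁻¹ := by
        rw [Asymptotics.isLittleO_const_left]
        right
        have hsub0 : Filter.Tendsto (fun w : ℂ => w - z) (nhdsWithin z {z}ᶜ)
            (nhdsWithin 0 {0}ᶜ) := by
          refine tendsto_nhdsWithin_iff.2 ⟨?_, ?_⟩
          · have := (continuous_sub_right z).tendsto z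
            rw [sub_self] at this
            exact this.mono_left nhdsWithin_le_nhds
          · filter_upwards [self_mem_nhdsWithin] with w hw using sub_ne_zero.2 hw
        exact tendsto_norm_cobounded_atTop.comp
          (Filter.tendsto_inv₀_nhdsNE_zero.comp hsub0)
      have hupd := differentiableOn_update_limUnder_of_isLittleO (ball_mem_nhds z hR)
        (hh.mono hsub) (ho.sub hconst)
      refine (hupd.differentiableAt (ball_mem_nhds z hR)).congr_of_eventuallyEq ?_
      filter_upwards [ball_mem_nhds z hR] with w hw
      by_cases hwz : w = z
      · subst hwz; simp [hH, hzV]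
      · rw [Function.update_of_ne hwz]
        exact heq w (hsub ⟨hw, hwz⟩)
    · have hnhds := hopen.mem_nhds ⟨hz, hzV⟩
      refine (hh.differentiableAt hnhds).congr_of_eventuallyEq ?_
      filter_upwards [hnhds] with w hw using heq w hw
  · have hae : (D \ V : Set ℂ) =ᵐ[volume] D := sdiff_null_ae_eq_self hV.measure_zero
    refine IntegrableOn.congr_set_ae ?_ hae.symm
    exact hint.congr_fun (fun w hw => by simp only [heq w hw]) hopen.measurableSet
end
end
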